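/- arXiv:1009.4736 — 2 statements merged into one kernel-verified Lean document; each statement's English description precedes it below -/
import Mathlib

section
/- Let k < n/2 and suppose Π is a perfect n-half-period of an allowable sequence 𝚷, with initial arrangement (a_k, …, a_1, b_1, …, b_m, c_1, …, c_k), m = n − 2k. Then 𝚷 contains a perfect n-half-period Π′ with initial arrangement (a′_k, a′_{k−1}, …, a′_1, b′_1, …, b′_m, c′_1, …, c′_k) whose liberation sequence is either a′_1 a′_2 … a′_k c′_1 c′_2 … c′_k or c′_1 c′_2 … c′_k a′_1 a′_2 … a′_k. -/
/-- An `n`-half-period: a sequence `π_0, …, π_{n(n-1)/2}` of arrangements of `n`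
labeled elements in the positions `1, …, n` (recorded by `pos t x` = the position of
element `x` at time `t`), in which consecutive arrangements differ by a transposition
of the elements in two adjacent positions, and the last arrangement is the reverse of
the first. -/
structure HalfPeriod (n : ℕ) where
  pos : ℕ → Fin n → ℕ
  pos_mem : ∀ t, t ≤ n * (n - 1) / 2 → ∀ x, 1 ≤ pos t x ∧ pos t x ≤ n
  pos_inj : ∀ t, t ≤ n * (n - 1) / 2 → Function.Injective (pos t)
  step : ∀ t, t < n * (n - 1) / 2 → ∃ x y : Fin n,
    pos t y = pos t x + 1 ∧ pos (t + 1) x = pos t x + 1 ∧ pos (t + 1) y = pos t x ∧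
    ∀ z, z ≠ x → z ≠ y → pos (t + 1) z = pos t z
  reverse : ∀ x, pos (n * (n - 1) / 2) x = n + 1 - pos 0 x

namespace HalfPeriod

variable {n : ℕ}

/-- The number of transposition steps of an `n`-half-period. -/
def steps (n : ℕ) : ℕ := n * (n - 1) / 2

/-- Element `x` moves (changes position) at step `t`. -/
def Moved (hp : HalfPeriod n) (t : ℕ) (x : Fin n) : Prop :=
  hp.pos (t + 1) x ≠ hp.pos t x

/-- Step `t` is the transposition of the (distinct) elements `x` and `y`. -/
def SwapsAt (hp : HalfPeriod n) (t : ℕ) (x y : Fin n) : Prop :=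
  x ≠ y ∧ hp.Moved t x ∧ hp.Moved t y

/-- Step `t` is an `i`-transposition: it swaps the elements at positions `i` and `i+1`. -/
def GateAt (hp : HalfPeriod n) (t i : ℕ) : Prop :=
  ∃ x y : Fin n, hp.pos t x = i ∧ hp.pos t y = i + 1 ∧
    hp.pos (t + 1) x = i + 1 ∧ hp.pos (t + 1) y = i

/-- Step `t` is an `i`-critical transposition: an `i`- or an `(n-i)`-transposition. -/
def Critical (hp : HalfPeriod n) (t i : ℕ) : Prop :=
  hp.GateAt t i ∨ hp.GateAt t (n - i)

/-- Step `t` is a `(≤ k)`-critical transposition. -/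
def LeCritical (hp : HalfPeriod n) (t k : ℕ) : Prop :=
  ∃ i, 1 ≤ i ∧ i ≤ k ∧ hp.Critical t i

/-- `N_{≤ k}`: the number of `(≤ k)`-critical transpositions of the half-period. -/
noncomputable def NLe (hp : HalfPeriod n) (k : ℕ) : ℕ :=
  {t : ℕ | t < steps n ∧ hp.LeCritical t k}.ncard

end HalfPeriod
/-- An allowable sequence on `n` elements: a doubly infinite sequence of arrangements
of the `n` elements in positions `1, …, n`, consecutive arrangements differing by a
transposition of the elements in two adjacent positions, and the arrangement at time
`t + n(n-1)/2` being the reverse of the one at time `t`. -/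
structure AllowableSeq (n : ℕ) where
  pos : ℤ → Fin n → ℕ
  pos_mem : ∀ t x, 1 ≤ pos t x ∧ pos t x ≤ n
  pos_inj : ∀ t, Function.Injective (pos t)
  step : ∀ t : ℤ, ∃ x y : Fin n,
    pos t y = pos t x + 1 ∧ pos (t + 1) x = pos t x + 1 ∧ pos (t + 1) y = pos t x ∧
    ∀ z, z ≠ x → z ≠ y → pos (t + 1) z = pos t z
  reverse : ∀ (t : ℤ) (x : Fin n), pos (t + ((n * (n - 1) / 2 : ℕ) : ℤ)) x = n + 1 - pos t x

/-- The allowable sequence `S` contains the `n`-half-period `hp`: `hp` consists of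
`n(n-1)/2 + 1` consecutive arrangements of `S`. -/
def AllowableSeq.Contains {n : ℕ} (S : AllowableSeq n) (hp : HalfPeriod n) : Prop :=
  ∃ t₀ : ℤ, ∀ t : ℕ, t ≤ n * (n - 1) / 2 → ∀ x, hp.pos t x = S.pos (t₀ + t) x
/-- The initial arrangement of `hp` is `(a_k, a_{k-1}, …, a_1, b_1, …, b_m, c_1, …, c_k)`
with `m = n - 2k` (1-indexed subscripts: `a_j = a ⟨j-1⟩`, etc.). -/
def StandardStart {n : ℕ} (hp : HalfPeriod n) (k : ℕ) (a : Fin k → Fin n)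
    (b : Fin (n - 2 * k) → Fin n) (c : Fin k → Fin n) : Prop :=
  Function.Injective (Sum.elim a (Sum.elim b c)) ∧
  (∀ i, hp.pos 0 (a i) = k - (i : ℕ)) ∧
  (∀ i, hp.pos 0 (b i) = k + (i : ℕ) + 1) ∧
  (∀ i, hp.pos 0 (c i) = n - k + (i : ℕ) + 1)

/-- Element `z` is still confined at step `t`: it is an `a` that has stayed in the
positions `{1, …, k}` up to time `t`, or a `c` that has stayed in `{n-k+1, …, n}`. -/
def ConfinedAt {n : ℕ} (hp : HalfPeriod n) (k : ℕ) (a c : Fin k → Fin n)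
    (t : ℕ) (z : Fin n) : Prop :=
  ((∃ i, z = a i) ∧ ∀ s ≤ t, hp.pos s z ≤ k) ∨
  ((∃ i, z = c i) ∧ ∀ s ≤ t, n - k < hp.pos s z)

/-- The half-period has no confined transpositions. -/
def NoConfinedSteps {n : ℕ} (hp : HalfPeriod n) (k : ℕ) (a c : Fin k → Fin n) : Prop :=
  ∀ t, t < HalfPeriod.steps n → ∀ x y, hp.SwapsAt t x y →
    ¬ (ConfinedAt hp k a c t x ∧ ConfinedAt hp k a c t y)

/-- An `a`-element `z` becomes free at time `u`: `u` is the first time at which its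
position exceeds `k` (it has exited through the first `A`-gate). -/
def AFreedAt {n : ℕ} (hp : HalfPeriod n) (k : ℕ) (z : Fin n) (u : ℕ) : Prop :=
  k < hp.pos u z ∧ ∀ s < u, hp.pos s z ≤ k

/-- A `c`-element `z` becomes free at time `u`: `u` is the first time at which its
position is at most `n - k` (it has exited through the first `C`-gate). -/
def CFreedAt {n : ℕ} (hp : HalfPeriod n) (k : ℕ) (z : Fin n) (u : ℕ) : Prop :=
  hp.pos u z ≤ n - k ∧ ∀ s < u, n - k < hp.pos s z

/-- Step `t` occurs in the `A`-Zone: it swaps positions `(p, p+1)` with `p ≤ k`. -/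
def AZoneStep {n : ℕ} (hp : HalfPeriod n) (k t : ℕ) : Prop :=
  ∃ p, 1 ≤ p ∧ p ≤ k ∧ hp.GateAt t p

/-- Step `t` occurs in the `C`-Zone: it swaps positions `(p, p+1)` with `p ≥ k + m = n - k`. -/
def CZoneStep {n : ℕ} (hp : HalfPeriod n) (k t : ℕ) : Prop :=
  ∃ p, n - k ≤ p ∧ hp.GateAt t p

/-- At step `t`, element `z` moves from position `p` to position `q` for the first time. -/
def FirstMove {n : ℕ} (hp : HalfPeriod n) (t : ℕ) (z : Fin n) (p q : ℕ) : Prop :=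
  hp.pos t z = p ∧ hp.pos (t + 1) z = q ∧
    ∀ s < t, ¬ (hp.pos s z = p ∧ hp.pos (s + 1) z = q)

/-- Step `t` is a discovery transposition for the element `z`: for some `1 ≤ i ≤ j`,
`z` is `a_j` (resp. `c_j`) and `z` exits its compulsory exit-gate (the `i`-th `A`-gate,
resp. the `i`-th `C`-gate) or enters its compulsory entry-gate (the `i`-th `C`-gate,
resp. the `i`-th `A`-gate) for the first time. The `i`-th `A`-gate is the pair of
positions `(k-i+1, k-i+2)` and the `i`-th `C`-gate is `(n-k+i-1, n-k+i)`. -/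
def DiscoveryFor {n : ℕ} (hp : HalfPeriod n) (k : ℕ) (a c : Fin k → Fin n)
    (t : ℕ) (z : Fin n) : Prop :=
  ∃ i : ℕ, 1 ≤ i ∧
    ((∃ j : Fin k, z = a j ∧ i ≤ (j : ℕ) + 1 ∧
       (FirstMove hp t z (k - i + 1) (k - i + 2) ∨
        FirstMove hp t z (n - k + i - 1) (n - k + i))) ∨
     (∃ j : Fin k, z = c j ∧ i ≤ (j : ℕ) + 1 ∧
       (FirstMove hp t z (k - i + 2) (k - i + 1) ∨
        FirstMove hp t z (n - k + i) (n - k + i - 1))))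

/-- Step `t` is a double-discovery transposition. -/
def DoubleDiscoveryAt {n : ℕ} (hp : HalfPeriod n) (k : ℕ) (a c : Fin k → Fin n)
    (t : ℕ) : Prop :=
  ∃ x y, hp.SwapsAt t x y ∧ DiscoveryFor hp k a c t x ∧ DiscoveryFor hp k a c t y

/-- `|T(a_{i+1})|`: the number of `c`'s that become free after `a_{i+1}` does. -/
noncomputable def TCardA {n : ℕ} (hp : HalfPeriod n) (k : ℕ) (a c : Fin k → Fin n)
    (i : Fin k) : ℕ :=
  {l : Fin k | ∃ u v, AFreedAt hp k (a i) u ∧ CFreedAt hp k (c l) v ∧ u < v}.ncard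

/-- `|T(c_{i+1})|`: the number of `a`'s that become free after `c_{i+1}` does. -/
noncomputable def TCardC {n : ℕ} (hp : HalfPeriod n) (k : ℕ) (a c : Fin k → Fin n)
    (i : Fin k) : ℕ :=
  {l : Fin k | ∃ u v, CFreedAt hp k (c i) u ∧ AFreedAt hp k (a l) v ∧ u < v}.ncard

/-- The half-period is perfect: it has no confined transpositions, every transposition
in the `A`-Zone or `C`-Zone is a discovery transposition, each `a_{i+1}` is involved in
exactly `min (i+1) |T(a_{i+1})|` double-discovery transpositions in the `C`-Zone, and
each `c_{i+1}` is involved in exactly `min (i+1) |T(c_{i+1})|` double-discovery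
transpositions in the `A`-Zone. -/
def PerfectHalfPeriod {n : ℕ} (hp : HalfPeriod n) (k : ℕ) (a c : Fin k → Fin n) : Prop :=
  NoConfinedSteps hp k a c ∧
  (∀ t, t < HalfPeriod.steps n → (AZoneStep hp k t ∨ CZoneStep hp k t) →
    ∃ z, hp.Moved t z ∧ DiscoveryFor hp k a c t z) ∧
  (∀ i : Fin k,
    {t : ℕ | t < HalfPeriod.steps n ∧ CZoneStep hp k t ∧ hp.Moved t (a i) ∧
      DoubleDiscoveryAt hp k a c t}.ncard = min ((i : ℕ) + 1) (TCardA hp k a c i)) ∧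
  (∀ i : Fin k,
    {t : ℕ | t < HalfPeriod.steps n ∧ AZoneStep hp k t ∧ hp.Moved t (c i) ∧
      DoubleDiscoveryAt hp k a c t}.ncard = min ((i : ℕ) + 1) (TCardC hp k a c i))

/-!
Reading the sequence from right to left if necessary, we may assume that `c_k` becomes free before
`a_k`. If some `a` becomes free before `c_k`, let `a_r` be the last one. By perfection `a_r` has a
double discovery in the C-Zone, and once all `c`'s are free it cannot leave the C-Zone any more:
coming back would be no discovery. There it is overtaken by `a_{r+1}, …, a_k`, so it crosses the
C-gates to the right so often that `|T(a_r)| = k`. The liberation sequence is therefore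
`a_1 … a_r c_1 … c_k a_{r+1} … a_k`.

In this situation the A-Zone sees as many double discoveries as discoveries of `a_{r+1}, …, a_k`,
so each of the latter is also a discovery for some `c`. Hence from the time `τ` at which `a_r`
becomes free every transposition in the A-Zone is a discovery for some `c`. Restart the sequence at
`τ`: no element at the positions `1, …, k` gets out before all `c`'s are free, so the new
liberation sequence is `c_1 … c_k a'_1 … a'_k`. The number of transpositions in the two zones does
not change, and it is `3 (1 + ⋯ + k)`, the least possible for that liberation sequence, which
forces the new half-period to be perfect.
-/

/-! ### Counting times -/

/-- The number of times `t < N` at which the event `p` occurs. -/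
noncomputable def stepCount (N : ℕ) (p : ℕ → Prop) : ℕ :=
  {t | t < N ∧ p t}.ncard

section stepCount

variable {N : ℕ} {p q : ℕ → Prop}

theorem finite_lt_and (N : ℕ) (p : ℕ → Prop) : {t | t < N ∧ p t}.Finite :=
  (Set.finite_Iio N).subset fun _ ht => ht.1

theorem stepCount_mono (h : ∀ t < N, p t → q t) : stepCount N p ≤ stepCount N q :=
  Set.ncard_le_ncard (fun t ht => ⟨ht.1, h t ht.1 ht.2⟩) (finite_lt_and N q)

theorem stepCount_congr (h : ∀ t < N, (p t ↔ q t)) : stepCount N p = stepCount N q :=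
  le_antisymm (stepCount_mono fun t ht => (h t ht).1) (stepCount_mono fun t ht => (h t ht).2)

theorem stepCount_or_add_stepCount_and :
    stepCount N (fun t => p t ∨ q t) + stepCount N (fun t => p t ∧ q t) =
      stepCount N p + stepCount N q := by
  rw [stepCount, stepCount, stepCount, stepCount,
    ← Set.ncard_union_add_ncard_inter _ _ (finite_lt_and N p) (finite_lt_and N q)]
  congr 2 <;> ext t <;> simp only [Set.mem_union, Set.mem_inter_iff, Set.mem_ofPred_eq] <;> tauto

theorem stepCount_or (h : ∀ t < N, p t → ¬ q t) :
    stepCount N (fun t => p t ∨ q t) = stepCount N p + stepCount N q := by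
  have hand : stepCount N (fun t => p t ∧ q t) = 0 := by
    rw [stepCount, Set.ncard_eq_zero (finite_lt_and N _)]
    exact Set.eq_empty_of_forall_notMem fun t ht => h t ht.1 ht.2.1 ht.2.2
  rw [← stepCount_or_add_stepCount_and, hand, add_zero]

theorem stepCount_exists {ι : Type*} [Fintype ι] {Q : ι → ℕ → Prop}
    (h : ∀ i j t, Q i t → Q j t → i = j) :
    stepCount N (fun t => ∃ i, Q i t) = ∑ i, stepCount N (Q i) := by
  have hdisj : Pairwise (Function.onFun Disjoint fun i => {t | t < N ∧ Q i t}) := fun i j hij =>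
    Set.disjoint_left.2 fun t hi hj => hij (h i j t hi.2 hj.2)
  rw [← finsum_eq_sum_of_fintype]
  refine Eq.trans ?_ (Set.ncard_iUnion_of_finite (fun i => finite_lt_and N (Q i)) hdisj)
  rw [stepCount]
  congr 1
  ext t
  simp only [Set.mem_iUnion, Set.mem_ofPred_eq, exists_and_left]

theorem of_stepCount_le (h : ∀ t < N, p t → q t) (hle : stepCount N q ≤ stepCount N p)
    {t : ℕ} (ht : t < N) (hq : q t) : p t := by
  have hsub : {t | t < N ∧ p t} ⊆ {t | t < N ∧ q t} := fun t ht => ⟨ht.1, h t ht.1 ht.2⟩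
  exact ((Set.eq_of_subset_of_ncard_le hsub hle (finite_lt_and N q)).ge ⟨ht, hq⟩).2

theorem exists_of_stepCount_pos (h : 0 < stepCount N p) : ∃ t < N, p t :=
  Set.nonempty_of_ncard_ne_zero h.ne'

theorem ncard_le_stepCount {ι : Type*} {s : Set ι} (f : ι → ℕ) (hf : ∀ i ∈ s, f i < N ∧ p (f i))
    (hinj : Set.InjOn f s) : s.ncard ≤ stepCount N p :=
  Set.ncard_le_ncard_of_injOn f hf hinj (finite_lt_and N p)

theorem stepCount_le_ncard {ι : Type*} [Finite ι] {s : Set ι} (f : ℕ → ι)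
    (hf : ∀ t < N, p t → f t ∈ s) (hinj : Set.InjOn f {t | t < N ∧ p t}) :
    stepCount N p ≤ s.ncard :=
  Set.ncard_le_ncard_of_injOn f (fun t ht => hf t ht.1 ht.2) hinj s.toFinite

theorem stepCount_eq_card_filter [DecidablePred p] :
    stepCount N p = (Finset.filter p (Finset.range N)).card := by
  rw [stepCount, ← Set.ncard_coe_finset]
  congr 1
  ext t
  simp only [Finset.coe_filter, Finset.mem_range, Set.mem_ofPred_eq]

theorem stepCount_succ [DecidablePred p] :
    stepCount (N + 1) p = stepCount N p + if p N then 1 else 0 := by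
  rw [stepCount_eq_card_filter, stepCount_eq_card_filter, ← Nat.count_eq_card_filter_range,
    ← Nat.count_eq_card_filter_range, Nat.count_succ]

theorem stepCount_comp_add (h : Function.Periodic p N) (τ : ℕ) :
    stepCount N (fun t => p (τ + t)) = stepCount N p := by
  classical
  have hcard := Nat.filter_Ico_card_eq_of_periodic τ N p h
  rw [Nat.count_eq_card_filter_range, ← stepCount_eq_card_filter] at hcard
  have hmap : Finset.Ico τ (τ + N) = (Finset.range N).map (addLeftEmbedding τ) := by
    rw [Finset.range_eq_Ico, Finset.map_add_left_Ico, add_zero]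
  rw [← hcard, stepCount_eq_card_filter, hmap, Finset.filter_map, Finset.card_map]
  rfl

end stepCount

theorem exists_first_failure {p : ℕ → Prop} {s e : ℕ} (hse : s ≤ e) (hs : p s) (he : ¬ p e) :
    ∃ u, s ≤ u ∧ u < e ∧ (∀ w, s ≤ w → w ≤ u → p w) ∧ ¬ p (u + 1) := by
  classical
  have hex : ∃ w, s ≤ w ∧ ¬ p w := ⟨e, hse, he⟩
  obtain ⟨hsw, hpw⟩ := Nat.find_spec hex
  have hne : s ≠ Nat.find hex := fun h => hpw (h ▸ hs)
  obtain ⟨u, hu⟩ : ∃ u, Nat.find hex = u + 1 := ⟨Nat.find hex - 1, by omega⟩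
  have hwe : Nat.find hex ≤ e := Nat.find_min' hex ⟨hse, he⟩
  refine ⟨u, by omega, by omega, fun w hw hwu => ?_, hu ▸ hpw⟩
  exact of_not_not fun h => Nat.find_min hex (by omega : w < Nat.find hex) ⟨hw, h⟩

theorem card_filter_lt_of_injective {ι α : Type*} [Fintype ι] [LinearOrder α] {f : ι → α}
    (hf : Function.Injective f) :
    (Finset.univ.filter fun p : ι × ι => f p.1 < f p.2).card = (Fintype.card ι).choose 2 := by
  classical
  have hswap : (Finset.univ.filter fun p : ι × ι => f p.1 < f p.2).card =
      (Finset.univ.filter fun p : ι × ι => f p.2 < f p.1).card :=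
    Finset.card_equiv (Equiv.prodComm ι ι) fun p => by
      simp only [Finset.mem_filter, Finset.mem_univ, true_and, Equiv.prodComm_apply, Prod.fst_swap,
        Prod.snd_swap]
  have hunion : (Finset.univ.filter fun p : ι × ι => f p.1 < f p.2) ∪
      (Finset.univ.filter fun p : ι × ι => f p.2 < f p.1) = Finset.univ.offDiag := by
    ext p
    simp only [Finset.mem_union, Finset.mem_filter, Finset.mem_univ, true_and, Finset.mem_offDiag,
      lt_or_lt_iff_ne, hf.ne_iff]
  have hdisj : Disjoint (Finset.univ.filter fun p : ι × ι => f p.1 < f p.2)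
      (Finset.univ.filter fun p : ι × ι => f p.2 < f p.1) :=
    Finset.disjoint_filter.2 fun p _ => lt_asymm
  have hcard := congrArg Finset.card hunion
  rw [Finset.card_union_of_disjoint hdisj, ← hswap, Finset.offDiag_card, Finset.card_univ] at hcard
  rw [Nat.choose_two_right, Nat.mul_sub_one]
  omega

theorem sum_range_min_succ (m s : ℕ) :
    ∑ l ∈ Finset.range (m + s), min (l + 1) s = ∑ i ∈ Finset.range s, (m + i + 1) := by
  induction m with
  | zero =>
    rw [zero_add]
    refine Finset.sum_congr rfl fun i hi => ?_
    rw [Finset.mem_range] at hi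
    omega
  | succ m ih =>
    have hshift : ∑ i ∈ Finset.range s, (m + 1 + i + 1) =
        ∑ i ∈ Finset.range s, (m + i + 1) + s := by
      rw [Finset.sum_congr rfl fun i _ => show m + 1 + i + 1 = m + i + 1 + 1 by omega,
        Finset.sum_add_distrib, Finset.sum_const, Finset.card_range, smul_eq_mul, mul_one]
    rw [hshift, ← ih, add_right_comm, Finset.sum_range_succ]
    omega

theorem sum_min_succ_eq_sum_Ioi {k : ℕ} (r : Fin k) :
    ∑ l : Fin k, min ((l : ℕ) + 1) (k - 1 - r) = ∑ i ∈ Finset.Ioi r, ((i : ℕ) + 1) := by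
  have hIoi : ∑ i ∈ Finset.Ioi r, ((i : ℕ) + 1) = ∑ i ∈ Finset.Ico ((r : ℕ) + 1) k, (i + 1) := by
    rw [Finset.Ico_add_one_left_eq_Ioo, ← Fin.map_valEmbedding_Ioi, Finset.sum_map]
    rfl
  rw [hIoi, Finset.sum_Ico_eq_sum_range,
    Fin.sum_univ_eq_sum_range (fun l => min (l + 1) (k - 1 - r)),
    ← Nat.sub_add_eq, add_comm 1, ← sum_range_min_succ, Nat.add_sub_cancel' r.2]

/-! ### Arrangements and transpositions -/

namespace AllowableSeq

open HalfPeriod (steps)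

variable {n : ℕ} (S : AllowableSeq n)

/-- The position of `x` in the `t`-th arrangement. Once the origin of time is
suitably chosen, only natural numbers occur as times. -/
def posAt (t : ℕ) (x : Fin n) : ℕ :=
  S.pos t x

theorem exists_swap (t : ℕ) : ∃ x y : Fin n,
    S.posAt t y = S.posAt t x + 1 ∧ S.posAt (t + 1) x = S.posAt t x + 1 ∧
      S.posAt (t + 1) y = S.posAt t x ∧
      ∀ z, z ≠ x → z ≠ y → S.posAt (t + 1) z = S.posAt t z := by
  simpa only [posAt, Nat.cast_add, Nat.cast_one] using S.step t

/-- The element that the `t`-th transposition moves to the right. -/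
noncomputable def rightMover (t : ℕ) : Fin n :=
  (S.exists_swap t).choose

/-- The element that the `t`-th transposition moves to the left. -/
noncomputable def leftMover (t : ℕ) : Fin n :=
  (S.exists_swap t).choose_spec.choose

/-- The smaller of the two adjacent positions exchanged by the `t`-th transposition. -/
noncomputable def gate (t : ℕ) : ℕ :=
  S.posAt t (S.rightMover t)

theorem posAt_leftMover (t : ℕ) : S.posAt t (S.leftMover t) = S.gate t + 1 :=
  (S.exists_swap t).choose_spec.choose_spec.1

theorem posAt_succ_rightMover (t : ℕ) : S.posAt (t + 1) (S.rightMover t) = S.gate t + 1 :=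
  (S.exists_swap t).choose_spec.choose_spec.2.1

theorem posAt_succ_leftMover (t : ℕ) : S.posAt (t + 1) (S.leftMover t) = S.gate t :=
  (S.exists_swap t).choose_spec.choose_spec.2.2.1

theorem posAt_succ_of_ne {t : ℕ} {z : Fin n} (hr : z ≠ S.rightMover t) (hl : z ≠ S.leftMover t) :
    S.posAt (t + 1) z = S.posAt t z :=
  (S.exists_swap t).choose_spec.choose_spec.2.2.2 z hr hl

theorem posAt_injective (t : ℕ) : Function.Injective (S.posAt t) :=
  S.pos_inj t

theorem one_le_posAt (t : ℕ) (x : Fin n) : 1 ≤ S.posAt t x :=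
  (S.pos_mem t x).1

theorem posAt_le (t : ℕ) (x : Fin n) : S.posAt t x ≤ n :=
  (S.pos_mem t x).2

theorem posAt_add_steps (t : ℕ) (x : Fin n) : S.posAt (t + steps n) x = n + 1 - S.posAt t x := by
  simpa only [posAt, steps, Nat.cast_add] using S.reverse t x

theorem posAt_steps (x : Fin n) : S.posAt (steps n) x = n + 1 - S.posAt 0 x := by
  simpa only [zero_add] using S.posAt_add_steps 0 x

theorem rightMover_ne_leftMover (t : ℕ) : S.rightMover t ≠ S.leftMover t := fun h => by
  have hl := S.posAt_leftMover t
  rw [← h, ← gate] at hl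
  omega

theorem one_le_gate (t : ℕ) : 1 ≤ S.gate t :=
  S.one_le_posAt t _

theorem gate_lt (t : ℕ) : S.gate t < n := by
  have hle := S.posAt_le t (S.leftMover t)
  rw [posAt_leftMover] at hle
  omega

theorem exists_posAt_eq {t p : ℕ} (h1 : 1 ≤ p) (hn : p ≤ n) : ∃ x, S.posAt t x = p := by
  have himage : Finset.univ.image (S.posAt t) = Finset.Icc 1 n := by
    refine Finset.eq_of_subset_of_card_le (fun q hq => ?_) ?_
    · obtain ⟨x, -, rfl⟩ := Finset.mem_image.1 hq
      exact Finset.mem_Icc.2 ⟨S.one_le_posAt t x, S.posAt_le t x⟩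
    · rw [Finset.card_image_of_injective _ (S.posAt_injective t), Nat.card_Icc, Finset.card_univ,
        Fintype.card_fin, Nat.add_sub_cancel]
  obtain ⟨x, -, hx⟩ := Finset.mem_image.1 (himage.ge (Finset.mem_Icc.2 ⟨h1, hn⟩))
  exact ⟨x, hx⟩

variable {S}

theorem posAt_succ_cases (S : AllowableSeq n) (t : ℕ) (z : Fin n) :
    (S.rightMover t = z ∧ S.posAt t z = S.gate t ∧ S.posAt (t + 1) z = S.gate t + 1) ∨
      (S.leftMover t = z ∧ S.posAt t z = S.gate t + 1 ∧ S.posAt (t + 1) z = S.gate t) ∨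
      (S.rightMover t ≠ z ∧ S.leftMover t ≠ z ∧ S.posAt (t + 1) z = S.posAt t z) := by
  rcases eq_or_ne (S.rightMover t) z with rfl | hr
  · exact Or.inl ⟨rfl, rfl, S.posAt_succ_rightMover t⟩
  rcases eq_or_ne (S.leftMover t) z with rfl | hl
  · exact Or.inr (Or.inl ⟨rfl, S.posAt_leftMover t, S.posAt_succ_leftMover t⟩)
  · exact Or.inr (Or.inr ⟨hr, hl, S.posAt_succ_of_ne hr.symm hl.symm⟩)

theorem rightMover_eq_of_lt {t : ℕ} {z : Fin n} (h : S.posAt t z < S.posAt (t + 1) z) :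
    S.rightMover t = z ∧ S.gate t = S.posAt t z := by
  rcases S.posAt_succ_cases t z with ⟨hz, hpos, -⟩ | ⟨-, _, _⟩ | ⟨-, -, _⟩
  · exact ⟨hz, hpos.symm⟩
  all_goals omega

theorem leftMover_eq_of_lt {t : ℕ} {z : Fin n} (h : S.posAt (t + 1) z < S.posAt t z) :
    S.leftMover t = z ∧ S.gate t = S.posAt (t + 1) z := by
  rcases S.posAt_succ_cases t z with ⟨-, _, _⟩ | ⟨hz, -, hpos⟩ | ⟨-, -, _⟩
  · omega
  · exact ⟨hz, hpos.symm⟩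
  · omega

theorem exists_rightMover_crossing {s e q : ℕ} {x : Fin n} (hse : s ≤ e) (hs : S.posAt s x ≤ q)
    (he : q < S.posAt e x) :
    ∃ u, s ≤ u ∧ u < e ∧ S.rightMover u = x ∧ S.gate u = q ∧
      ∀ w, s ≤ w → w ≤ u → S.posAt w x ≤ q := by
  obtain ⟨u, hsu, hue, hbefore, hafter⟩ :=
    exists_first_failure (p := fun t => S.posAt t x ≤ q) hse hs he.not_ge
  have hu := hbefore u hsu le_rfl
  obtain ⟨hmover, hgate⟩ := rightMover_eq_of_lt (S := S) (t := u) (z := x) (by omega)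
  have hnext := S.posAt_succ_rightMover u
  rw [hmover] at hnext
  exact ⟨u, hsu, hue, hmover, by omega, hbefore⟩

theorem exists_leftMover_crossing {s e q : ℕ} {x : Fin n} (hse : s ≤ e) (hs : q < S.posAt s x)
    (he : S.posAt e x ≤ q) :
    ∃ u, s ≤ u ∧ u < e ∧ S.leftMover u = x ∧ S.gate u = q ∧
      ∀ w, s ≤ w → w ≤ u → q < S.posAt w x := by
  obtain ⟨u, hsu, hue, hbefore, hafter⟩ :=
    exists_first_failure (p := fun t => q < S.posAt t x) hse hs he.not_gt
  have hu := hbefore u hsu le_rfl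
  obtain ⟨hmover, hgate⟩ := leftMover_eq_of_lt (S := S) (t := u) (z := x) (by omega)
  have hprev := S.posAt_leftMover u
  rw [hmover] at hprev
  exact ⟨u, hsu, hue, hmover, by omega, hbefore⟩

theorem movers_eq_of_order_change {t : ℕ} {x y : Fin n} (hlt : S.posAt t x < S.posAt t y)
    (hle : S.posAt (t + 1) y ≤ S.posAt (t + 1) x) : S.rightMover t = x ∧ S.leftMover t = y := by
  have hxy : x ≠ y := by rintro rfl; exact hlt.false
  replace hle := hle.lt_of_ne ((S.posAt_injective _).ne hxy.symm)
  have hrx : S.posAt t x = S.gate t → S.rightMover t = x := fun h => (S.posAt_injective t h).symm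
  have hly : S.posAt t y = S.gate t + 1 → S.leftMover t = y := fun h =>
    S.posAt_injective t ((S.posAt_leftMover t).trans h.symm)
  rcases S.posAt_succ_cases t x with ⟨_, _, _⟩ | ⟨_, _, _⟩ | ⟨_, _, _⟩ <;>
    rcases S.posAt_succ_cases t y with ⟨_, _, _⟩ | ⟨_, _, _⟩ | ⟨_, _, _⟩ <;>
    first
      | exact ⟨‹_›, ‹_›⟩
      | exact absurd (hly (by omega)) ‹_›
      | exact absurd (hrx (by omega)) ‹_›
      | omega

theorem exists_swap_of_order_change {s e : ℕ} {x y : Fin n} (hse : s ≤ e)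
    (hs : S.posAt s x < S.posAt s y) (he : S.posAt e y < S.posAt e x) :
    ∃ u, s ≤ u ∧ u < e ∧ S.rightMover u = x ∧ S.leftMover u = y := by
  obtain ⟨u, hsu, hue, hbefore, hafter⟩ :=
    exists_first_failure (p := fun t => S.posAt t x < S.posAt t y) hse hs he.not_gt
  exact ⟨u, hsu, hue, movers_eq_of_order_change (hbefore u hsu le_rfl) (not_lt.1 hafter)⟩

-- Each of the `steps n` ordered pairs is swapped at least once, hence exactly once.
theorem movers_injOn (S : AllowableSeq n) :
    Set.InjOn (fun t => (S.rightMover t, S.leftMover t)) (Set.Iio (steps n)) := by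
  have hpairs : (Finset.univ.filter fun p : Fin n × Fin n => S.posAt 0 p.1 < S.posAt 0 p.2) ⊆
      (Finset.range (steps n)).image fun t => (S.rightMover t, S.leftMover t) := by
    intro p hp
    have hlt := (Finset.mem_filter.1 hp).2
    have hrev : S.posAt (steps n) p.2 < S.posAt (steps n) p.1 := by
      have := S.posAt_le 0 p.2
      rw [posAt_steps, posAt_steps]
      omega
    obtain ⟨u, -, hu, hr, hl⟩ := exists_swap_of_order_change (Nat.zero_le _) hlt hrev
    exact Finset.mem_image.2 ⟨u, Finset.mem_range.2 hu, Prod.ext hr hl⟩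
  have hcard := Finset.card_le_card hpairs
  rw [card_filter_lt_of_injective (S.posAt_injective 0), Fintype.card_fin,
    Nat.choose_two_right] at hcard
  rw [← Finset.coe_range, ← Finset.card_image_iff]
  exact le_antisymm Finset.card_image_le ((Finset.card_range _).trans_le hcard)

/-! ### Perfect half-periods -/

/-- The gates that are compulsory, in the zone where they lie, for the `a`- or `c`-element of
zero-based index `j`; a gate is named by the smaller of its two positions. -/
def CompulsoryGate (n k j q : ℕ) : Prop :=
  (k - j ≤ q ∧ q ≤ k) ∨ (n - k ≤ q ∧ q ≤ n - k + j)

/-- The `t`-th transposition is a discovery transposition for `a j`. That `a j` moves right through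
the gate for the first time is encoded as its never having been beyond the gate. -/
def ADiscovery (S : AllowableSeq n) (k : ℕ) (a : Fin k → Fin n) (j : Fin k) (t : ℕ) : Prop :=
  S.rightMover t = a j ∧ CompulsoryGate n k j (S.gate t) ∧ ∀ s ≤ t, S.posAt s (a j) ≤ S.gate t

/-- The `t`-th transposition is a discovery transposition for `c j`, encoded as for the `a`'s. -/
def CDiscovery (S : AllowableSeq n) (k : ℕ) (c : Fin k → Fin n) (j : Fin k) (t : ℕ) : Prop :=
  S.leftMover t = c j ∧ CompulsoryGate n k j (S.gate t) ∧ ∀ s ≤ t, S.gate t < S.posAt s (c j)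

/-- The initial arrangement is `(a_k, …, a_1, b_1, …, b_m, c_1, …, c_k)` with `m = n - 2k > 0`;
the `b`'s are the remaining elements and are not named. -/
structure StartsWith (S : AllowableSeq n) (k : ℕ) (a c : Fin k → Fin n) : Prop where
  two_mul_lt : 2 * k < n
  posAt_zero_a : ∀ i, S.posAt 0 (a i) = k - (i : ℕ)
  posAt_zero_c : ∀ i, S.posAt 0 (c i) = n - k + (i : ℕ) + 1

/-- An element starting in the positions `1, …, k` has not left them up to time `t`. -/
def AConfined (S : AllowableSeq n) (k t : ℕ) (x : Fin n) : Prop :=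
  ∀ s ≤ t, S.posAt s x ≤ k

/-- An element starting in the positions `n - k + 1, …, n` has not left them up to time `t`. -/
def CConfined (S : AllowableSeq n) (k t : ℕ) (x : Fin n) : Prop :=
  ∀ s ≤ t, n - k < S.posAt s x

/-- The time at which an `a`-element becomes free. -/
noncomputable def aFreeTime (S : AllowableSeq n) (k : ℕ) (x : Fin n) : ℕ :=
  sInf {t | k < S.posAt t x}

/-- The time at which a `c`-element becomes free. -/
noncomputable def cFreeTime (S : AllowableSeq n) (k : ℕ) (x : Fin n) : ℕ :=
  sInf {t | S.posAt t x ≤ n - k}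

/-- `|T(a_i)|`: the number of `c`'s that become free after `a i`. -/
noncomputable def numCAfter (S : AllowableSeq n) (k : ℕ) (a c : Fin k → Fin n) (i : Fin k) : ℕ :=
  {l | S.aFreeTime k (a i) < S.cFreeTime k (c l)}.ncard

/-- `|T(c_i)|`: the number of `a`'s that become free after `c i`. -/
noncomputable def numAAfter (S : AllowableSeq n) (k : ℕ) (a c : Fin k → Fin n) (i : Fin k) : ℕ :=
  {l | S.cFreeTime k (c i) < S.aFreeTime k (a l)}.ncard

/-- The number of double-discovery transpositions of `a i` in the C-Zone. -/
noncomputable def numDoubleC (S : AllowableSeq n) (k : ℕ) (a c : Fin k → Fin n) (i : Fin k) : ℕ :=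
  stepCount (steps n) fun t =>
    n - k ≤ S.gate t ∧ S.ADiscovery k a i t ∧ ∃ l, S.CDiscovery k c l t

/-- The number of double-discovery transpositions of `c i` in the A-Zone. -/
noncomputable def numDoubleA (S : AllowableSeq n) (k : ℕ) (a c : Fin k → Fin n) (i : Fin k) : ℕ :=
  stepCount (steps n) fun t =>
    S.gate t ≤ k ∧ S.CDiscovery k c i t ∧ ∃ l, S.ADiscovery k a l t

/-- The transposition takes place in the A-Zone or in the C-Zone. -/
def ZoneStep (S : AllowableSeq n) (k t : ℕ) : Prop :=
  S.gate t ≤ k ∨ n - k ≤ S.gate t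

/-- The half-period starting at time `0` has no confined transpositions. A confined `a` and a
confined `c` are never adjacent, so only pairs of the same kind are excluded. -/
structure NoConfined (S : AllowableSeq n) (k : ℕ) (a c : Fin k → Fin n) : Prop where
  not_a : ∀ t < steps n, ∀ i j, S.rightMover t = a i → S.leftMover t = a j →
    S.AConfined k t (a i) → ¬ S.AConfined k t (a j)
  not_c : ∀ t < steps n, ∀ i j, S.rightMover t = c i → S.leftMover t = c j →
    S.CConfined k t (c i) → ¬ S.CConfined k t (c j)

/-- The half-period starting at time `0` is perfect. -/
structure IsPerfect (S : AllowableSeq n) (k : ℕ) (a c : Fin k → Fin n) : Prop where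
  noConfined : S.NoConfined k a c
  discovery : ∀ t < steps n, S.ZoneStep k t →
    (∃ j, S.ADiscovery k a j t) ∨ ∃ j, S.CDiscovery k c j t
  numDoubleC_eq : ∀ i, S.numDoubleC k a c i = min ((i : ℕ) + 1) (S.numCAfter k a c i)
  numDoubleA_eq : ∀ i, S.numDoubleA k a c i = min ((i : ℕ) + 1) (S.numAAfter k a c i)

/-! ### Reflection and change of the origin of time -/

section mirror

/-- The allowable sequence read from right to left, which exchanges the roles of the `a`'s and the
`c`'s. -/
def mirror (S : AllowableSeq n) : AllowableSeq n where
  pos t x := n + 1 - S.pos t x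
  pos_mem t x := by have := S.pos_mem t x; omega
  pos_inj t x y h := by
    have hx := S.pos_mem t x
    have hy := S.pos_mem t y
    exact S.pos_inj t (by grind)
  step t := by
    obtain ⟨x, y, hxy, hx, hy, hz⟩ := S.step t
    have := S.pos_mem t x
    have := S.pos_mem t y
    exact ⟨y, x, by omega, by omega, by omega, fun z hzy hzx => by rw [hz z hzx hzy]⟩
  reverse t x := by rw [S.reverse t x]

theorem posAt_mirror (t : ℕ) (x : Fin n) : S.mirror.posAt t x = n + 1 - S.posAt t x :=
  rfl

theorem mirror_mirror (S : AllowableSeq n) : S.mirror.mirror = S := by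
  have hpos : S.mirror.mirror.pos = S.pos := by
    funext t x
    exact Nat.sub_sub_self ((S.pos_mem t x).2.trans n.le_succ)
  cases S
  simp only [mirror] at hpos ⊢
  congr

theorem movers_mirror (t : ℕ) :
    (S.mirror.rightMover t = S.leftMover t ∧ S.mirror.leftMover t = S.rightMover t) ∧
      S.mirror.gate t = n - S.gate t := by
  have hlt := S.gate_lt t
  have hl := S.posAt_leftMover t
  have hr : S.posAt t (S.rightMover t) = S.gate t := rfl
  have hl' := S.posAt_succ_leftMover t
  have hr' := S.posAt_succ_rightMover t
  obtain ⟨hright, hgate⟩ := rightMover_eq_of_lt (S := S.mirror) (t := t) (z := S.leftMover t)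
    (by rw [posAt_mirror, posAt_mirror]; omega)
  obtain ⟨hleft, -⟩ := leftMover_eq_of_lt (S := S.mirror) (t := t) (z := S.rightMover t)
    (by rw [posAt_mirror, posAt_mirror]; omega)
  rw [posAt_mirror] at hgate
  exact ⟨⟨hright, hleft⟩, by omega⟩

theorem rightMover_mirror (t : ℕ) : S.mirror.rightMover t = S.leftMover t :=
  (movers_mirror t).1.1

theorem leftMover_mirror (t : ℕ) : S.mirror.leftMover t = S.rightMover t :=
  (movers_mirror t).1.2

theorem gate_mirror (t : ℕ) : S.mirror.gate t = n - S.gate t :=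
  (movers_mirror t).2

theorem compulsoryGate_sub_iff {k j q : ℕ} (hk : k ≤ n) (hj : j ≤ k) (hq : q < n) :
    CompulsoryGate n k j (n - q) ↔ CompulsoryGate n k j q := by
  unfold CompulsoryGate
  omega

variable {k : ℕ} {a c : Fin k → Fin n}

theorem StartsWith.mirror (h : S.StartsWith k a c) : S.mirror.StartsWith k c a := by
  have := h.two_mul_lt
  refine ⟨h.two_mul_lt, fun i => ?_, fun i => ?_⟩
  · rw [posAt_mirror, h.posAt_zero_c]
    omega
  · rw [posAt_mirror, h.posAt_zero_a]
    omega

theorem zoneStep_mirror {t : ℕ} (hk : k ≤ n) : S.mirror.ZoneStep k t ↔ S.ZoneStep k t := by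
  have := S.gate_lt t
  rw [ZoneStep, ZoneStep, gate_mirror]
  omega

theorem aDiscovery_mirror (hk : k ≤ n) {j : Fin k} {t : ℕ} :
    S.mirror.ADiscovery k c j t ↔ S.CDiscovery k c j t := by
  have hle (s : ℕ) : S.mirror.posAt s (c j) ≤ n - S.gate t ↔ S.gate t < S.posAt s (c j) := by
    have := S.posAt_le s (c j)
    rw [posAt_mirror]
    omega
  simp only [ADiscovery, CDiscovery, rightMover_mirror, gate_mirror, hle,
    compulsoryGate_sub_iff hk j.2.le (S.gate_lt t)]

theorem cDiscovery_mirror (hk : k ≤ n) {j : Fin k} {t : ℕ} :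
    S.mirror.CDiscovery k a j t ↔ S.ADiscovery k a j t := by
  rw [← aDiscovery_mirror hk, mirror_mirror]

theorem lt_posAt_mirror {t : ℕ} {x : Fin n} : k < S.mirror.posAt t x ↔ S.posAt t x ≤ n - k := by
  have := S.one_le_posAt t x
  rw [posAt_mirror]
  omega

theorem aConfined_mirror {t : ℕ} {x : Fin n} : S.mirror.AConfined k t x ↔ S.CConfined k t x :=
  forall₂_congr fun _ _ => by rw [← not_lt, lt_posAt_mirror, not_le]

theorem cConfined_mirror {t : ℕ} {x : Fin n} : S.mirror.CConfined k t x ↔ S.AConfined k t x := by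
  rw [← aConfined_mirror, mirror_mirror]

theorem aFreeTime_mirror (x : Fin n) : S.mirror.aFreeTime k x = S.cFreeTime k x :=
  congrArg sInf (Set.ext fun _ => lt_posAt_mirror)

theorem cFreeTime_mirror (x : Fin n) : S.mirror.cFreeTime k x = S.aFreeTime k x := by
  rw [← aFreeTime_mirror, mirror_mirror]

theorem numCAfter_mirror (i : Fin k) : S.mirror.numCAfter k c a i = S.numAAfter k a c i := by
  simp only [numCAfter, numAAfter, aFreeTime_mirror, cFreeTime_mirror]

theorem numAAfter_mirror (i : Fin k) : S.mirror.numAAfter k c a i = S.numCAfter k a c i := by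
  rw [← numCAfter_mirror, mirror_mirror]

theorem numDoubleC_mirror (hk : k ≤ n) (i : Fin k) :
    S.mirror.numDoubleC k c a i = S.numDoubleA k a c i := by
  refine stepCount_congr fun t _ => ?_
  have hzone : n - k ≤ S.mirror.gate t ↔ S.gate t ≤ k := by
    have := S.gate_lt t
    rw [gate_mirror]
    omega
  simp only [hzone, aDiscovery_mirror hk, cDiscovery_mirror hk]

theorem numDoubleA_mirror (hk : k ≤ n) (i : Fin k) :
    S.mirror.numDoubleA k c a i = S.numDoubleC k a c i := by
  rw [← numDoubleC_mirror hk, mirror_mirror]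

theorem NoConfined.mirror (h : S.NoConfined k a c) : S.mirror.NoConfined k c a where
  not_a t ht i j hi hj hci hcj :=
    h.not_c t ht j i (leftMover_mirror t ▸ hj) (rightMover_mirror t ▸ hi) (aConfined_mirror.1 hcj)
      (aConfined_mirror.1 hci)
  not_c t ht i j hi hj hai haj :=
    h.not_a t ht j i (leftMover_mirror t ▸ hj) (rightMover_mirror t ▸ hi) (cConfined_mirror.1 haj)
      (cConfined_mirror.1 hai)

theorem IsPerfect.mirror (hk : k ≤ n) (h : S.IsPerfect k a c) : S.mirror.IsPerfect k c a where
  noConfined := h.noConfined.mirror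
  discovery t ht hz := by
    simp only [aDiscovery_mirror hk, cDiscovery_mirror hk]
    exact (h.discovery t ht ((zoneStep_mirror hk).1 hz)).symm
  numDoubleC_eq i := by rw [numDoubleC_mirror hk, numCAfter_mirror, h.numDoubleA_eq]
  numDoubleA_eq i := by rw [numDoubleA_mirror hk, numAAfter_mirror, h.numDoubleC_eq]

end mirror

section shift

/-- The allowable sequence with the origin of time moved to `τ`. -/
def shift (S : AllowableSeq n) (τ : ℤ) : AllowableSeq n where
  pos t := S.pos (τ + t)
  pos_mem _ := S.pos_mem _
  pos_inj _ := S.pos_inj _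
  step t := by simpa only [add_assoc] using S.step (τ + t)
  reverse t x := by rw [← S.reverse, add_assoc]

theorem posAt_shift (τ t : ℕ) (x : Fin n) : (S.shift τ).posAt t x = S.posAt (τ + t) x := by
  simp only [posAt, shift, Nat.cast_add]

theorem rightMover_shift (τ t : ℕ) : (S.shift τ).rightMover t = S.rightMover (τ + t) := by
  refine (rightMover_eq_of_lt ?_).1
  rw [posAt_shift, posAt_shift, ← add_assoc, posAt_succ_rightMover]
  exact Nat.lt_succ_self _

theorem leftMover_shift (τ t : ℕ) : (S.shift τ).leftMover t = S.leftMover (τ + t) := by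
  refine (leftMover_eq_of_lt ?_).1
  rw [posAt_shift, posAt_shift, ← add_assoc, posAt_succ_leftMover, posAt_leftMover]
  exact Nat.lt_succ_self _

theorem gate_shift (τ t : ℕ) : (S.shift τ).gate t = S.gate (τ + t) := by
  rw [gate, rightMover_shift, posAt_shift, ← gate]

theorem gate_add_steps (t : ℕ) : S.gate (t + steps n) = n - S.gate t := by
  have hlt := S.gate_lt t
  have hbefore := S.posAt_add_steps t (S.leftMover t)
  have hafter := S.posAt_add_steps (t + 1) (S.leftMover t)
  rw [posAt_leftMover] at hbefore
  rw [posAt_succ_leftMover, add_right_comm] at hafter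
  have hgate := (rightMover_eq_of_lt (S := S) (t := t + steps n) (z := S.leftMover t) (by omega)).2
  omega

theorem zoneStep_shift {k τ t : ℕ} : (S.shift τ).ZoneStep k t ↔ S.ZoneStep k (τ + t) := by
  rw [ZoneStep, ZoneStep, gate_shift]

theorem zoneStep_periodic {k : ℕ} (hk : k ≤ n) : Function.Periodic (S.ZoneStep k) (steps n) :=
  fun t => propext <| by
    have := S.gate_lt t
    have := S.one_le_gate t
    rw [ZoneStep, ZoneStep, gate_add_steps]
    omega

end shift

/-! ### Liberation times and discoveries -/

section freeTime

variable {k : ℕ} {a c : Fin k → Fin n}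

theorem StartsWith.le (h : S.StartsWith k a c) : k ≤ n := by
  have := h.two_mul_lt
  omega

theorem StartsWith.a_injective (h : S.StartsWith k a c) : Function.Injective a := fun i j hij => by
  have hi := h.posAt_zero_a i
  have hj := h.posAt_zero_a j
  rw [hij] at hi
  omega

theorem StartsWith.c_injective (h : S.StartsWith k a c) : Function.Injective c :=
  h.mirror.a_injective

theorem StartsWith.a_ne_c (h : S.StartsWith k a c) (i j : Fin k) : a i ≠ c j := fun hij => by
  have hk := h.two_mul_lt
  have hi := h.posAt_zero_a i
  rw [hij, h.posAt_zero_c] at hi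
  omega

theorem StartsWith.posAt_steps_a (h : S.StartsWith k a c) (i : Fin k) :
    S.posAt (steps n) (a i) = n - k + i + 1 := by
  have := h.two_mul_lt
  rw [posAt_steps, h.posAt_zero_a]
  omega

theorem StartsWith.posAt_steps_c (h : S.StartsWith k a c) (i : Fin k) :
    S.posAt (steps n) (c i) = k - i := by
  have := h.two_mul_lt
  rw [posAt_steps, h.posAt_zero_c]
  omega

theorem aConfined_of_lt_aFreeTime {t : ℕ} {x : Fin n} (ht : t < S.aFreeTime k x) :
    S.AConfined k t x := fun _ hs =>
  not_lt.1 (Nat.notMem_of_lt_sInf (s := {t | k < S.posAt t x}) (hs.trans_lt ht))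

theorem cConfined_of_lt_cFreeTime {t : ℕ} {x : Fin n} (ht : t < S.cFreeTime k x) :
    S.CConfined k t x := fun _ hs =>
  not_le.1 (Nat.notMem_of_lt_sInf (s := {t | S.posAt t x ≤ n - k}) (hs.trans_lt ht))

theorem aFreeTime_le {t : ℕ} {x : Fin n} (ht : k < S.posAt t x) : S.aFreeTime k x ≤ t :=
  Nat.sInf_le ht

theorem cFreeTime_le {t : ℕ} {x : Fin n} (ht : S.posAt t x ≤ n - k) : S.cFreeTime k x ≤ t :=
  Nat.sInf_le ht

theorem StartsWith.lt_posAt_aFreeTime (h : S.StartsWith k a c) (i : Fin k) :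
    k < S.posAt (S.aFreeTime k (a i)) (a i) := by
  refine Nat.sInf_mem (s := {t | k < S.posAt t (a i)}) ⟨steps n, ?_⟩
  have := h.two_mul_lt
  rw [Set.mem_ofPred_eq, h.posAt_steps_a]
  omega

theorem StartsWith.posAt_cFreeTime_le (h : S.StartsWith k a c) (i : Fin k) :
    S.posAt (S.cFreeTime k (c i)) (c i) ≤ n - k := by
  rw [← lt_posAt_mirror, ← aFreeTime_mirror]
  exact h.mirror.lt_posAt_aFreeTime i

theorem StartsWith.lt_aFreeTime (h : S.StartsWith k a c) {i : Fin k} {t : ℕ}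
    (ht : S.AConfined k t (a i)) : t < S.aFreeTime k (a i) :=
  not_le.1 fun hle => (h.lt_posAt_aFreeTime i).not_ge (ht _ hle)

theorem StartsWith.lt_cFreeTime (h : S.StartsWith k a c) {i : Fin k} {t : ℕ}
    (ht : S.CConfined k t (c i)) : t < S.cFreeTime k (c i) :=
  not_le.1 fun hle => (h.posAt_cFreeTime_le i).not_gt (ht _ hle)

theorem StartsWith.aFreeTime_eq_succ (h : S.StartsWith k a c) (i : Fin k) :
    ∃ u < steps n, S.aFreeTime k (a i) = u + 1 ∧ S.rightMover u = a i ∧ S.gate u = k := by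
  have hk := h.two_mul_lt
  obtain ⟨u, -, hu, hr, hgate, hconf⟩ := exists_rightMover_crossing (S := S) (q := k)
    (x := a i) (Nat.zero_le (steps n)) (by rw [h.posAt_zero_a]; omega)
    (by rw [h.posAt_steps_a]; omega)
  have hpos := S.posAt_succ_rightMover u
  rw [hr, hgate] at hpos
  have hle : S.aFreeTime k (a i) ≤ u + 1 := aFreeTime_le (by omega)
  exact ⟨u, hu, hle.antisymm (h.lt_aFreeTime fun s hs => hconf s s.zero_le hs), hr, hgate⟩

theorem StartsWith.cFreeTime_eq_succ (h : S.StartsWith k a c) (i : Fin k) :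
    ∃ u < steps n, S.cFreeTime k (c i) = u + 1 ∧ S.leftMover u = c i ∧ S.gate u = n - k := by
  obtain ⟨u, hu, htime, hmover, hgate⟩ := h.mirror.aFreeTime_eq_succ i
  rw [aFreeTime_mirror] at htime
  rw [rightMover_mirror] at hmover
  rw [gate_mirror] at hgate
  have := S.gate_lt u
  exact ⟨u, hu, htime, hmover, by omega⟩

theorem StartsWith.aFreeTime_le_steps (h : S.StartsWith k a c) (i : Fin k) :
    S.aFreeTime k (a i) ≤ steps n := by
  obtain ⟨u, hu, hfree, -⟩ := h.aFreeTime_eq_succ i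
  omega

theorem StartsWith.cFreeTime_le_steps (h : S.StartsWith k a c) (i : Fin k) :
    S.cFreeTime k (c i) ≤ steps n := by
  obtain ⟨u, hu, hfree, -⟩ := h.cFreeTime_eq_succ i
  omega

theorem StartsWith.aFreeTime_ne_cFreeTime (h : S.StartsWith k a c) (i j : Fin k) :
    S.aFreeTime k (a i) ≠ S.cFreeTime k (c j) := by
  obtain ⟨u, -, hu, -, hgate⟩ := h.aFreeTime_eq_succ i
  obtain ⟨v, -, hv, -, hgate'⟩ := h.cFreeTime_eq_succ j
  have := h.two_mul_lt
  intro heq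
  obtain rfl : u = v := by omega
  omega

theorem StartsWith.aFreeTime_strictMono (h : S.StartsWith k a c) (hn : S.NoConfined k a c) :
    StrictMono fun i => S.aFreeTime k (a i) := by
  intro i j hij
  by_contra! hle
  obtain ⟨u, hu, htime, hmover, hgate⟩ := h.aFreeTime_eq_succ j
  have hj : S.AConfined k u (a j) := aConfined_of_lt_aFreeTime (htime ▸ u.lt_succ_self)
  have hi : S.AConfined k u (a i) := aConfined_of_lt_aFreeTime (by omega)
  have hposj : S.posAt u (a j) = k := by rw [← hmover, ← hgate, gate]
  have hne : S.posAt u (a i) ≠ S.posAt u (a j) :=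
    (S.posAt_injective u).ne (h.a_injective.ne hij.ne)
  have hlt : S.posAt u (a i) < S.posAt u (a j) := (hposj ▸ hi u le_rfl).lt_of_ne hne
  have hlt' : S.posAt 0 (a j) < S.posAt 0 (a i) := by
    rw [h.posAt_zero_a, h.posAt_zero_a]
    omega
  obtain ⟨w, -, hw, hr, hl⟩ := exists_swap_of_order_change u.zero_le hlt' hlt
  exact hn.not_a w (hw.trans hu) j i hr hl (fun s hs => hj s (hs.trans hw.le))
    fun s hs => hi s (hs.trans hw.le)

theorem StartsWith.cFreeTime_strictMono (h : S.StartsWith k a c) (hn : S.NoConfined k a c) :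
    StrictMono fun i => S.cFreeTime k (c i) := by
  simpa only [aFreeTime_mirror] using h.mirror.aFreeTime_strictMono hn.mirror

end freeTime

section discovery

variable {k : ℕ} {a c : Fin k → Fin n}

theorem StartsWith.aDiscovery_index_eq (h : S.StartsWith k a c) {i j : Fin k} {t : ℕ}
    (hi : S.ADiscovery k a i t) (hj : S.ADiscovery k a j t) : i = j :=
  h.a_injective (hi.1.symm.trans hj.1)

theorem StartsWith.cDiscovery_index_eq (h : S.StartsWith k a c) {i j : Fin k} {t : ℕ}
    (hi : S.CDiscovery k c i t) (hj : S.CDiscovery k c j t) : i = j :=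
  h.c_injective (hi.1.symm.trans hj.1)

theorem CompulsoryGate.le_or_le {j q : ℕ} (h : CompulsoryGate n k j q) : q ≤ k ∨ n - k ≤ q :=
  h.imp And.right And.left

theorem zoneStep_of_discovery {t : ℕ}
    (h : (∃ j, S.ADiscovery k a j t) ∨ ∃ j, S.CDiscovery k c j t) : S.ZoneStep k t := by
  rcases h with ⟨j, hj⟩ | ⟨j, hj⟩ <;> exact hj.2.1.le_or_le

theorem ADiscovery.eq_of_gate_eq {j : Fin k} {t u : ℕ} (ht : S.ADiscovery k a j t)
    (hu : S.ADiscovery k a j u) (heq : S.gate t = S.gate u) : t = u := by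
  wlog hlt : t < u generalizing t u
  · exact (not_lt.1 hlt).eq_or_lt.elim Eq.symm fun hut => (this hu ht heq.symm hut).symm
  have hpos := hu.2.2 (t + 1) hlt
  rw [← ht.1, posAt_succ_rightMover] at hpos
  omega

-- A compulsory gate separates the initial and the final position of `a j`.
theorem StartsWith.stepCount_aDiscovery_gate_mem (h : S.StartsWith k a c) {j : Fin k}
    {G : Finset ℕ} (hG : ∀ q ∈ G, CompulsoryGate n k j q) :
    stepCount (steps n) (fun t => S.ADiscovery k a j t ∧ S.gate t ∈ G) = G.card := by
  rw [stepCount, ← Set.ncard_coe_finset]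
  refine Set.ncard_congr (fun t _ => S.gate t) (fun t ht => ht.2.2)
    (fun t u ht hu => ht.2.1.eq_of_gate_eq hu.2.1) fun q hq => ?_
  have hk := h.two_mul_lt
  have hcomp := hG q hq
  have hstart := h.posAt_zero_a j
  have hend := h.posAt_steps_a j
  have hbounds : S.posAt 0 (a j) ≤ q ∧ q < S.posAt (steps n) (a j) := by
    unfold CompulsoryGate at hcomp
    omega
  obtain ⟨u, -, hu, hmover, rfl, hbefore⟩ :=
    exists_rightMover_crossing (steps n).zero_le hbounds.1 hbounds.2
  exact ⟨u, ⟨hu, ⟨hmover, hcomp, fun s hs => hbefore s s.zero_le hs⟩, hq⟩, rfl⟩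

theorem StartsWith.stepCount_aDiscovery_aZone (h : S.StartsWith k a c) (j : Fin k) :
    stepCount (steps n) (fun t => S.ADiscovery k a j t ∧ S.gate t ≤ k) = j + 1 := by
  have hk := h.two_mul_lt
  have hcount := h.stepCount_aDiscovery_gate_mem (j := j) (G := Finset.Icc (k - j) k)
    fun q hq => Or.inl (Finset.mem_Icc.1 hq)
  rw [Nat.card_Icc] at hcount
  trans k + 1 - (k - j)
  · refine hcount ▸ stepCount_congr fun t _ => and_congr_right fun ht => ?_
    have := ht.2.1
    unfold CompulsoryGate at this
    rw [Finset.mem_Icc]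
    omega
  · omega

theorem StartsWith.stepCount_aDiscovery_cZone (h : S.StartsWith k a c) (j : Fin k) :
    stepCount (steps n) (fun t => S.ADiscovery k a j t ∧ n - k ≤ S.gate t) = j + 1 := by
  have hk := h.two_mul_lt
  have hcount := h.stepCount_aDiscovery_gate_mem (j := j) (G := Finset.Icc (n - k) (n - k + j))
    fun q hq => Or.inr (Finset.mem_Icc.1 hq)
  rw [Nat.card_Icc] at hcount
  trans n - k + j + 1 - (n - k)
  · refine hcount ▸ stepCount_congr fun t _ => and_congr_right fun ht => ?_
    have := ht.2.1
    unfold CompulsoryGate at this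
    rw [Finset.mem_Icc]
    omega
  · omega

theorem StartsWith.stepCount_aDiscovery (h : S.StartsWith k a c) (j : Fin k) :
    stepCount (steps n) (S.ADiscovery k a j) = 2 * (j + 1) := by
  have hk := h.two_mul_lt
  calc
    _ = stepCount (steps n) (fun t =>
          (S.ADiscovery k a j t ∧ S.gate t ≤ k) ∨ (S.ADiscovery k a j t ∧ n - k ≤ S.gate t)) :=
        stepCount_congr fun t _ =>
          ⟨fun ht => ht.2.1.le_or_le.imp (⟨ht, ·⟩) (⟨ht, ·⟩), fun ht => ht.elim And.left And.left⟩
    _ = 2 * (j + 1) := by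
        rw [stepCount_or fun t _ ha hc => by omega, h.stepCount_aDiscovery_aZone,
          h.stepCount_aDiscovery_cZone, two_mul]

theorem StartsWith.stepCount_exists_aDiscovery (h : S.StartsWith k a c) :
    stepCount (steps n) (fun t => ∃ j, S.ADiscovery k a j t) = 2 * ∑ j : Fin k, ((j : ℕ) + 1) := by
  rw [Finset.mul_sum]
  exact (stepCount_exists (Q := S.ADiscovery k a) fun _ _ _ => h.aDiscovery_index_eq).trans
    (Finset.sum_congr rfl fun j _ => h.stepCount_aDiscovery j)

theorem StartsWith.stepCount_exists_cDiscovery (h : S.StartsWith k a c) :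
    stepCount (steps n) (fun t => ∃ j, S.CDiscovery k c j t) = 2 * ∑ j : Fin k, ((j : ℕ) + 1) := by
  simpa only [aDiscovery_mirror h.le] using h.mirror.stepCount_exists_aDiscovery

end discovery

/-! ### Counting discoveries in the zones -/

section counting

variable {k : ℕ} {a c : Fin k → Fin n}

/-- The number of transpositions in the A-Zone and the C-Zone during the half-period starting at
time `0`. -/
noncomputable def numZoneSteps (S : AllowableSeq n) (k : ℕ) : ℕ :=
  stepCount (steps n) (S.ZoneStep k)

theorem numZoneSteps_shift (hk : k ≤ n) (τ : ℕ) :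
    (S.shift τ).numZoneSteps k = S.numZoneSteps k :=
  (stepCount_congr fun _ _ => zoneStep_shift).trans (stepCount_comp_add (zoneStep_periodic hk) τ)

theorem numCAfter_eq_zero {i : Fin k} (h : ∀ l, S.cFreeTime k (c l) ≤ S.aFreeTime k (a i)) :
    S.numCAfter k a c i = 0 :=
  (Set.ncard_eq_zero (Set.toFinite _)).2 (Set.eq_empty_of_forall_notMem fun l => (h l).not_gt)

theorem numCAfter_eq {i : Fin k} (h : ∀ l, S.aFreeTime k (a i) < S.cFreeTime k (c l)) :
    S.numCAfter k a c i = k := by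
  rw [numCAfter, Set.eq_univ_of_forall (s := {l | _ < S.cFreeTime k (c l)}) h, Set.ncard_univ,
    Nat.card_fin]

theorem aFreeTime_lt_of_le_numCAfter {i : Fin k} (h : k ≤ S.numCAfter k a c i) (l : Fin k) :
    S.aFreeTime k (a i) < S.cFreeTime k (c l) := by
  have huniv := Set.eq_of_subset_of_ncard_le
    (Set.subset_univ {l | S.aFreeTime k (a i) < S.cFreeTime k (c l)})
    (by rwa [Set.ncard_univ, Nat.card_fin])
  exact huniv.ge (Set.mem_univ l)

theorem numAAfter_eq {i : Fin k} (h : ∀ l, S.cFreeTime k (c i) < S.aFreeTime k (a l)) :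
    S.numAAfter k a c i = k := by
  rw [← numCAfter_mirror]
  exact numCAfter_eq (by simpa only [aFreeTime_mirror, cFreeTime_mirror] using h)

theorem StartsWith.stepCount_swap_cDiscovery_le (h : S.StartsWith k a c) (i : Fin k) :
    stepCount (steps n) (fun t =>
      S.rightMover t = a i ∧ n - k ≤ S.gate t ∧ ∃ l, S.CDiscovery k c l t) ≤
      S.numCAfter k a c i := by
  have hk := h.two_mul_lt
  rw [numCAfter, ← Set.ncard_image_of_injective _ h.c_injective]
  refine stepCount_le_ncard S.leftMover ?_ fun t ht u hu heq => ?_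
  · rintro t - ⟨hmover, hgate, l, hl⟩
    have hc : t < S.cFreeTime k (c l) := h.lt_cFreeTime fun s hs => hgate.trans_lt (hl.2.2 s hs)
    have ha : S.aFreeTime k (a i) ≤ t := aFreeTime_le (by rw [← hmover, ← gate]; omega)
    exact ⟨l, ha.trans_lt hc, hl.1.symm⟩
  · exact S.movers_injOn ht.1 hu.1 (Prod.ext (ht.2.1.trans hu.2.1.symm) heq)

theorem StartsWith.numDoubleC_le (h : S.StartsWith k a c) (i : Fin k) :
    S.numDoubleC k a c i ≤ min ((i : ℕ) + 1) (S.numCAfter k a c i) := by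
  refine le_min ?_ ?_
  · rw [← h.stepCount_aDiscovery_cZone]
    exact stepCount_mono fun t _ ht => ⟨ht.2.1, ht.1⟩
  · exact (stepCount_mono fun t _ ht => ⟨ht.2.1.1, ht.1, ht.2.2⟩).trans
      (h.stepCount_swap_cDiscovery_le i)

theorem StartsWith.numDoubleA_le (h : S.StartsWith k a c) (i : Fin k) :
    S.numDoubleA k a c i ≤ min ((i : ℕ) + 1) (S.numAAfter k a c i) := by
  simpa only [numDoubleC_mirror h.le, numCAfter_mirror] using h.mirror.numDoubleC_le i

theorem StartsWith.stepCount_exists_doubleC (h : S.StartsWith k a c) :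
    stepCount (steps n) (fun t =>
      ∃ i, n - k ≤ S.gate t ∧ S.ADiscovery k a i t ∧ ∃ l, S.CDiscovery k c l t) =
      ∑ i, S.numDoubleC k a c i :=
  stepCount_exists (Q := fun i t => n - k ≤ S.gate t ∧ S.ADiscovery k a i t ∧
    ∃ l, S.CDiscovery k c l t) fun _ _ _ hi hj => h.aDiscovery_index_eq hi.2.1 hj.2.1

theorem StartsWith.stepCount_exists_doubleA (h : S.StartsWith k a c) :
    stepCount (steps n) (fun t =>
      ∃ i, S.gate t ≤ k ∧ S.CDiscovery k c i t ∧ ∃ l, S.ADiscovery k a l t) =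
      ∑ i, S.numDoubleA k a c i :=
  stepCount_exists (Q := fun i t => S.gate t ≤ k ∧ S.CDiscovery k c i t ∧
    ∃ l, S.ADiscovery k a l t) fun _ _ _ hi hj => h.cDiscovery_index_eq hi.2.1 hj.2.1

theorem StartsWith.stepCount_double (h : S.StartsWith k a c) :
    stepCount (steps n) (fun t => (∃ j, S.ADiscovery k a j t) ∧ ∃ j, S.CDiscovery k c j t) =
      ∑ i, S.numDoubleC k a c i + ∑ i, S.numDoubleA k a c i := by
  have hk := h.two_mul_lt
  rw [← h.stepCount_exists_doubleC, ← h.stepCount_exists_doubleA, ← stepCount_or]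
  · refine stepCount_congr fun t _ => ⟨?_, ?_⟩
    · rintro ⟨⟨j, hj⟩, l, hl⟩
      rcases hj.2.1.le_or_le with hgate | hgate
      · exact Or.inr ⟨l, hgate, hl, j, hj⟩
      · exact Or.inl ⟨j, hgate, hj, l, hl⟩
    · rintro (⟨j, -, hj, hl⟩ | ⟨l, -, hl, hj⟩)
      · exact ⟨⟨j, hj⟩, hl⟩
      · exact ⟨hj, l, hl⟩
  · rintro t - ⟨-, hC, -⟩ ⟨-, hA, -⟩
    omega

theorem StartsWith.stepCount_discovery_add (h : S.StartsWith k a c) :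
    stepCount (steps n) (fun t => (∃ j, S.ADiscovery k a j t) ∨ ∃ j, S.CDiscovery k c j t) +
      (∑ i, S.numDoubleC k a c i + ∑ i, S.numDoubleA k a c i) =
      4 * ∑ j : Fin k, ((j : ℕ) + 1) := by
  rw [← h.stepCount_double, stepCount_or_add_stepCount_and, h.stepCount_exists_aDiscovery,
    h.stepCount_exists_cDiscovery]
  ring

theorem IsPerfect.numZoneSteps_add (hp : S.IsPerfect k a c) (h : S.StartsWith k a c) :
    S.numZoneSteps k + (∑ i, S.numDoubleC k a c i + ∑ i, S.numDoubleA k a c i) =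
      4 * ∑ j : Fin k, ((j : ℕ) + 1) := by
  rw [← h.stepCount_discovery_add, numZoneSteps]
  congr 1
  exact stepCount_congr fun t ht => ⟨hp.discovery t ht, zoneStep_of_discovery⟩

-- The zone steps are then so few that all of them are discoveries and all the upper bounds on the
-- numbers of double discoveries are attained.
theorem isPerfect_of_numZoneSteps_le (h : S.StartsWith k a c) (hn : S.NoConfined k a c)
    (hlt : ∀ i j, S.cFreeTime k (c i) < S.aFreeTime k (a j))
    (hle : S.numZoneSteps k ≤ 3 * ∑ j : Fin k, ((j : ℕ) + 1)) : S.IsPerfect k a c := by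
  have hCAfter (i : Fin k) : S.numCAfter k a c i = 0 := numCAfter_eq_zero fun l => (hlt l i).le
  have hAAfter (i : Fin k) : S.numAAfter k a c i = k := numAAfter_eq (hlt i)
  have hdoubleC (i : Fin k) : S.numDoubleC k a c i = 0 := by
    have := h.numDoubleC_le i
    rwa [hCAfter, Nat.min_zero, Nat.le_zero] at this
  have hdoubleA (i : Fin k) : S.numDoubleA k a c i ≤ i + 1 :=
    (h.numDoubleA_le i).trans (min_le_left _ _)
  have hsumC : ∑ i, S.numDoubleC k a c i = 0 := Finset.sum_eq_zero fun i _ => hdoubleC i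
  have hsumA : ∑ i, S.numDoubleA k a c i ≤ ∑ j : Fin k, ((j : ℕ) + 1) :=
    Finset.sum_le_sum fun i _ => hdoubleA i
  have hcount := h.stepCount_discovery_add
  have hdisc : stepCount (steps n) (fun t =>
      (∃ j, S.ADiscovery k a j t) ∨ ∃ j, S.CDiscovery k c j t) ≤ S.numZoneSteps k :=
    stepCount_mono fun t _ => zoneStep_of_discovery
  have hdisc' : S.numZoneSteps k ≤ stepCount (steps n) fun t =>
      (∃ j, S.ADiscovery k a j t) ∨ ∃ j, S.CDiscovery k c j t := by
    omega
  refine ⟨hn, fun t ht => of_stepCount_le (fun t _ => zoneStep_of_discovery) hdisc' ht,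
    fun i => by rw [hdoubleC, hCAfter, Nat.min_zero], fun i => ?_⟩
  rw [hAAfter, min_eq_left i.2]
  exact (Finset.sum_eq_sum_iff_of_le fun i _ => hdoubleA i).1 (by omega) i (Finset.mem_univ i)

end counting

section doubleCount

variable {k : ℕ} {a c : Fin k → Fin n}

theorem stepCount_rightMover_eq_stepCount_leftMover_add {m : ℕ} {x : Fin n}
    (h : S.posAt 0 x ≤ m) (N : ℕ) :
    stepCount N (fun t => S.rightMover t = x ∧ m ≤ S.gate t) =
      stepCount N (fun t => S.leftMover t = x ∧ m ≤ S.gate t) + (S.posAt N x - m) := by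
  classical
  induction N with
  | zero => simp [stepCount, h]
  | succ N ih =>
    have hne := S.rightMover_ne_leftMover N
    rw [stepCount_succ, stepCount_succ, ih]
    rcases S.posAt_succ_cases N x with ⟨rfl, _, _⟩ | ⟨rfl, _, _⟩ | ⟨hr, hl, hpos⟩
    · simp only [true_and, hne.symm, false_and, if_false]
      split_ifs <;> omega
    · simp only [true_and, hne, false_and, if_false]
      split_ifs <;> omega
    · simp only [hr, hl, false_and, if_false, hpos, add_zero]

theorem IsPerfect.exists_double_of_numCAfter_pos (hp : S.IsPerfect k a c) {i : Fin k}
    (hi : 0 < S.numCAfter k a c i) :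
    ∃ t < steps n, n - k ≤ S.gate t ∧ S.ADiscovery k a i t ∧ ∃ l, S.CDiscovery k c l t :=
  exists_of_stepCount_pos <| (lt_min i.1.succ_pos hi).trans_eq (hp.numDoubleC_eq i).symm

theorem IsPerfect.lt_posAt_of_le (hp : S.IsPerfect k a c) (h : S.StartsWith k a c) {i : Fin k}
    {s t : ℕ} (hs : n - k < S.posAt s (a i)) (hst : s ≤ t) (ht : t ≤ steps n)
    (hfree : ∀ l, S.cFreeTime k (c l) ≤ t) : n - k < S.posAt t (a i) := by
  by_contra! hle
  obtain ⟨u, htu, hu, hmover, hgate, -⟩ := exists_rightMover_crossing ht hle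
    (by rw [h.posAt_steps_a]; omega)
  rcases hp.discovery u hu (Or.inr hgate.ge) with ⟨j, hj⟩ | ⟨l, hl⟩
  · obtain rfl := h.a_injective (hj.1.symm.trans hmover)
    exact (hj.2.2 s (hst.trans htu)).not_gt (hgate ▸ hs)
  · exact (hl.2.2 _ ((hfree l).trans htu)).not_ge (hgate ▸ h.posAt_cFreeTime_le l)

theorem StartsWith.le_stepCount_leftMover (h : S.StartsWith k a c) {r : Fin k} {s : ℕ}
    (hs : s ≤ steps n) (hr : ∀ t, s ≤ t → t ≤ steps n → n - k < S.posAt t (a r))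
    (hj : ∀ j, r < j → S.posAt s (a j) ≤ n - k) :
    k - 1 - r ≤ stepCount (steps n) fun t => S.leftMover t = a r ∧ n - k ≤ S.gate t := by
  have hswap (j : Fin k) (hrj : r < j) : ∃ u < steps n,
      S.rightMover u = a j ∧ S.leftMover u = a r ∧ n - k ≤ S.gate u := by
    obtain ⟨u, hsu, hu, hright, hleft⟩ := exists_swap_of_order_change hs
      ((hj j hrj).trans_lt (hr s le_rfl hs)) (by rw [h.posAt_steps_a, h.posAt_steps_a]; omega)
    have hpos := hr (u + 1) (hsu.trans u.le_succ) hu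
    rw [← hleft, posAt_succ_leftMover] at hpos
    exact ⟨u, hu, hright, hleft, hpos.le⟩
  choose! f hf using hswap
  have hcard : (Set.Ioi r).ncard = k - 1 - r := by
    rw [Set.ncard_eq_toFinset_card', Set.toFinset_Ioi, Fin.card_Ioi]
  rw [← hcard]
  refine ncard_le_stepCount f (fun j hrj => ⟨(hf j hrj).1, (hf j hrj).2.2⟩) fun i hi j hj hij => ?_
  exact h.a_injective ((hf i hi).2.1.symm.trans ((congrArg S.rightMover hij).trans (hf j hj).2.1))

theorem IsPerfect.stepCount_rightMover_add_numDoubleC_le (hp : S.IsPerfect k a c)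
    (h : S.StartsWith k a c) (i : Fin k) :
    stepCount (steps n) (fun t => S.rightMover t = a i ∧ n - k ≤ S.gate t) +
      S.numDoubleC k a c i ≤ i + 1 + S.numCAfter k a c i := by
  refine le_trans ?_
    (add_le_add (h.stepCount_aDiscovery_cZone i).le (h.stepCount_swap_cDiscovery_le i))
  rw [← stepCount_or_add_stepCount_and]
  refine add_le_add (stepCount_mono ?_) (stepCount_mono ?_)
  · rintro t ht ⟨hmover, hgate⟩
    rcases hp.discovery t ht (Or.inr hgate) with ⟨j, hj⟩ | hl
    · obtain rfl := h.a_injective (hj.1.symm.trans hmover)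
      exact Or.inl ⟨hj, hgate⟩
    · exact Or.inr ⟨hmover, hgate, hl⟩
  · rintro t - ⟨hgate, hi, hl⟩
    exact ⟨⟨hi, hgate⟩, hi.1, hgate, hl⟩

theorem IsPerfect.stepCount_rightMover_le_max (hp : S.IsPerfect k a c) (h : S.StartsWith k a c)
    (i : Fin k) :
    stepCount (steps n) (fun t => S.rightMover t = a i ∧ n - k ≤ S.gate t) ≤
      max ((i : ℕ) + 1) (S.numCAfter k a c i) := by
  have hle := hp.stepCount_rightMover_add_numDoubleC_le h i
  rw [hp.numDoubleC_eq] at hle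
  omega

-- `a r` swaps in the C-Zone with each `a j`, `j > r`, and so crosses the C-gates to the right at
-- least `k` times; a perfect half-period has room for that only if `T(a r)` consists of all `c`'s.
theorem IsPerfect.aFreeTime_lt_of_separated (hp : S.IsPerfect k a c) (h : S.StartsWith k a c)
    {r : Fin k} (hr : (r : ℕ) + 1 < k) {l₀ : Fin k}
    (hl₀ : S.aFreeTime k (a r) < S.cFreeTime k (c l₀)) {s : ℕ} (hsn : s ≤ steps n)
    (hc : ∀ l, S.cFreeTime k (c l) ≤ s) (ha : ∀ j, r < j → s < S.aFreeTime k (a j)) (l : Fin k) :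
    S.aFreeTime k (a r) < S.cFreeTime k (c l) := by
  have hk := h.two_mul_lt
  have hT : 0 < S.numCAfter k a c r := (Set.ncard_pos (Set.toFinite _)).2 ⟨l₀, hl₀⟩
  obtain ⟨v, -, hgate, hv, l₁, hl₁⟩ := hp.exists_double_of_numCAfter_pos hT
  have hvs : v < s := (h.lt_cFreeTime fun w hw => hgate.trans_lt (hl₁.2.2 w hw)).trans_le (hc l₁)
  have hpos : n - k < S.posAt (v + 1) (a r) := by
    rw [← hv.1, posAt_succ_rightMover]
    omega
  have hleft := h.le_stepCount_leftMover hsn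
    (fun t hst ht => hp.lt_posAt_of_le h hpos (hvs.trans_le hst) ht fun l => (hc l).trans hst)
    fun j hj => (aConfined_of_lt_aFreeTime (ha j hj) s le_rfl).trans (by omega)
  have hright := stepCount_rightMover_eq_stepCount_leftMover_add (S := S) (m := n - k) (x := a r)
    (by rw [h.posAt_zero_a]; omega) (steps n)
  rw [h.posAt_steps_a] at hright
  have hmax := hp.stepCount_rightMover_le_max h r
  exact aFreeTime_lt_of_le_numCAfter (by omega) l

end doubleCount

section blockAfter

variable {k : ℕ} {a c : Fin k → Fin n} {r : Fin k}

/-- The `c`'s become free in one block, immediately after `a r`: the liberation sequence is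
`a_0 … a_r c_0 … c_(k-1) a_(r+1) … a_(k-1)`, with zero-based indices. -/
structure CBlockAfter (S : AllowableSeq n) (k : ℕ) (a c : Fin k → Fin n) (r : Fin k) : Prop where
  lt_c : ∀ i ≤ r, ∀ l, S.aFreeTime k (a i) < S.cFreeTime k (c l)
  lt_a : ∀ l j, r < j → S.cFreeTime k (c l) < S.aFreeTime k (a j)

theorem CBlockAfter.numAAfter_eq (hb : S.CBlockAfter k a c r) (l : Fin k) :
    S.numAAfter k a c l = k - 1 - r := by
  have hset : {j | S.cFreeTime k (c l) < S.aFreeTime k (a j)} = Set.Ioi r := Set.ext fun j =>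
    ⟨fun hj => not_le.1 fun hle => lt_asymm hj (hb.lt_c j hle l), hb.lt_a l j⟩
  rw [numAAfter, hset, Set.ncard_eq_toFinset_card', Set.toFinset_Ioi, Fin.card_Ioi]

theorem IsPerfect.sum_numDoubleA (hp : S.IsPerfect k a c) (hb : S.CBlockAfter k a c r) :
    ∑ l, S.numDoubleA k a c l = ∑ i ∈ Finset.Ioi r, ((i : ℕ) + 1) := by
  simp only [hp.numDoubleA_eq, hb.numAAfter_eq, sum_min_succ_eq_sum_Ioi]

theorem IsPerfect.sum_numDoubleC (hp : S.IsPerfect k a c) (hb : S.CBlockAfter k a c r) :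
    ∑ i, S.numDoubleC k a c i = ∑ i ∈ Finset.Iic r, ((i : ℕ) + 1) := by
  have hle (i : Fin k) (hi : i ∈ Finset.Iic r) : S.numDoubleC k a c i = i + 1 := by
    rw [hp.numDoubleC_eq, numCAfter_eq (hb.lt_c i (Finset.mem_Iic.1 hi)), min_eq_left i.2]
  rw [← Finset.sum_congr rfl hle]
  refine (Finset.sum_subset (Finset.subset_univ _) fun i _ hi => ?_).symm
  rw [Finset.mem_Iic, not_le] at hi
  rw [hp.numDoubleC_eq, numCAfter_eq_zero fun l => (hb.lt_a l i hi).le, Nat.min_zero]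

theorem IsPerfect.sum_numDouble (hp : S.IsPerfect k a c) (hb : S.CBlockAfter k a c r) :
    ∑ i, S.numDoubleC k a c i + ∑ i, S.numDoubleA k a c i = ∑ j : Fin k, ((j : ℕ) + 1) := by
  have hIoi : (Finset.Iic r)ᶜ = Finset.Ioi r := by
    ext i
    rw [Finset.mem_compl, Finset.mem_Iic, Finset.mem_Ioi, not_le]
  rw [hp.sum_numDoubleC hb, hp.sum_numDoubleA hb, ← hIoi, Finset.sum_add_sum_compl]

theorem StartsWith.stepCount_late_aDiscovery_aZone (h : S.StartsWith k a c) (r : Fin k) :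
    stepCount (steps n) (fun t => ∃ i : {i // r < i}, S.ADiscovery k a i t ∧ S.gate t ≤ k) =
      ∑ i ∈ Finset.Ioi r, ((i : ℕ) + 1) := by
  rw [Finset.sum_subtype _ (fun _ => Finset.mem_Ioi)]
  exact (stepCount_exists (Q := fun (i : {i // r < i}) t => S.ADiscovery k a i t ∧ S.gate t ≤ k)
    fun i j t hi hj => Subtype.ext (h.aDiscovery_index_eq hi.1 hj.1)).trans
    (Finset.sum_congr rfl fun i _ => h.stepCount_aDiscovery_aZone i)

theorem StartsWith.not_aDiscovery_aZone (h : S.StartsWith k a c) {i : Fin k} {t : ℕ}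
    (ht : S.aFreeTime k (a i) ≤ t) (hgate : S.gate t ≤ k) : ¬ S.ADiscovery k a i t := fun hi =>
  ht.not_gt (h.lt_aFreeTime fun s hs => (hi.2.2 s hs).trans hgate)

-- There are exactly as many double discoveries in the A-Zone as discoveries of the `a i`, `i > r`.
theorem IsPerfect.exists_cDiscovery_of_aDiscovery (hp : S.IsPerfect k a c)
    (h : S.StartsWith k a c) (hb : S.CBlockAfter k a c r) {i : Fin k} (hri : r < i) {t : ℕ}
    (ht : t < steps n) (hi : S.ADiscovery k a i t) (hgate : S.gate t ≤ k) :
    ∃ l, S.CDiscovery k c l t := by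
  have hk := h.two_mul_lt
  have hdouble : ∀ t < steps n,
      (∃ l, S.gate t ≤ k ∧ S.CDiscovery k c l t ∧ ∃ i, S.ADiscovery k a i t) →
      ∃ i : {i // r < i}, S.ADiscovery k a i t ∧ S.gate t ≤ k := by
    rintro t - ⟨l, hgate, hl, i, hi⟩
    have hcl : S.cFreeTime k (c l) ≤ t := cFreeTime_le <| by
      rw [← hl.1, posAt_leftMover]
      omega
    refine ⟨⟨i, not_le.1 fun hir => ?_⟩, hi, hgate⟩
    exact h.not_aDiscovery_aZone ((hb.lt_c i hir l).le.trans hcl) hgate hi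
  have hcount : stepCount (steps n) (fun t =>
      ∃ i : {i // r < i}, S.ADiscovery k a i t ∧ S.gate t ≤ k) ≤ stepCount (steps n) (fun t =>
      ∃ l, S.gate t ≤ k ∧ S.CDiscovery k c l t ∧ ∃ i, S.ADiscovery k a i t) := by
    rw [h.stepCount_late_aDiscovery_aZone, h.stepCount_exists_doubleA, hp.sum_numDoubleA hb]
  obtain ⟨l, -, hl, -⟩ := of_stepCount_le hdouble hcount ht ⟨⟨i, hri⟩, hi, hgate⟩
  exact ⟨l, hl⟩

theorem IsPerfect.exists_cDiscovery_of_aFreeTime_le (hp : S.IsPerfect k a c)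
    (h : S.StartsWith k a c) (hb : S.CBlockAfter k a c r) {t : ℕ}
    (hrt : S.aFreeTime k (a r) ≤ t) (ht : t < steps n) (hgate : S.gate t ≤ k) :
    ∃ l, S.CDiscovery k c l t := by
  rcases hp.discovery t ht (Or.inl hgate) with ⟨i, hi⟩ | hl
  · refine hp.exists_cDiscovery_of_aDiscovery h hb (not_le.1 fun hir => ?_) ht hi hgate
    have hmono := (h.aFreeTime_strictMono hp.noConfined).monotone hir
    exact h.not_aDiscovery_aZone (hmono.trans hrt) hgate hi
  · exact hl

end blockAfter

/-! ### Restarting a perfect half-period -/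

section restart

variable {k τ : ℕ} {a c : Fin k → Fin n}

/-- From time `τ` on, only discovery transpositions of the `c`'s occur in the A-Zone. -/
def CDiscoversAZone (S : AllowableSeq n) (k : ℕ) (c : Fin k → Fin n) (τ : ℕ) : Prop :=
  ∀ t, τ ≤ t → t < steps n → S.gate t ≤ k → ∃ l, S.CDiscovery k c l t

theorem CDiscoversAZone.cDiscovery (hA : S.CDiscoversAZone k c τ) (h : S.StartsWith k a c)
    {t : ℕ} {l : Fin k} (hτt : τ ≤ t) (ht : t < steps n) (hgate : S.gate t ≤ k)
    (hl : S.leftMover t = c l) : S.CDiscovery k c l t := by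
  obtain ⟨l', hl'⟩ := hA t hτt ht hgate
  rwa [h.c_injective (hl.symm.trans hl'.1)]

theorem CDiscoversAZone.lt_gate_of_rightMover (hA : S.CDiscoversAZone k c τ)
    (h : S.StartsWith k a c) {t : ℕ} {l : Fin k} (hτl : τ < S.cFreeTime k (c l)) (hτt : τ ≤ t)
    (ht : t < steps n) (hl : S.rightMover t = c l) : k < S.gate t := by
  have hk := h.two_mul_lt
  by_contra! hgate
  have hstart : n - k < S.posAt τ (c l) := cConfined_of_lt_cFreeTime hτl τ le_rfl
  have hpos : S.posAt t (c l) = S.gate t := by rw [gate, hl]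
  have hpos' : S.posAt (t + 1) (c l) = S.gate t + 1 := by rw [← hl, posAt_succ_rightMover]
  obtain ⟨u, hτu, hut, hul, hug, -⟩ :=
    S.exists_leftMover_crossing hτt (show S.gate t < _ by omega) hpos.le
  have hcomp := (hA.cDiscovery h hτu (hut.trans ht) (by omega) hul).2.1
  rw [hug, CompulsoryGate] at hcomp
  have hend := h.posAt_steps_c l
  obtain ⟨v, htv, hv, hvl, hvg, -⟩ := S.exists_leftMover_crossing (q := S.gate t)
    (by omega : t + 1 ≤ steps n) (by omega) (show S.posAt (steps n) (c l) ≤ _ by omega)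
  have hfirst := (hA.cDiscovery h (by omega) hv (by omega) hvl).2.2 t (by omega)
  omega

theorem CDiscoversAZone.cFreeTime_le_of_gate_le (hA : S.CDiscoversAZone k c τ)
    (h : S.StartsWith k a c) (hn : S.NoConfined k a c) (hτ : ∀ l, τ < S.cFreeTime k (c l))
    {t : ℕ} (hτt : τ ≤ t) (ht : t < steps n) (hgate : S.gate t ≤ k) (i : Fin k) :
    S.cFreeTime k (c i) ≤ t := by
  have hk := h.two_mul_lt
  by_contra! hti
  obtain ⟨l, hl, -⟩ := hA t hτt ht hgate
  have hlpos : S.posAt t (c l) = S.gate t + 1 := by rw [← hl, posAt_leftMover]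
  have hipos : n - k < S.posAt t (c i) := cConfined_of_lt_cFreeTime hti t le_rfl
  have hli : l < i := (h.cFreeTime_strictMono hn).lt_iff_lt.1
    ((cFreeTime_le (by omega : S.posAt t (c l) ≤ n - k)).trans_lt hti)
  have hlend := h.posAt_steps_c l
  have hiend := h.posAt_steps_c i
  obtain ⟨u, htu, hu, hul, -⟩ := S.exists_swap_of_order_change ht.le
    (show S.posAt t (c l) < S.posAt t (c i) by omega)
    (show S.posAt (steps n) (c i) < S.posAt (steps n) (c l) by omega)
  have hug := hA.lt_gate_of_rightMover h (hτ l) (hτt.trans htu) hu hul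
  have hupos : S.posAt u (c l) = S.gate u := by rw [gate, hul]
  have hlpos' : S.posAt (t + 1) (c l) = S.gate t := by rw [← hl, posAt_succ_leftMover]
  have htu' : t + 1 ≤ u := by
    rcases htu.eq_or_lt with rfl | hlt
    · omega
    · exact hlt
  obtain ⟨v, htv, hvu, hvl, hvg, -⟩ := S.exists_rightMover_crossing (q := k) htu'
    (by omega) (show k < S.posAt u (c l) by omega)
  have := hA.lt_gate_of_rightMover h (hτ l) (by omega) (hvu.trans hu) hvl
  omega

theorem exists_eq_c {t : ℕ} (hc : ∀ i : Fin k, S.posAt t (c i) = n - k + i + 1) {x : Fin n}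
    (hx : n - k < S.posAt t x) : ∃ l, x = c l := by
  have := S.posAt_le t x
  refine ⟨⟨S.posAt t x - (n - k) - 1, by omega⟩, S.posAt_injective t ?_⟩
  rw [hc]
  dsimp only
  omega

-- Two confined `c`'s are never transposed, so the block of `c`'s cannot move before the first of
-- them becomes free.
theorem StartsWith.posAt_c_of_forall_lt_cFreeTime (h : S.StartsWith k a c)
    (hn : S.NoConfined k a c) {t : ℕ} (ht : ∀ l, t < S.cFreeTime k (c l)) (i : Fin k) :
    S.posAt t (c i) = n - k + i + 1 := by
  induction t generalizing i with
  | zero => exact h.posAt_zero_c i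
  | succ t ih =>
    have hprev := ih fun l => (Nat.lt_succ_self t).trans (ht l)
    have htN : t < steps n :=
      (Nat.lt_succ_self t).trans ((ht i).trans_le (h.cFreeTime_le_steps i))
    have hconf (l : Fin k) : S.CConfined k t (c l) :=
      cConfined_of_lt_cFreeTime ((Nat.lt_succ_self t).trans (ht l))
    have hgate : S.gate t ≤ n - k := by
      by_contra! hlt
      obtain ⟨l, hl⟩ := exists_eq_c hprev hlt
      obtain ⟨l', hl'⟩ := exists_eq_c (x := S.leftMover t) hprev (by rw [posAt_leftMover]; omega)
      exact hn.not_c t htN l l' hl hl' (hconf l) (hconf l')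
    rw [← hprev i]
    refine S.posAt_succ_of_ne (fun hr => ?_) fun hl => ?_
    · have := hprev i
      rw [hr, ← gate] at this
      omega
    · have := cConfined_of_lt_cFreeTime (ht i) (t + 1) le_rfl
      rw [hl, posAt_succ_leftMover] at this
      omega

variable {a' : Fin k → Fin n}

theorem StartsWith.shift (h : S.StartsWith k a c) (hn : S.NoConfined k a c)
    (hτ : ∀ l, τ < S.cFreeTime k (c l)) (ha' : ∀ i : Fin k, S.posAt τ (a' i) = k - i) :
    (S.shift τ).StartsWith k a' c where
  two_mul_lt := h.two_mul_lt
  posAt_zero_a i := by rw [posAt_shift, add_zero, ha']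
  posAt_zero_c i := by rw [posAt_shift, add_zero, h.posAt_c_of_forall_lt_cFreeTime hn hτ]

theorem cConfined_of_shift {x : Fin n} {t : ℕ} (hτx : τ < S.cFreeTime k x)
    (ht : (S.shift τ).CConfined k t x) : S.CConfined k (τ + t) x := fun s hs => by
  rcases le_total s τ with hsτ | hτs
  · exact cConfined_of_lt_cFreeTime hτx s hsτ
  · simpa only [posAt_shift, Nat.add_sub_cancel' hτs] using ht (s - τ) (by omega)

theorem CDiscoversAZone.noConfined_shift (hA : S.CDiscoversAZone k c τ)
    (h : S.StartsWith k a c) (hn : S.NoConfined k a c) (hτ : ∀ l, τ < S.cFreeTime k (c l))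
    (ha' : ∀ i : Fin k, S.posAt τ (a' i) = k - i) : (S.shift τ).NoConfined k a' c where
  not_a t _ i j hr hl hi hj := by
    have hk := h.two_mul_lt
    have hne (l : Fin k) : a' j ≠ c l := fun hjl => by
      have := h.posAt_c_of_forall_lt_cFreeTime hn hτ l
      rw [← hjl, ha'] at this
      omega
    have hτsteps : τ < steps n := (hτ i).trans_le (h.cFreeTime_le_steps i)
    rw [rightMover_shift] at hr
    rw [leftMover_shift] at hl
    rcases lt_or_ge (τ + t) (steps n) with hlt | hge
    · have hgate : S.gate (τ + t) ≤ k := by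
        rw [gate, hr, ← posAt_shift]
        exact hi t le_rfl
      obtain ⟨l, hl', -⟩ := hA _ (Nat.le_add_right τ t) hlt hgate
      exact hne l (hl.symm.trans hl')
    · have hend : S.posAt (steps n) (a' j) ≤ k := by
        simpa only [posAt_shift, Nat.add_sub_cancel' hτsteps.le] using
          hj (steps n - τ) (by omega)
      have hstart := S.posAt_le 0 (a' j)
      rw [posAt_steps] at hend
      obtain ⟨l, hl'⟩ := exists_eq_c h.posAt_zero_c (x := a' j) (by omega)
      exact hne l hl'
  not_c t _ i j hr hl hi hj := by
    rw [rightMover_shift] at hr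
    rw [leftMover_shift] at hl
    have hi' := cConfined_of_shift (hτ i) hi
    exact hn.not_c (τ + t) ((h.lt_cFreeTime hi').trans_le (h.cFreeTime_le_steps i)) i j hr hl hi'
      (cConfined_of_shift (hτ j) hj)

theorem StartsWith.cFreeTime_shift_le (h : S.StartsWith k a c) {i : Fin k} {u : ℕ}
    (hτ : τ ≤ S.cFreeTime k (c i)) (hu : S.cFreeTime k (c i) ≤ τ + u) :
    (S.shift τ).cFreeTime k (c i) ≤ u := by
  have hfree : (S.shift τ).cFreeTime k (c i) ≤ S.cFreeTime k (c i) - τ := cFreeTime_le <| by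
    rw [posAt_shift, Nat.add_sub_cancel' hτ]
    exact h.posAt_cFreeTime_le i
  omega

theorem CDiscoversAZone.cFreeTime_lt_aFreeTime_shift (hA : S.CDiscoversAZone k c τ)
    (h : S.StartsWith k a c) (hn : S.NoConfined k a c) (hτ : ∀ l, τ < S.cFreeTime k (c l))
    (h' : (S.shift τ).StartsWith k a' c) (i j : Fin k) :
    (S.shift τ).cFreeTime k (c i) < (S.shift τ).aFreeTime k (a' j) := by
  obtain ⟨u, -, hfree, -, hgate⟩ := h'.aFreeTime_eq_succ j
  rw [gate_shift] at hgate
  rw [hfree, Nat.lt_succ_iff]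
  refine h.cFreeTime_shift_le (hτ i).le ?_
  rcases lt_or_ge (τ + u) (steps n) with hlt | hge
  · exact hA.cFreeTime_le_of_gate_le h hn hτ (Nat.le_add_right τ u) hlt hgate.le i
  · exact (h.cFreeTime_le_steps i).trans hge

theorem IsPerfect.exists_shift_cFreeTime_lt (hp : S.IsPerfect k a c) (h : S.StartsWith k a c)
    {r : Fin k} (hb : S.CBlockAfter k a c r) : ∃ (τ : ℕ) (a' : Fin k → Fin n),
      (S.shift τ).StartsWith k a' c ∧ (S.shift τ).IsPerfect k a' c ∧
        ∀ i j, (S.shift τ).cFreeTime k (c i) < (S.shift τ).aFreeTime k (a' j) := by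
  have hτ := hb.lt_c r le_rfl
  have hn := hp.noConfined
  have hA : S.CDiscoversAZone k c (S.aFreeTime k (a r)) := fun t =>
    hp.exists_cDiscovery_of_aFreeTime_le h hb
  choose a' ha' using fun i : Fin k =>
    S.exists_posAt_eq (t := S.aFreeTime k (a r)) (p := k - i) (by omega)
      ((Nat.sub_le _ _).trans h.le)
  have h' := h.shift hn hτ ha'
  have hsorted := hA.cFreeTime_lt_aFreeTime_shift h hn hτ h'
  refine ⟨_, a', h', isPerfect_of_numZoneSteps_le h' (hA.noConfined_shift h hn hτ ha') hsorted ?_,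
    hsorted⟩
  have hcount := hp.numZoneSteps_add h
  rw [hp.sum_numDouble hb] at hcount
  rw [numZoneSteps_shift h.le]
  omega

end restart

section sortedLiberation

variable {k : ℕ} {a c : Fin k → Fin n}

theorem shift_zero (S : AllowableSeq n) : S.shift (0 : ℕ) = S := by
  cases S
  simp [shift]

theorem shift_mirror (S : AllowableSeq n) (τ : ℤ) : S.mirror.shift τ = (S.shift τ).mirror :=
  rfl

theorem IsPerfect.exists_cBlockAfter (hp : S.IsPerfect k a c) (h : S.StartsWith k a c)
    {K i₀ : Fin k} (hK : IsTop K) (hlast : S.cFreeTime k (c K) < S.aFreeTime k (a K))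
    (hi₀ : S.aFreeTime k (a i₀) < S.cFreeTime k (c K)) : ∃ r, S.CBlockAfter k a c r := by
  have hmono := h.aFreeTime_strictMono hp.noConfined
  have hc (l : Fin k) : S.cFreeTime k (c l) ≤ S.cFreeTime k (c K) :=
    (h.cFreeTime_strictMono hp.noConfined).monotone (hK l)
  obtain ⟨r, hr, hmax⟩ := Finset.exists_max_image
    {i | S.aFreeTime k (a i) < S.cFreeTime k (c K)} id ⟨i₀, by simpa using hi₀⟩
  simp only [Finset.mem_filter_univ, id_eq] at hr hmax
  have hafter (j : Fin k) (hrj : r < j) : S.cFreeTime k (c K) < S.aFreeTime k (a j) :=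
    (not_lt.1 fun hj => (hmax j hj).not_gt hrj).lt_of_ne (h.aFreeTime_ne_cFreeTime j K).symm
  have hrK : r < K := hmono.lt_iff_lt.1 (hr.trans hlast)
  refine ⟨r, fun i hi l => (hmono.monotone hi).trans_lt ?_, fun l j hrj =>
    (hc l).trans_lt (hafter j hrj)⟩
  exact hp.aFreeTime_lt_of_separated h (by omega) hr (h.cFreeTime_le_steps K) hc hafter l

theorem IsPerfect.exists_shift_cFreeTime_lt_of_isTop (hp : S.IsPerfect k a c)
    (h : S.StartsWith k a c) {K : Fin k} (hK : IsTop K)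
    (hlast : S.cFreeTime k (c K) < S.aFreeTime k (a K)) : ∃ (τ : ℕ) (a' : Fin k → Fin n),
      (S.shift τ).StartsWith k a' c ∧ (S.shift τ).IsPerfect k a' c ∧
        ∀ i j, (S.shift τ).cFreeTime k (c i) < (S.shift τ).aFreeTime k (a' j) := by
  by_cases hsorted : ∀ i, S.cFreeTime k (c K) < S.aFreeTime k (a i)
  · refine ⟨0, a, ?_⟩
    rw [shift_zero]
    exact ⟨h, hp, fun i j =>
      ((h.cFreeTime_strictMono hp.noConfined).monotone (hK i)).trans_lt (hsorted j)⟩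
  · push Not at hsorted
    obtain ⟨i₀, hi₀⟩ := hsorted
    obtain ⟨r, hb⟩ :=
      hp.exists_cBlockAfter h hK hlast (hi₀.lt_of_ne (h.aFreeTime_ne_cFreeTime i₀ K))
    exact hp.exists_shift_cFreeTime_lt h hb

theorem IsPerfect.exists_shift_sorted (hp : S.IsPerfect k a c) (h : S.StartsWith k a c) :
    ∃ (τ : ℕ) (a' c' : Fin k → Fin n), (S.shift τ).StartsWith k a' c' ∧
      (S.shift τ).IsPerfect k a' c' ∧
        ((∀ i j, (S.shift τ).aFreeTime k (a' i) < (S.shift τ).cFreeTime k (c' j)) ∨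
          ∀ i j, (S.shift τ).cFreeTime k (c' i) < (S.shift τ).aFreeTime k (a' j)) := by
  rcases isEmpty_or_nonempty (Fin k) with hempty | hne
  · refine ⟨0, a, c, ?_⟩
    rw [shift_zero]
    exact ⟨h, hp, Or.inl isEmptyElim⟩
  obtain ⟨K, hK⟩ := Finite.exists_max (id : Fin k → Fin k)
  rcases lt_or_gt_of_ne (h.aFreeTime_ne_cFreeTime K K) with hlt | hlt
  · obtain ⟨τ, c', h', hp', hsorted⟩ :=
      (hp.mirror h.le).exists_shift_cFreeTime_lt_of_isTop h.mirror hK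
        (by rwa [aFreeTime_mirror, cFreeTime_mirror])
    rw [shift_mirror] at h' hp'
    simp only [shift_mirror, aFreeTime_mirror, cFreeTime_mirror] at hsorted
    exact ⟨τ, a, c', mirror_mirror (S.shift τ) ▸ h'.mirror,
      mirror_mirror (S.shift τ) ▸ hp'.mirror h.le, Or.inl hsorted⟩
  · obtain ⟨τ, a', h', hp', hsorted⟩ := hp.exists_shift_cFreeTime_lt_of_isTop h hK hlt
    exact ⟨τ, a', c, h', hp', Or.inr hsorted⟩

end sortedLiberation

/-! ### Comparison with half-periods -/

section realizes

variable {hp : HalfPeriod n} {k t : ℕ} {a c : Fin k → Fin n}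

/-- The half-period `hp` consists of the arrangements of `S` from time `0` on. -/
def Realizes (S : AllowableSeq n) (hp : HalfPeriod n) : Prop :=
  ∀ t ≤ steps n, ∀ x, hp.pos t x = S.posAt t x

theorem Realizes.moved_iff (H : S.Realizes hp) (ht : t < steps n) {z : Fin n} :
    hp.Moved t z ↔ z = S.rightMover t ∨ z = S.leftMover t := by
  rw [HalfPeriod.Moved, H (t + 1) ht, H t ht.le]
  have hr := S.posAt_succ_rightMover t
  have hl := S.posAt_leftMover t
  have hl' := S.posAt_succ_leftMover t
  rw [gate] at hr hl hl'
  refine ⟨fun hne => ?_, ?_⟩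
  · by_contra! hz
    exact hne (S.posAt_succ_of_ne hz.1 hz.2)
  · rintro (rfl | rfl) <;> omega

theorem Realizes.gateAt_iff (H : S.Realizes hp) (ht : t < steps n) {q : ℕ} :
    hp.GateAt t q ↔ q = S.gate t := by
  rw [HalfPeriod.GateAt]
  simp only [H (t + 1) ht, H t ht.le]
  refine ⟨?_, ?_⟩
  · rintro ⟨x, y, hx, -, hx', -⟩
    rw [(S.rightMover_eq_of_lt (t := t) (z := x) (by omega)).2, hx]
  · rintro rfl
    exact ⟨_, _, rfl, S.posAt_leftMover t, S.posAt_succ_rightMover t, S.posAt_succ_leftMover t⟩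

theorem Realizes.aZoneStep_iff (H : S.Realizes hp) (ht : t < steps n) :
    AZoneStep hp k t ↔ S.gate t ≤ k := by
  simp only [AZoneStep, H.gateAt_iff ht, exists_eq_right_right, S.one_le_gate t, true_and]

theorem Realizes.cZoneStep_iff (H : S.Realizes hp) (ht : t < steps n) :
    CZoneStep hp k t ↔ n - k ≤ S.gate t := by
  simp only [CZoneStep, H.gateAt_iff ht, exists_eq_right]

theorem Realizes.swapsAt_iff (H : S.Realizes hp) (ht : t < steps n) {x y : Fin n} :
    hp.SwapsAt t x y ↔ (x = S.rightMover t ∧ y = S.leftMover t) ∨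
      (x = S.leftMover t ∧ y = S.rightMover t) := by
  rw [HalfPeriod.SwapsAt, H.moved_iff ht, H.moved_iff ht]
  have := S.rightMover_ne_leftMover t
  grind

theorem Realizes.firstMove_right_iff (H : S.Realizes hp) (ht : t < steps n) {z : Fin n} {q : ℕ}
    (hz : S.posAt 0 z ≤ q) : FirstMove hp t z q (q + 1) ↔
      S.rightMover t = z ∧ S.gate t = q ∧ ∀ s ≤ t, S.posAt s z ≤ q := by
  rw [FirstMove, H (t + 1) ht, H t ht.le]
  constructor
  · rintro ⟨hpos, hpos', hfirst⟩
    obtain ⟨hmover, hgate⟩ := S.rightMover_eq_of_lt (t := t) (z := z) (by omega)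
    refine ⟨hmover, hgate.trans hpos, fun s hs => not_lt.1 fun hlt => ?_⟩
    obtain ⟨u, -, hus, rfl, rfl, -⟩ := S.exists_rightMover_crossing (Nat.zero_le s) hz hlt
    refine hfirst u (by omega) ?_
    rw [H u (by omega), H (u + 1) (by omega)]
    exact ⟨rfl, S.posAt_succ_rightMover u⟩
  · rintro ⟨rfl, rfl, hle⟩
    refine ⟨rfl, S.posAt_succ_rightMover t, fun s hs hmove => ?_⟩
    have := hle (s + 1) hs
    rw [H (s + 1) (by omega)] at hmove
    omega

theorem Realizes.firstMove_left_iff (H : S.Realizes hp) (ht : t < steps n) {z : Fin n} {q : ℕ}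
    (hz : q < S.posAt 0 z) : FirstMove hp t z (q + 1) q ↔
      S.leftMover t = z ∧ S.gate t = q ∧ ∀ s ≤ t, q < S.posAt s z := by
  rw [FirstMove, H (t + 1) ht, H t ht.le]
  constructor
  · rintro ⟨hpos, hpos', hfirst⟩
    obtain ⟨hmover, hgate⟩ := S.leftMover_eq_of_lt (t := t) (z := z) (by omega)
    refine ⟨hmover, hgate.trans hpos', fun s hs => not_le.1 fun hle => ?_⟩
    obtain ⟨u, -, hus, rfl, rfl, -⟩ := S.exists_leftMover_crossing (Nat.zero_le s) hz hle
    refine hfirst u (by omega) ?_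
    rw [H u (by omega), H (u + 1) (by omega)]
    exact ⟨S.posAt_leftMover u, S.posAt_succ_leftMover u⟩
  · rintro ⟨rfl, rfl, hlt⟩
    refine ⟨S.posAt_leftMover t, S.posAt_succ_leftMover t, fun s hs hmove => ?_⟩
    have := hlt (s + 1) hs
    rw [H (s + 1) (by omega)] at hmove
    omega

theorem exists_compulsoryGate_iff (hk : 2 * k < n) {j : ℕ} (hj : j < k) (P : ℕ → ℕ → Prop) :
    (∃ i, 1 ≤ i ∧ i ≤ j + 1 ∧ (P (k - i + 1) (k - i + 2) ∨ P (n - k + i - 1) (n - k + i))) ↔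
      ∃ q, CompulsoryGate n k j q ∧ P q (q + 1) := by
  constructor
  · rintro ⟨i, hi, hij, hP | hP⟩
    · exact ⟨k - i + 1, Or.inl (by omega), hP⟩
    · refine ⟨n - k + i - 1, Or.inr (by omega), ?_⟩
      rwa [Nat.sub_add_cancel (by omega)]
  · rintro ⟨q, hq | hq, hP⟩
    · refine ⟨k + 1 - q, by omega, by omega, Or.inl ?_⟩
      rwa [show k - (k + 1 - q) + 1 = q by omega, show k - (k + 1 - q) + 2 = q + 1 by omega]
    · refine ⟨q + 1 - (n - k), by omega, by omega, Or.inr ?_⟩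
      rwa [Nat.add_sub_cancel' (by omega), Nat.add_sub_cancel]

theorem Realizes.exists_firstMove_right_iff (H : S.Realizes hp) (h : S.StartsWith k a c)
    (ht : t < steps n) {j : Fin k} :
    (∃ q, CompulsoryGate n k j q ∧ FirstMove hp t (a j) q (q + 1)) ↔ S.ADiscovery k a j t := by
  have hk := h.two_mul_lt
  have hstart := h.posAt_zero_a j
  have hle {q : ℕ} (hq : CompulsoryGate n k j q) : S.posAt 0 (a j) ≤ q := by
    rw [CompulsoryGate] at hq
    omega
  constructor
  · rintro ⟨q, hq, hmove⟩
    obtain ⟨hmover, rfl, hfirst⟩ := (H.firstMove_right_iff ht (hle hq)).1 hmove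
    exact ⟨hmover, hq, hfirst⟩
  · rintro ⟨hmover, hq, hfirst⟩
    exact ⟨_, hq, (H.firstMove_right_iff ht (hle hq)).2 ⟨hmover, rfl, hfirst⟩⟩

theorem Realizes.exists_firstMove_left_iff (H : S.Realizes hp) (h : S.StartsWith k a c)
    (ht : t < steps n) {j : Fin k} :
    (∃ q, CompulsoryGate n k j q ∧ FirstMove hp t (c j) (q + 1) q) ↔ S.CDiscovery k c j t := by
  have hk := h.two_mul_lt
  have hstart := h.posAt_zero_c j
  have hlt {q : ℕ} (hq : CompulsoryGate n k j q) : q < S.posAt 0 (c j) := by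
    rw [CompulsoryGate] at hq
    omega
  constructor
  · rintro ⟨q, hq, hmove⟩
    obtain ⟨hmover, rfl, hfirst⟩ := (H.firstMove_left_iff ht (hlt hq)).1 hmove
    exact ⟨hmover, hq, hfirst⟩
  · rintro ⟨hmover, hq, hfirst⟩
    exact ⟨_, hq, (H.firstMove_left_iff ht (hlt hq)).2 ⟨hmover, rfl, hfirst⟩⟩

theorem Realizes.discoveryFor_iff (H : S.Realizes hp) (h : S.StartsWith k a c)
    (ht : t < steps n) {z : Fin n} : DiscoveryFor hp k a c t z ↔
      (∃ j, z = a j ∧ S.ADiscovery k a j t) ∨ ∃ j, z = c j ∧ S.CDiscovery k c j t := by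
  have hgates : DiscoveryFor hp k a c t z ↔
      (∃ j : Fin k, z = a j ∧ ∃ i, 1 ≤ i ∧ i ≤ (j : ℕ) + 1 ∧
        (FirstMove hp t z (k - i + 1) (k - i + 2) ∨
          FirstMove hp t z (n - k + i - 1) (n - k + i))) ∨
      ∃ j : Fin k, z = c j ∧ ∃ i, 1 ≤ i ∧ i ≤ (j : ℕ) + 1 ∧
        (FirstMove hp t z (k - i + 2) (k - i + 1) ∨
          FirstMove hp t z (n - k + i) (n - k + i - 1)) := by
    rw [DiscoveryFor]
    constructor
    · rintro ⟨i, hi, ⟨j, hz, hij⟩ | ⟨j, hz, hij⟩⟩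
      · exact Or.inl ⟨j, hz, i, hi, hij⟩
      · exact Or.inr ⟨j, hz, i, hi, hij⟩
    · rintro (⟨j, hz, i, hi, hij⟩ | ⟨j, hz, i, hi, hij⟩)
      · exact ⟨i, hi, Or.inl ⟨j, hz, hij⟩⟩
      · exact ⟨i, hi, Or.inr ⟨j, hz, hij⟩⟩
  rw [hgates]
  refine or_congr (exists_congr fun j => and_congr_right ?_)
    (exists_congr fun j => and_congr_right ?_)
  · rintro rfl
    rw [exists_compulsoryGate_iff h.two_mul_lt j.2, H.exists_firstMove_right_iff h ht]
  · rintro rfl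
    rw [exists_compulsoryGate_iff h.two_mul_lt j.2 fun p q => FirstMove hp t (c j) q p,
      H.exists_firstMove_left_iff h ht]

theorem Realizes.doubleDiscoveryAt_iff (H : S.Realizes hp) (h : S.StartsWith k a c)
    (ht : t < steps n) : DoubleDiscoveryAt hp k a c t ↔
      (∃ j, S.ADiscovery k a j t) ∧ ∃ j, S.CDiscovery k c j t := by
  have hne := S.rightMover_ne_leftMover t
  have hr : DiscoveryFor hp k a c t (S.rightMover t) ↔ ∃ j, S.ADiscovery k a j t := by
    rw [H.discoveryFor_iff h ht]
    exact ⟨fun hd => hd.elim (fun ⟨j, _, hj⟩ => ⟨j, hj⟩)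
      fun ⟨j, hz, hj⟩ => absurd (hz.trans hj.1.symm) hne, fun ⟨j, hj⟩ => Or.inl ⟨j, hj.1, hj⟩⟩
  have hl : DiscoveryFor hp k a c t (S.leftMover t) ↔ ∃ j, S.CDiscovery k c j t := by
    rw [H.discoveryFor_iff h ht]
    exact ⟨fun hd => hd.elim (fun ⟨j, hz, hj⟩ => absurd (hj.1.trans hz.symm) hne)
      fun ⟨j, _, hj⟩ => ⟨j, hj⟩, fun ⟨j, hj⟩ => Or.inr ⟨j, hj.1, hj⟩⟩
  rw [← hr, ← hl, DoubleDiscoveryAt]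
  simp only [H.swapsAt_iff ht]
  grind

theorem Realizes.confinedAt_iff (H : S.Realizes hp) (ht : t ≤ steps n) {z : Fin n} :
    ConfinedAt hp k a c t z ↔
      ((∃ i, z = a i) ∧ S.AConfined k t z) ∨ ((∃ i, z = c i) ∧ S.CConfined k t z) := by
  refine or_congr (and_congr_right fun _ => ?_) (and_congr_right fun _ => ?_) <;>
  · refine forall₂_congr fun s hs => ?_
    rw [H s (hs.trans ht)]

theorem Realizes.noConfinedSteps_iff_movers (H : S.Realizes hp) :
    NoConfinedSteps hp k a c ↔ ∀ t < steps n,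
      ¬ (ConfinedAt hp k a c t (S.rightMover t) ∧ ConfinedAt hp k a c t (S.leftMover t)) := by
  refine forall₂_congr fun t ht => ?_
  simp only [H.swapsAt_iff ht]
  constructor
  · exact fun hn => hn _ _ (Or.inl ⟨rfl, rfl⟩)
  · rintro hn x y (⟨rfl, rfl⟩ | ⟨rfl, rfl⟩)
    · exact hn
    · exact fun hxy => hn hxy.symm

theorem Realizes.noConfinedSteps_iff (H : S.Realizes hp) (h : S.StartsWith k a c) :
    NoConfinedSteps hp k a c ↔ S.NoConfined k a c := by
  have hk := h.two_mul_lt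
  rw [H.noConfinedSteps_iff_movers]
  constructor
  · refine fun hn => ⟨fun t ht i j hr hl hi hj => hn t ht ?_,
      fun t ht i j hr hl hi hj => hn t ht ?_⟩ <;>
      rw [hr, hl, H.confinedAt_iff ht.le, H.confinedAt_iff ht.le]
    · exact ⟨Or.inl ⟨⟨i, rfl⟩, hi⟩, Or.inl ⟨⟨j, rfl⟩, hj⟩⟩
    · exact ⟨Or.inr ⟨⟨i, rfl⟩, hi⟩, Or.inr ⟨⟨j, rfl⟩, hj⟩⟩
  · rintro hn t ht ⟨hr, hl⟩
    have hpos := S.posAt_leftMover t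
    rw [gate] at hpos
    rcases (H.confinedAt_iff ht.le).1 hr with ⟨⟨i, hi⟩, hr⟩ | ⟨⟨i, hi⟩, hr⟩ <;>
      rcases (H.confinedAt_iff ht.le).1 hl with ⟨⟨j, hj⟩, hl⟩ | ⟨⟨j, hj⟩, hl⟩
    · exact hn.not_a t ht i j hi hj (hi ▸ hr) (hj ▸ hl)
    · have := hr t le_rfl
      have := hl t le_rfl
      omega
    · have := hr t le_rfl
      have := hl t le_rfl
      omega
    · exact hn.not_c t ht i j hi hj (hi ▸ hr) (hj ▸ hl)

theorem Realizes.aFreedAt_iff (H : S.Realizes hp) (h : S.StartsWith k a c) {i : Fin k} {u : ℕ} :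
    AFreedAt hp k (a i) u ↔ u = S.aFreeTime k (a i) := by
  have hsteps := h.aFreeTime_le_steps i
  have hfree := h.lt_posAt_aFreeTime i
  constructor
  · rintro ⟨hu, hbefore⟩
    have hle : u ≤ S.aFreeTime k (a i) := not_lt.1 fun hlt => by
      have := hbefore _ hlt
      rw [H _ hsteps] at this
      omega
    rw [H u (hle.trans hsteps)] at hu
    exact hle.antisymm (aFreeTime_le hu)
  · rintro rfl
    refine ⟨by rwa [H _ hsteps], fun s hs => ?_⟩
    rw [H s (hs.le.trans hsteps)]
    exact aConfined_of_lt_aFreeTime hs s le_rfl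

theorem Realizes.cFreedAt_iff (H : S.Realizes hp) (h : S.StartsWith k a c) {i : Fin k} {u : ℕ} :
    CFreedAt hp k (c i) u ↔ u = S.cFreeTime k (c i) := by
  have hsteps := h.cFreeTime_le_steps i
  have hfree := h.posAt_cFreeTime_le i
  constructor
  · rintro ⟨hu, hbefore⟩
    have hle : u ≤ S.cFreeTime k (c i) := not_lt.1 fun hlt => by
      have := hbefore _ hlt
      rw [H _ hsteps] at this
      omega
    rw [H u (hle.trans hsteps)] at hu
    exact hle.antisymm (cFreeTime_le hu)
  · rintro rfl
    refine ⟨by rwa [H _ hsteps], fun s hs => ?_⟩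
    rw [H s (hs.le.trans hsteps)]
    exact cConfined_of_lt_cFreeTime hs s le_rfl

theorem Realizes.tCardA_eq (H : S.Realizes hp) (h : S.StartsWith k a c) (i : Fin k) :
    TCardA hp k a c i = S.numCAfter k a c i := by
  simp only [TCardA, numCAfter, H.aFreedAt_iff h, H.cFreedAt_iff h, exists_and_left,
    exists_eq_left]

theorem Realizes.tCardC_eq (H : S.Realizes hp) (h : S.StartsWith k a c) (i : Fin k) :
    TCardC hp k a c i = S.numAAfter k a c i := by
  simp only [TCardC, numAAfter, H.aFreedAt_iff h, H.cFreedAt_iff h, exists_and_left,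
    exists_eq_left]

theorem Realizes.ncard_doubleDiscovery_cZone (H : S.Realizes hp) (h : S.StartsWith k a c)
    (i : Fin k) : {t | t < steps n ∧ CZoneStep hp k t ∧ hp.Moved t (a i) ∧
      DoubleDiscoveryAt hp k a c t}.ncard = S.numDoubleC k a c i := by
  refine stepCount_congr fun t ht => ?_
  rw [H.cZoneStep_iff ht, H.moved_iff ht, H.doubleDiscoveryAt_iff h ht]
  refine and_congr_right fun _ => ⟨?_, fun ⟨hi, hl⟩ => ⟨Or.inl hi.1.symm, ⟨i, hi⟩, hl⟩⟩
  rintro ⟨hmover | hmover, ⟨j, hj⟩, l, hl⟩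
  · obtain rfl := h.a_injective (hmover.trans hj.1)
    exact ⟨hj, l, hl⟩
  · exact absurd (hmover.trans hl.1) (h.a_ne_c i l)

theorem Realizes.ncard_doubleDiscovery_aZone (H : S.Realizes hp) (h : S.StartsWith k a c)
    (i : Fin k) : {t | t < steps n ∧ AZoneStep hp k t ∧ hp.Moved t (c i) ∧
      DoubleDiscoveryAt hp k a c t}.ncard = S.numDoubleA k a c i := by
  refine stepCount_congr fun t ht => ?_
  rw [H.aZoneStep_iff ht, H.moved_iff ht, H.doubleDiscoveryAt_iff h ht]
  refine and_congr_right fun _ => ⟨?_, fun ⟨hi, hj⟩ => ⟨Or.inr hi.1.symm, hj, i, hi⟩⟩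
  rintro ⟨hmover | hmover, ⟨j, hj⟩, l, hl⟩
  · exact absurd (hmover.trans hj.1).symm (h.a_ne_c j i)
  · obtain rfl := h.c_injective (hmover.trans hl.1)
    exact ⟨hl, j, hj⟩

theorem Realizes.exists_moved_discoveryFor_iff (H : S.Realizes hp) (h : S.StartsWith k a c)
    (ht : t < steps n) : (∃ z, hp.Moved t z ∧ DiscoveryFor hp k a c t z) ↔
      (∃ j, S.ADiscovery k a j t) ∨ ∃ j, S.CDiscovery k c j t := by
  simp only [H.moved_iff ht, H.discoveryFor_iff h ht]
  constructor
  · rintro ⟨z, -, ⟨j, -, hj⟩ | ⟨j, -, hj⟩⟩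
    · exact Or.inl ⟨j, hj⟩
    · exact Or.inr ⟨j, hj⟩
  · rintro (⟨j, hj⟩ | ⟨j, hj⟩)
    · exact ⟨a j, Or.inl hj.1.symm, Or.inl ⟨j, rfl, hj⟩⟩
    · exact ⟨c j, Or.inr hj.1.symm, Or.inr ⟨j, rfl, hj⟩⟩

theorem Realizes.perfectHalfPeriod_iff (H : S.Realizes hp) (h : S.StartsWith k a c) :
    PerfectHalfPeriod hp k a c ↔ S.IsPerfect k a c := by
  have hdiscovery : (∀ t, t < steps n → (AZoneStep hp k t ∨ CZoneStep hp k t) →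
      ∃ z, hp.Moved t z ∧ DiscoveryFor hp k a c t z) ↔ ∀ t < steps n, S.ZoneStep k t →
        (∃ j, S.ADiscovery k a j t) ∨ ∃ j, S.CDiscovery k c j t := by
    refine forall₂_congr fun t ht => ?_
    rw [H.aZoneStep_iff ht, H.cZoneStep_iff ht, H.exists_moved_discoveryFor_iff h ht, ZoneStep]
  simp only [PerfectHalfPeriod, H.noConfinedSteps_iff h, hdiscovery,
    H.ncard_doubleDiscovery_cZone h, H.ncard_doubleDiscovery_aZone h, H.tCardA_eq h,
    H.tCardC_eq h]
  exact ⟨fun ⟨hn, hd, hC, hA⟩ => ⟨hn, hd, hC, hA⟩, fun ⟨hn, hd, hC, hA⟩ => ⟨hn, hd, hC, hA⟩⟩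

theorem Realizes.startsWith {b : Fin (n - 2 * k) → Fin n} (H : S.Realizes hp) (hk : 2 * k < n)
    (hstart : StandardStart hp k a b c) : S.StartsWith k a c where
  two_mul_lt := hk
  posAt_zero_a i := by rw [← H 0 (Nat.zero_le _), hstart.2.1]
  posAt_zero_c i := by rw [← H 0 (Nat.zero_le _), hstart.2.2.2]

theorem Realizes.exists_standardStart (H : S.Realizes hp) (h : S.StartsWith k a c) :
    ∃ b, StandardStart hp k a b c := by
  have hk := h.two_mul_lt
  choose b hb using fun i : Fin (n - 2 * k) =>
    S.exists_posAt_eq (t := 0) (p := k + i + 1) (by omega) (by omega)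
  have hab (i j) : a i ≠ b j := fun hij => by
    have hi := h.posAt_zero_a i
    rw [hij, hb] at hi
    omega
  have hbc (i j) : b i ≠ c j := fun hij => by
    have hi := hb i
    rw [hij, h.posAt_zero_c] at hi
    omega
  have hb_inj : Function.Injective b := fun i j hij => Fin.ext <| by
    have hi := hb i
    rw [hij, hb] at hi
    omega
  have H₀ := H 0 (Nat.zero_le _)
  refine ⟨b, h.a_injective.sumElim (hb_inj.sumElim h.c_injective hbc) ?_, ?_, ?_, ?_⟩
  · rintro i (j | j)
    · exact hab i j
    · exact h.a_ne_c i j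
  · exact fun i => (H₀ _).trans (h.posAt_zero_a i)
  · exact fun i => (H₀ _).trans (hb i)
  · exact fun i => (H₀ _).trans (h.posAt_zero_c i)

/-- The half-period of `S` that starts at time `0`. -/
def halfPeriod (S : AllowableSeq n) : HalfPeriod n where
  pos := S.posAt
  pos_mem t _ x := ⟨S.one_le_posAt t x, S.posAt_le t x⟩
  pos_inj t _ := S.posAt_injective t
  step t _ := S.exists_swap t
  reverse := S.posAt_steps

theorem realizes_halfPeriod (S : AllowableSeq n) : S.Realizes S.halfPeriod :=
  fun _ _ _ => rfl

theorem Contains.exists_realizes_shift (hmem : S.Contains hp) :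
    ∃ t₀, (S.shift t₀).Realizes hp :=
  hmem

theorem contains_halfPeriod_shift (S : AllowableSeq n) (t₀ : ℤ) (τ : ℕ) :
    S.Contains ((S.shift t₀).shift τ).halfPeriod :=
  ⟨t₀ + τ, fun t _ x => by rw [add_assoc]; rfl⟩

end realizes

end AllowableSeq

/-- Let `k < n/2` and suppose `Π` is a perfect `n`-half-period of an
allowable sequence `𝚷`, with initial arrangement `(a_k, …, a_1, b_1, …, b_m, c_1, …, c_k)`,
`m = n - 2k`. Then `𝚷` contains a perfect `n`-half-period `Π'` with initial arrangement
`(a'_k, …, a'_1, b'_1, …, b'_m, c'_1, …, c'_k)` whose liberation sequence is either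
`a'_1 a'_2 … a'_k c'_1 c'_2 … c'_k` or `c'_1 c'_2 … c'_k a'_1 a'_2 … a'_k`. -/
theorem exists_perfect_halfPeriod_sorted_liberation (n k : ℕ) (hk : 2 * k < n)
    (S : AllowableSeq n) (hp : HalfPeriod n) (hmem : S.Contains hp)
    (a : Fin k → Fin n) (b : Fin (n - 2 * k) → Fin n) (c : Fin k → Fin n)
    (hstart : StandardStart hp k a b c)
    (hperf : PerfectHalfPeriod hp k a c) :
    ∃ (hp' : HalfPeriod n) (a' : Fin k → Fin n) (b' : Fin (n - 2 * k) → Fin n)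
      (c' : Fin k → Fin n),
      S.Contains hp' ∧ StandardStart hp' k a' b' c' ∧ PerfectHalfPeriod hp' k a' c' ∧
      (((∀ i j : Fin k, i < j → ∀ u v,
            AFreedAt hp' k (a' i) u → AFreedAt hp' k (a' j) v → u < v) ∧
        (∀ i j : Fin k, i < j → ∀ u v,
            CFreedAt hp' k (c' i) u → CFreedAt hp' k (c' j) v → u < v) ∧
        (∀ i j : Fin k, ∀ u v,
            AFreedAt hp' k (a' i) u → CFreedAt hp' k (c' j) v → u < v)) ∨
       ((∀ i j : Fin k, i < j → ∀ u v,
            AFreedAt hp' k (a' i) u → AFreedAt hp' k (a' j) v → u < v) ∧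
        (∀ i j : Fin k, i < j → ∀ u v,
            CFreedAt hp' k (c' i) u → CFreedAt hp' k (c' j) v → u < v) ∧
        (∀ i j : Fin k, ∀ u v,
            CFreedAt hp' k (c' i) u → AFreedAt hp' k (a' j) v → u < v))) := by
  obtain ⟨t₀, H⟩ := hmem.exists_realizes_shift
  have h := H.startsWith hk hstart
  obtain ⟨τ, a', c', h', hperf', hsorted⟩ :=
    ((H.perfectHalfPeriod_iff h).1 hperf).exists_shift_sorted h
  have H' := ((S.shift t₀).shift τ).realizes_halfPeriod
  obtain ⟨b', hstart'⟩ := H'.exists_standardStart h'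
  have ha := h'.aFreeTime_strictMono hperf'.noConfined
  have hc := h'.cFreeTime_strictMono hperf'.noConfined
  refine ⟨_, a', b', c', S.contains_halfPeriod_shift t₀ τ, hstart',
    (H'.perfectHalfPeriod_iff h').2 hperf', ?_⟩
  simp only [H'.aFreedAt_iff h', H'.cFreedAt_iff h']
  refine hsorted.imp (fun hac => ⟨?_, ?_, ?_⟩) fun hca => ⟨?_, ?_, ?_⟩
  · rintro i j hij _ _ rfl rfl; exact ha hij
  · rintro i j hij _ _ rfl rfl; exact hc hij
  · rintro i j _ _ rfl rfl; exact hac i j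
  · rintro i j hij _ _ rfl rfl; exact ha hij
  · rintro i j hij _ _ rfl rfl; exact hc hij
  · rintro i j _ _ rfl rfl; exact hca i j
end

section
/- Let π_{a_10} be the arrangement of Π immediately after the swap in which a_10 enters the 13-center. Then in π_{a_10}: positions 1–10 are occupied by the elements of B, positions 21–30 by the elements of C, position 14 by a_10, positions 15, 16, 17 by a_7, a_8, a_9 in some order, positions 11, 12, 13 respectively by elements a_u with u ≤ 4, u ≤ 5, u ≤ 6, and positions 18, 19, 20 respectively by elements a_u with u ≤ 6, u ≤ 5, u ≤ 4. -/
/-- `hp` is a 3-decomposable `30`-half-period, witnessed by the labeling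
`A = {a 0, …, a 9}`, `B = {b 0, …, b 9}`, `C = {c 0, …, c 9}` (the element with
1-indexed subscript `j` is `a (j-1)`, etc.): the initial arrangement is
`(a_10, a_9, …, a_1, b_1, …, b_10, c_1, …, c_10)`, every transposition between `A`
and `B` occurs before every transposition between `C` and `A ∪ B`, and every
transposition between `A` and `C` occurs before every transposition between `B`
and `C`. -/
def IsThreeDecompLabeling30 (hp : HalfPeriod 30) (a b c : Fin 10 → Fin 30) : Prop :=
  Function.Injective (Sum.elim a (Sum.elim b c)) ∧
  (∀ i : Fin 10, hp.pos 0 (a i) = 10 - (i : ℕ)) ∧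
  (∀ i : Fin 10, hp.pos 0 (b i) = 11 + (i : ℕ)) ∧
  (∀ i : Fin 10, hp.pos 0 (c i) = 21 + (i : ℕ)) ∧
  (∀ s t, s < HalfPeriod.steps 30 → t < HalfPeriod.steps 30 →
    (∃ i j, hp.SwapsAt s (a i) (b j)) →
    (∃ i x, ((∃ j, x = a j) ∨ (∃ j, x = b j)) ∧ hp.SwapsAt t (c i) x) → s < t) ∧
  (∀ s t, s < HalfPeriod.steps 30 → t < HalfPeriod.steps 30 →
    (∃ i j, hp.SwapsAt s (a i) (c j)) →
    (∃ i j, hp.SwapsAt t (b i) (c j)) → s < t)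

/-- `x` and `y` belong to the same one of the three classes `A`, `B`, `C`. -/
def SameClass (a b c : Fin 10 → Fin 30) (x y : Fin 30) : Prop :=
  (∃ i j, x = a i ∧ y = a j) ∨ (∃ i j, x = b i ∧ y = b j) ∨ (∃ i j, x = c i ∧ y = c j)
/-- Position `p` lies in the `k`-center (positions `k+1, …, 30-k`) of a `30`-half-period. -/
def InCenter (k p : ℕ) : Prop := k + 1 ≤ p ∧ p ≤ 30 - k

/-- Step `t` is the (first) swap in which element `x` enters the `k`-center. -/
def EntersCenterAt (hp : HalfPeriod 30) (k : ℕ) (x : Fin 30) (t : ℕ) : Prop :=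
  t < HalfPeriod.steps 30 ∧ InCenter k (hp.pos (t + 1) x) ∧ ¬ InCenter k (hp.pos t x) ∧
    ∀ s < t, ¬ (InCenter k (hp.pos (s + 1) x) ∧ ¬ InCenter k (hp.pos s x))

/-- Step `t` is the (last) swap in which element `x` leaves the `k`-center. -/
def LeavesCenterAt (hp : HalfPeriod 30) (k : ℕ) (x : Fin 30) (t : ℕ) : Prop :=
  t < HalfPeriod.steps 30 ∧ InCenter k (hp.pos t x) ∧ ¬ InCenter k (hp.pos (t + 1) x) ∧
    ∀ s, t < s → s < HalfPeriod.steps 30 →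
      ¬ (InCenter k (hp.pos s x) ∧ ¬ InCenter k (hp.pos (s + 1) x))

/-!
Join two elements by an edge when their transposition takes place in the `k`-center, so that there
are `435 - N_{≤ k}` edges. An element moves within the `k`-center only by passing a neighbour;
hence its number of neighbours on the left, minus its position clamped to the `k`-center, does not
depend on time. Comparing with the reversed arrangement, an element among the first `k + 1` has
exactly `n - 1 - 2 * k` more neighbours on its right than on its left.

Let `T` be a time at which the classes are arranged as `B`, `A`, `C`. The classes `A`, `B`, `C` then
occupy the first third of the arrangement at the times `0`, `T` and the end, and summing degrees
over these three sets bounds the number of edges from above. For `k = 10` and `k = 13` the given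
values of `N_{≤ k}` make this bound an equality, which forces many pairs inside `A` to be edges. As
`a_10` is the first element, the edges of the `10`-center trap `A` in the `10`-center around it,
and those of the `13`-center trap `a_7`, `a_8`, `a_9` at the positions `15`, `16`, `17`. The
bounds on the subscripts at the remaining positions come from comparing, for each element of `A`,
the time-independent quantity with its values at the start and at the end.
-/

namespace HalfPeriod

open scoped Finset

variable {n : ℕ} {hp : HalfPeriod n} {k l m s t : ℕ} {u v x y z : Fin n}

theorem exists_pos_eq (ht : t ≤ steps n) {i : ℕ} (hi : i ∈ Finset.Icc 1 n) :
    ∃ x, hp.pos t x = i :=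
  have hmaps : ∀ x ∈ Finset.univ, hp.pos t x ∈ Finset.Icc 1 n :=
    fun x _ => Finset.mem_Icc.2 (hp.pos_mem t ht x)
  have ⟨x, _, hx⟩ := Finset.surj_on_of_inj_on_of_card_le (fun x _ => hp.pos t x) hmaps
    (fun _ _ _ _ h => hp.pos_inj t ht h) (by simp) i hi
  ⟨x, hx.symm⟩

theorem card_filter_pos_mem (ht : t ≤ steps n) {S : Finset ℕ} (hS : S ⊆ Finset.Icc 1 n) :
    #{x | hp.pos t x ∈ S} = #S := by
  refine Finset.card_nbij (hp.pos t) (fun x hx => by simpa using hx)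
    (hp.pos_inj t ht).injOn fun i hi => ?_
  obtain ⟨x, rfl⟩ := hp.exists_pos_eq ht (hS hi)
  exact ⟨x, by simpa using hi, rfl⟩

theorem pos_steps_lt_pos_steps :
    hp.pos (steps n) x < hp.pos (steps n) y ↔ hp.pos 0 y < hp.pos 0 x := by
  have hx := hp.reverse x
  have hy := hp.reverse y
  have hx0 := hp.pos_mem 0 (Nat.zero_le _) x
  have hy0 := hp.pos_mem 0 (Nat.zero_le _) y
  unfold steps
  omega

/-- Step `t` moves `x` one position to the right, past its neighbour `y`. -/
structure Passes (hp : HalfPeriod n) (t : ℕ) (x y : Fin n) : Prop where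
  pos_right : hp.pos t y = hp.pos t x + 1
  pos_succ_left : hp.pos (t + 1) x = hp.pos t x + 1
  pos_succ_right : hp.pos (t + 1) y = hp.pos t x
  pos_succ_of_ne : ∀ z, z ≠ x → z ≠ y → hp.pos (t + 1) z = hp.pos t z

theorem exists_passes (ht : t < steps n) : ∃ x y, hp.Passes t x y :=
  have ⟨x, y, h₁, h₂, h₃, h₄⟩ := hp.step t ht
  ⟨x, y, h₁, h₂, h₃, h₄⟩

theorem Passes.ne (h : hp.Passes t x y) : x ≠ y := by
  rintro rfl
  have := h.pos_right
  omega

theorem Passes.pos_succ_lt_iff (h : hp.Passes t u v) (ht : t < steps n) (hne : s(x, y) ≠ s(u, v)) :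
    hp.pos (t + 1) x < hp.pos (t + 1) y ↔ hp.pos t x < hp.pos t y := by
  have hinj := hp.pos_inj t ht.le
  obtain ⟨h₁, h₂, h₃, h₄⟩ := h
  rw [ne_eq, Sym2.eq_iff] at hne
  grind [Function.Injective]

theorem Passes.eq_of_passes (h : hp.Passes t x y) (h' : hp.Passes t u v) (ht : t < steps n) :
    x = u ∧ y = v := by
  have hinj := hp.pos_inj t ht.le
  obtain ⟨h₁, h₂, h₃, h₄⟩ := h
  obtain ⟨h₁', h₂', h₃', h₄'⟩ := h'
  grind [Function.Injective]

theorem pos_succ_lt_of_not_passes (ht : t < steps n) (hxy : hp.pos t x < hp.pos t y)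
    (hnot : ¬ hp.Passes t x y) : hp.pos (t + 1) x < hp.pos (t + 1) y := by
  obtain ⟨u, v, h⟩ := hp.exists_passes ht
  refine (h.pos_succ_lt_iff ht fun he => ?_).2 hxy
  rcases Sym2.eq_iff.1 he with ⟨rfl, rfl⟩ | ⟨rfl, rfl⟩
  · exact hnot h
  · have := h.pos_right
    omega

theorem exists_passes_of_pos_zero_lt (hxy : hp.pos 0 x < hp.pos 0 y) :
    ∃ t < steps n, hp.Passes t x y := by
  by_contra! hnot
  have hlt : ∀ t ≤ steps n, hp.pos t x < hp.pos t y := fun t => by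
    induction t with
    | zero => exact fun _ => hxy
    | succ t ih => exact fun ht => pos_succ_lt_of_not_passes ht (ih (by omega)) (hnot t ht)
  exact (hlt _ le_rfl).asymm (pos_steps_lt_pos_steps.2 hxy)

theorem exists_passes_of_ne (hxy : x ≠ y) :
    ∃ t < steps n, hp.Passes t x y ∨ hp.Passes t y x := by
  rcases lt_or_gt_of_ne ((hp.pos_inj 0 (Nat.zero_le _)).ne hxy) with h | h
  · exact (exists_passes_of_pos_zero_lt h).imp fun _ => And.imp_right Or.inl
  · exact (exists_passes_of_pos_zero_lt h).imp fun _ => And.imp_right Or.inr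

/- Every one of the `n.choose 2` pairs is swapped at one of the `n.choose 2` steps, so no pair is
swapped twice. -/
theorem Passes.time_unique (h : hp.Passes s x y) (h' : hp.Passes t u v) (hs : s < steps n)
    (ht : t < steps n) (he : s(x, y) = s(u, v)) : s = t := by
  choose L R hLR using fun t : Fin (steps n) => hp.exists_passes t.2
  let pair (t : Fin (steps n)) : {e : Sym2 (Fin n) // ¬ e.IsDiag} := ⟨s(L t, R t), (hLR t).ne⟩
  have hsurj : Function.Surjective pair := by
    rintro ⟨⟨x, y⟩, hxy⟩
    obtain ⟨t, ht, h | h⟩ := hp.exists_passes_of_ne (x := x) (y := y) hxy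
    · obtain ⟨hL, hR⟩ := (hLR ⟨t, ht⟩).eq_of_passes h ht
      exact ⟨⟨t, ht⟩, Subtype.ext (by simp [pair, hL, hR])⟩
    · obtain ⟨hL, hR⟩ := (hLR ⟨t, ht⟩).eq_of_passes h ht
      exact ⟨⟨t, ht⟩, Subtype.ext (by simp [pair, hL, hR, Sym2.eq_swap])⟩
  have hcard : Fintype.card (Fin (steps n)) = Fintype.card {e : Sym2 (Fin n) // ¬ e.IsDiag} := by
    rw [Sym2.card_subtype_not_diag, Fintype.card_fin, Fintype.card_fin, Nat.choose_two_right, steps]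
  have hinj := ((Fintype.bijective_iff_surjective_and_card pair).2 ⟨hsurj, hcard⟩).injective
  have hpair : pair ⟨s, hs⟩ = pair ⟨t, ht⟩ := by
    obtain ⟨hLs, hRs⟩ := (hLR ⟨s, hs⟩).eq_of_passes h hs
    obtain ⟨hLt, hRt⟩ := (hLR ⟨t, ht⟩).eq_of_passes h' ht
    exact Subtype.ext (by simpa only [pair, hLs, hRs, hLt, hRt] using he)
  exact congrArg Fin.val (hinj hpair)

theorem Passes.pos_zero_lt (h : hp.Passes t x y) (ht : t < steps n) :
    hp.pos 0 x < hp.pos 0 y := by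
  by_contra! hle
  have hlt := lt_of_le_of_ne hle ((hp.pos_inj 0 (Nat.zero_le _)).ne h.ne.symm)
  obtain ⟨s, hs, h'⟩ := exists_passes_of_pos_zero_lt hlt
  obtain rfl := h'.time_unique h hs ht Sym2.eq_swap
  exact h.ne (h'.eq_of_passes h hs).2

theorem Passes.pos_lt_iff (h : hp.Passes t x y) (ht : t < steps n) (hs : s ≤ steps n) :
    hp.pos s x < hp.pos s y ↔ s ≤ t := by
  have hbefore : ∀ s ≤ t, hp.pos s x < hp.pos s y := fun s => by
    induction s with
    | zero => exact fun _ => h.pos_zero_lt ht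
    | succ s ih =>
      refine fun hst => pos_succ_lt_of_not_passes (by omega) (ih (by omega)) fun h' => ?_
      have := h'.time_unique h (by omega) ht rfl
      omega
  have hafter : t + 1 ≤ s → hp.pos s y < hp.pos s x := fun hts => by
    induction s, hts using Nat.le_induction with
    | base => rw [h.pos_succ_left, h.pos_succ_right]; omega
    | succ s _ ih =>
      exact pos_succ_lt_of_not_passes hs (ih (by omega)) fun h' =>
        (h'.pos_zero_lt hs).asymm (h.pos_zero_lt ht)
  exact ⟨fun hlt => by_contra fun hst => hlt.asymm (hafter (by omega)), hbefore s⟩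

/-- The graph on the elements whose edges are the pairs transposed inside the `k`-center, that is,
by an `i`-transposition with `k < i < n - k`. -/
def centerGraph (hp : HalfPeriod n) (k : ℕ) : SimpleGraph (Fin n) where
  Adj x y := ∃ t < steps n, ∃ u v, hp.Passes t u v ∧ s(x, y) = s(u, v) ∧
    k < hp.pos t u ∧ hp.pos t u < n - k
  symm := ⟨fun _ _ ⟨t, ht, u, v, h, he, hc⟩ => ⟨t, ht, u, v, h, Sym2.eq_swap.trans he, hc⟩⟩
  loopless := ⟨fun _ ⟨_, _, _, _, h, he, _⟩ => h.ne (by rw [Sym2.eq_iff] at he; grind)⟩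

noncomputable instance (hp : HalfPeriod n) (k : ℕ) : DecidableRel (hp.centerGraph k).Adj :=
  Classical.decRel _

theorem Passes.centerGraph_adj_iff (h : hp.Passes t x y) (ht : t < steps n) :
    (hp.centerGraph k).Adj x y ↔ k < hp.pos t x ∧ hp.pos t x < n - k := by
  refine ⟨?_, fun hc => ⟨t, ht, x, y, h, rfl, hc⟩⟩
  rintro ⟨s, hs, u, v, h', he, hc⟩
  obtain rfl := h.time_unique h' ht hs he
  rwa [(h.eq_of_passes h' hs).1]

theorem Passes.gateAt_iff (h : hp.Passes t x y) {i : ℕ} :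
    hp.GateAt t i ↔ hp.pos t x = i := by
  refine ⟨?_, fun hi => ?_⟩
  · rintro ⟨u, v, hu, -, hu', -⟩
    obtain ⟨h₁, h₂, h₃, h₄⟩ := h
    by_contra hne
    have hux : u ≠ x := by rintro rfl; exact hne hu
    have huy : u ≠ y := by rintro rfl; omega
    have := h₄ u hux huy
    omega
  · subst hi
    exact ⟨x, y, rfl, h.pos_right, h.pos_succ_left, h.pos_succ_right⟩

theorem Passes.leCritical_iff (h : hp.Passes t x y) (ht : t < steps n) :
    hp.LeCritical t k ↔ ¬ (k < hp.pos t x ∧ hp.pos t x < n - k) := by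
  have hx := hp.pos_mem t ht.le x
  have hy := hp.pos_mem t ht.le y
  have := h.pos_right
  simp only [LeCritical, Critical, h.gateAt_iff]
  refine ⟨fun ⟨i, _, hik, hgate⟩ => by omega, fun hc => ?_⟩
  by_cases hxk : hp.pos t x ≤ k
  · exact ⟨_, hx.1, hxk, Or.inl rfl⟩
  · exact ⟨n - hp.pos t x, by omega, by omega, by omega⟩

theorem steps_le_NLe_add_card_edgeFinset :
    steps n ≤ hp.NLe k + #(hp.centerGraph k).edgeFinset := by
  classical
  have hcentral : #{t ∈ Finset.range (steps n) | ¬ hp.LeCritical t k} ≤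
      #(hp.centerGraph k).edgeFinset := by
    refine Finset.card_le_card_of_forall_subsingleton
      (fun t e => t < steps n ∧ ∃ x y, hp.Passes t x y ∧ e = s(x, y)) (fun t ht => ?_) ?_
    · obtain ⟨htN, hcrit⟩ := Finset.mem_filter.1 ht
      rw [Finset.mem_range] at htN
      obtain ⟨x, y, h⟩ := hp.exists_passes htN
      rw [h.leCritical_iff htN, not_not] at hcrit
      refine ⟨s(x, y), ?_, htN, x, y, h, rfl⟩
      rwa [SimpleGraph.mem_edgeFinset, SimpleGraph.mem_edgeSet, h.centerGraph_adj_iff htN]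
    · rintro e - s ⟨-, hs, x, y, h, rfl⟩ t ⟨-, ht, u, v, h', he⟩
      exact h.time_unique h' hs ht he
  have hNLe : hp.NLe k = #{t ∈ Finset.range (steps n) | hp.LeCritical t k} := by
    rw [NLe, ← Set.ncard_coe_finset]
    congr 1
    ext t
    simp
  have := Finset.card_filter_add_card_filter_not (s := Finset.range (steps n)) (hp.LeCritical · k)
  rw [Finset.card_range] at this
  omega

/-- The number of elements to the left of `x` at time `t` whose transposition with `x`, past or
future, takes place in the `k`-center. -/
noncomputable def leftDegree (hp : HalfPeriod n) (k t : ℕ) (x : Fin n) : ℕ :=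
  #{y | (hp.centerGraph k).Adj x y ∧ hp.pos t y < hp.pos t x}

/-- The number of elements to the right of `x` at time `t` whose transposition with `x`, past or
future, takes place in the `k`-center. -/
noncomputable def rightDegree (hp : HalfPeriod n) (k t : ℕ) (x : Fin n) : ℕ :=
  #{y | (hp.centerGraph k).Adj x y ∧ hp.pos t x < hp.pos t y}

/-- The point of the `k`-center `{k + 1, …, n - k}` nearest to the position `i`. -/
def clampCenter (n k i : ℕ) : ℕ := max (k + 1) (min i (n - k))

theorem leftDegree_add_rightDegree (ht : t ≤ steps n) :
    hp.leftDegree k t x + hp.rightDegree k t x = (hp.centerGraph k).degree x := by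
  rw [leftDegree, rightDegree, ← SimpleGraph.card_neighborFinset_eq_degree,
    ← Finset.card_union_of_disjoint]
  · congr 1
    ext y
    simp only [Finset.mem_union, Finset.mem_filter, Finset.mem_univ, true_and,
      SimpleGraph.mem_neighborFinset, ← and_or_left, and_iff_left_iff_imp]
    exact fun hxy => lt_or_gt_of_ne ((hp.pos_inj t ht).ne hxy.ne')
  · exact Finset.disjoint_filter.2 fun y _ hy hy' => hy.2.asymm hy'.2

theorem leftDegree_steps : hp.leftDegree k (steps n) x = hp.rightDegree k 0 x := by
  simp only [leftDegree, rightDegree, pos_steps_lt_pos_steps]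

theorem Passes.leftDegree_succ_left (h : hp.Passes t x y) (ht : t < steps n) :
    hp.leftDegree k (t + 1) x =
      hp.leftDegree k t x + if (hp.centerGraph k).Adj x y then 1 else 0 := by
  have hlt : ∀ z, z ≠ y → (hp.pos (t + 1) z < hp.pos (t + 1) x ↔ hp.pos t z < hp.pos t x) :=
    fun z hzy => h.pos_succ_lt_iff ht (by rw [ne_eq, Sym2.eq_iff]; grind [h.ne])
  have hy : ¬ hp.pos t y < hp.pos t x := by have := h.pos_right; omega
  have hy' : hp.pos (t + 1) y < hp.pos (t + 1) x := by
    rw [h.pos_succ_left, h.pos_succ_right]; omega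
  simp only [leftDegree, Finset.card_filter, ← Finset.add_sum_erase _ _ (Finset.mem_univ y), hy,
    hy', and_true, and_false, if_false, zero_add]
  rw [add_comm]
  congr 1
  exact Finset.sum_congr rfl fun z hz => by simp only [hlt z (Finset.ne_of_mem_erase hz)]

theorem Passes.leftDegree_succ_right (h : hp.Passes t x y) (ht : t < steps n) :
    hp.leftDegree k t y =
      hp.leftDegree k (t + 1) y + if (hp.centerGraph k).Adj x y then 1 else 0 := by
  have hlt : ∀ z, z ≠ x → (hp.pos (t + 1) z < hp.pos (t + 1) y ↔ hp.pos t z < hp.pos t y) :=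
    fun z hzx => h.pos_succ_lt_iff ht (by rw [ne_eq, Sym2.eq_iff]; grind [h.ne])
  have hx : hp.pos t x < hp.pos t y := by have := h.pos_right; omega
  have hx' : ¬ hp.pos (t + 1) x < hp.pos (t + 1) y := by
    rw [h.pos_succ_left, h.pos_succ_right]; omega
  simp only [leftDegree, Finset.card_filter, ← Finset.add_sum_erase _ _ (Finset.mem_univ x), hx,
    hx', and_true, and_false, if_false, zero_add, (hp.centerGraph k).adj_comm y x]
  rw [add_comm]
  congr 1
  exact Finset.sum_congr rfl fun z hz => by simp only [hlt z (Finset.ne_of_mem_erase hz)]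

theorem Passes.leftDegree_succ_of_ne (h : hp.Passes t u v) (ht : t < steps n) (hxu : x ≠ u)
    (hxv : x ≠ v) : hp.leftDegree k (t + 1) x = hp.leftDegree k t x := by
  have hlt : ∀ z, hp.pos (t + 1) z < hp.pos (t + 1) x ↔ hp.pos t z < hp.pos t x :=
    fun z => h.pos_succ_lt_iff ht (by rw [ne_eq, Sym2.eq_iff]; grind)
  simp only [leftDegree, hlt]

theorem leftDegree_add_clampCenter_zero (hk : 2 * k < n) (ht : t ≤ steps n) :
    hp.leftDegree k t x + clampCenter n k (hp.pos 0 x) =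
      hp.leftDegree k 0 x + clampCenter n k (hp.pos t x) := by
  induction t with
  | zero => rfl
  | succ t ih =>
    obtain ⟨u, v, h⟩ := hp.exists_passes ht
    have ih := ih (by omega)
    have hadj := h.centerGraph_adj_iff ht (k := k)
    have hpos := h.pos_right
    have hu := h.pos_succ_left
    have hv := h.pos_succ_right
    rcases eq_or_ne x u with rfl | hxu
    · rw [h.leftDegree_succ_left ht]
      simp only [hadj]
      unfold clampCenter at *
      split_ifs <;> omega
    rcases eq_or_ne x v with rfl | hxv
    · rw [h.leftDegree_succ_right ht] at ih
      simp only [hadj] at ih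
      unfold clampCenter at *
      split_ifs at ih <;> omega
    · rw [h.leftDegree_succ_of_ne ht hxu hxv, h.pos_succ_of_ne x hxu hxv, ih]

theorem leftDegree_add_clampCenter (hk : 2 * k < n) (hs : s ≤ steps n) (ht : t ≤ steps n) :
    hp.leftDegree k t x + clampCenter n k (hp.pos s x) =
      hp.leftDegree k s x + clampCenter n k (hp.pos t x) := by
  have h₁ := hp.leftDegree_add_clampCenter_zero hk hs (x := x)
  have h₂ := hp.leftDegree_add_clampCenter_zero hk ht (x := x)
  omega

theorem rightDegree_add_two_mul_clampCenter (hk : 2 * k < n) (ht : t ≤ steps n) :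
    hp.rightDegree k t x + 2 * clampCenter n k (hp.pos t x) = hp.leftDegree k t x + (n + 1) := by
  have h₁ := hp.leftDegree_add_clampCenter hk (Nat.zero_le _) ht (x := x)
  have h₂ := hp.leftDegree_add_clampCenter hk (Nat.zero_le _) le_rfl (x := x)
  have hdeg := hp.leftDegree_add_rightDegree ht (k := k) (x := x)
  rw [← hp.leftDegree_add_rightDegree (Nat.zero_le _), ← leftDegree_steps] at hdeg
  have hrev : clampCenter n k (hp.pos (steps n) x) + clampCenter n k (hp.pos 0 x) = n + 1 := by
    have := hp.pos_mem 0 (Nat.zero_le _) x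
    rw [steps, hp.reverse]
    unfold clampCenter
    omega
  omega

/-- The set of elements occupying the first `m` positions at time `t`. -/
def front (hp : HalfPeriod n) (t m : ℕ) : Finset (Fin n) := {x | hp.pos t x ≤ m}

@[simp]
theorem mem_front : x ∈ hp.front t m ↔ hp.pos t x ≤ m := by
  simp only [front, Finset.mem_filter, Finset.mem_univ, true_and]

theorem sum_front (ht : t ≤ steps n) (hm : m ≤ n) (f : ℕ → ℕ) :
    ∑ x ∈ hp.front t m, f (hp.pos t x) = ∑ i ∈ Finset.Icc 1 m, f i := by
  refine Finset.sum_nbij (hp.pos t) (fun x hx => ?_) (hp.pos_inj t ht).injOn (fun i hi => ?_)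
    fun _ _ => rfl
  · exact Finset.mem_Icc.2 ⟨(hp.pos_mem t ht x).1, mem_front.1 hx⟩
  · obtain ⟨hi₁, him⟩ := Finset.mem_Icc.1 hi
    obtain ⟨x, rfl⟩ := hp.exists_pos_eq ht (Finset.mem_Icc.2 ⟨hi₁, him.trans hm⟩)
    exact ⟨x, mem_front.2 him, rfl⟩

theorem card_front (ht : t ≤ steps n) (hm : m ≤ n) : #(hp.front t m) = m := by
  simpa using hp.sum_front ht hm fun _ => 1

/-- The number of `k`-center neighbours of `x` lying between `x` and position `m` at time `t`. -/
noncomputable def frontRightDegree (hp : HalfPeriod n) (k t m : ℕ) (x : Fin n) : ℕ :=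
  #{y | (hp.centerGraph k).Adj x y ∧ hp.pos t x < hp.pos t y ∧ hp.pos t y ≤ m}

/-- The bound on `frontRightDegree` for the element at position `i`: at most `m - i` elements lie in
the way, and the right degree exceeds the left degree, which is less than `i`, by
`n - 1 - 2 * k`. -/
def frontRightBound (n k m i : ℕ) : ℕ := min (m - i) (n + i - 2 * (k + 1))

theorem card_filter_lt_pos (ht : t ≤ steps n) (hm : m ≤ n) :
    #{y | hp.pos t x < hp.pos t y ∧ hp.pos t y ≤ m} = m - hp.pos t x := by
  rw [← Nat.card_Ioc, ← hp.card_filter_pos_mem ht fun i hi => ?_]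
  · simp only [Finset.mem_Ioc]
  · rw [Finset.mem_Ioc] at hi
    exact Finset.mem_Icc.2 ⟨by omega, by omega⟩

theorem card_filter_pos_lt (ht : t ≤ steps n) :
    #{y | hp.pos t y < hp.pos t x} = hp.pos t x - 1 := by
  have hx := hp.pos_mem t ht x
  rw [← hp.card_front ht (m := hp.pos t x - 1) (by omega), front]
  congr 1
  grind

theorem rightDegree_eq_leftDegree_add (hk : 2 * k < n) (ht : t ≤ steps n)
    (hx : hp.pos t x ≤ k + 1) :
    hp.rightDegree k t x = hp.leftDegree k t x + (n - 1 - 2 * k) := by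
  have hrank := hp.rightDegree_add_two_mul_clampCenter hk ht (x := x)
  unfold clampCenter at hrank
  omega

theorem leftDegree_le (ht : t ≤ steps n) : hp.leftDegree k t x ≤ hp.pos t x - 1 :=
  (Finset.card_le_card (Finset.monotone_filter_right _ fun _ _ => And.right)).trans_eq
    (card_filter_pos_lt ht)

theorem frontRightDegree_le_rightDegree :
    hp.frontRightDegree k t m x ≤ hp.rightDegree k t x :=
  Finset.card_le_card (Finset.monotone_filter_right _ fun _ _ h => ⟨h.1, h.2.1⟩)

theorem frontRightDegree_le (hk : 2 * k < n) (ht : t ≤ steps n) (hm : m ≤ k + 1)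
    (hx : x ∈ hp.front t m) :
    hp.frontRightDegree k t m x ≤ frontRightBound n k m (hp.pos t x) := by
  rw [mem_front] at hx
  refine le_min ?_ ?_
  · rw [← hp.card_filter_lt_pos ht (by omega : m ≤ n)]
    exact Finset.card_le_card (Finset.monotone_filter_right _ fun _ _ => And.right)
  · have hpos := hp.pos_mem t ht x
    have hright := hp.rightDegree_eq_leftDegree_add hk ht (hx.trans hm)
    have hleft := hp.leftDegree_le ht (k := k) (x := x)
    have hle := hp.frontRightDegree_le_rightDegree (k := k) (t := t) (m := m) (x := x)
    omega

theorem adj_of_frontRightDegree_eq_sub (ht : t ≤ steps n) (hm : m ≤ n)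
    (heq : hp.frontRightDegree k t m x = m - hp.pos t x) (hxy : hp.pos t x < hp.pos t y)
    (hy : hp.pos t y ≤ m) : (hp.centerGraph k).Adj x y := by
  rw [← hp.card_filter_lt_pos ht hm, frontRightDegree] at heq
  have := Finset.eq_of_subset_of_card_le
    (Finset.monotone_filter_right Finset.univ fun _ _ => And.right) heq.ge
  exact ((Finset.filter_inj'.1 this (Finset.mem_univ y)).2 ⟨hxy, hy⟩).1

theorem adj_of_leftDegree_eq (ht : t ≤ steps n) (heq : hp.leftDegree k t y = hp.pos t y - 1)
    (hxy : hp.pos t x < hp.pos t y) : (hp.centerGraph k).Adj y x := by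
  rw [← hp.card_filter_pos_lt ht, leftDegree] at heq
  have := Finset.eq_of_subset_of_card_le
    (Finset.monotone_filter_right Finset.univ fun _ _ => And.right) heq.ge
  exact ((Finset.filter_inj'.1 this (Finset.mem_univ x)).2 hxy).1

theorem adj_of_frontRightDegree_eq (hk : 2 * k < n) (ht : t ≤ steps n) (hm : m ≤ k + 1)
    (heq : ∀ z ∈ hp.front t m, hp.frontRightDegree k t m z = frontRightBound n k m (hp.pos t z))
    (hxy : hp.pos t x < hp.pos t y) (hy : hp.pos t y ≤ m)
    (hbound : m + 2 * (k + 1) ≤ n + 2 * hp.pos t x ∨ n + 2 * hp.pos t y ≤ m + 2 * (k + 1)) :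
    (hp.centerGraph k).Adj x y := by
  have hx := hp.pos_mem t ht x
  rcases hbound with hbound | hbound
  · refine hp.adj_of_frontRightDegree_eq_sub ht (by omega) ?_ hxy hy
    rw [heq x (mem_front.2 (hxy.le.trans hy)), frontRightBound, min_eq_left (by omega)]
  · refine (hp.adj_of_leftDegree_eq ht (le_antisymm (hp.leftDegree_le ht) ?_) hxy).symm
    have hright := hp.rightDegree_eq_leftDegree_add hk ht (hy.trans hm)
    have hle := hp.frontRightDegree_le_rightDegree (k := k) (t := t) (m := m) (x := y)
    rw [heq y (mem_front.2 hy), frontRightBound, min_eq_right (by omega)] at hle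
    omega

theorem sum_leftDegree_front :
    ∑ x ∈ hp.front t m, hp.leftDegree k t x = ∑ x ∈ hp.front t m, hp.frontRightDegree k t m x := by
  have hdouble := Finset.sum_card_bipartiteAbove_eq_sum_card_bipartiteBelow (s := hp.front t m)
    (t := hp.front t m) fun x y => (hp.centerGraph k).Adj x y ∧ hp.pos t y < hp.pos t x
  refine Eq.trans (Finset.sum_congr rfl fun x hx => ?_)
    (hdouble.trans (Finset.sum_congr rfl fun x _ => ?_))
  · rw [leftDegree, Finset.bipartiteAbove]
    congr 1
    ext y
    rw [mem_front] at hx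
    simp only [Finset.mem_filter, Finset.mem_univ, true_and, mem_front]
    exact ⟨fun h => ⟨h.2.le.trans hx, h⟩, And.right⟩
  · rw [frontRightDegree, Finset.bipartiteBelow]
    congr 1
    ext y
    simp only [Finset.mem_filter, Finset.mem_univ, true_and, mem_front,
      (hp.centerGraph k).adj_comm y x]
    tauto

theorem sum_degree_front (hk : 2 * k < n) (ht : t ≤ steps n) (hm : m ≤ k + 1) :
    ∑ x ∈ hp.front t m, (hp.centerGraph k).degree x =
      2 * ∑ x ∈ hp.front t m, hp.frontRightDegree k t m x + m * (n - 1 - 2 * k) := by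
  have hdeg : ∀ x ∈ hp.front t m, (hp.centerGraph k).degree x =
      2 * hp.leftDegree k t x + (n - 1 - 2 * k) := fun x hx => by
    rw [← hp.leftDegree_add_rightDegree ht,
      hp.rightDegree_eq_leftDegree_add hk ht ((mem_front.1 hx).trans hm)]
    ring
  rw [Finset.sum_congr rfl hdeg, Finset.sum_add_distrib, ← Finset.mul_sum, sum_leftDegree_front,
    Finset.sum_const, hp.card_front ht (by omega), smul_eq_mul]

section Partition

variable {ι : Type*} [Fintype ι] {T : ι → ℕ}

theorem two_mul_card_edgeFinset_eq (hk : 2 * k < n) (hm : m ≤ k + 1) (hT : ∀ i, T i ≤ steps n)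
    (hdisj : Pairwise fun i j => Disjoint (hp.front (T i) m) (hp.front (T j) m))
    (hcard : Fintype.card ι * m = n) :
    2 * #(hp.centerGraph k).edgeFinset =
      ∑ i, (2 * ∑ x ∈ hp.front (T i) m, hp.frontRightDegree k (T i) m x +
        m * (n - 1 - 2 * k)) := by
  classical
  have hdisj' : ((Finset.univ : Finset ι) : Set ι).PairwiseDisjoint fun i => hp.front (T i) m :=
    fun i _ j _ hij => hdisj hij
  have huniv : Finset.univ.biUnion (fun i => hp.front (T i) m) = Finset.univ := by
    refine Finset.eq_univ_of_card _ ?_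
    rw [Finset.card_biUnion fun i _ j _ hij => hdisj hij,
      Finset.sum_congr rfl fun i _ => hp.card_front (hT i) (by omega)]
    simpa using hcard
  rw [← SimpleGraph.sum_degrees_eq_twice_card_edges, ← huniv, Finset.sum_biUnion hdisj']
  exact Finset.sum_congr rfl fun i _ => hp.sum_degree_front hk (hT i) hm

theorem frontRightDegree_eq_of_le_card_edgeFinset (hk : 2 * k < n) (hm : m ≤ k + 1)
    (hT : ∀ i, T i ≤ steps n)
    (hdisj : Pairwise fun i j => Disjoint (hp.front (T i) m) (hp.front (T j) m))
    (hcard : Fintype.card ι * m = n)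
    (hE : Fintype.card ι *
      (2 * ∑ r ∈ Finset.Icc 1 m, frontRightBound n k m r + m * (n - 1 - 2 * k)) ≤
        2 * #(hp.centerGraph k).edgeFinset) (i : ι) :
    ∀ x ∈ hp.front (T i) m,
      hp.frontRightDegree k (T i) m x = frontRightBound n k m (hp.pos (T i) x) := by
  have hle i := Finset.sum_le_sum fun x hx => hp.frontRightDegree_le hk (hT i) hm (x := x) hx
  have hsum i := hp.sum_front (hT i) (by omega : m ≤ n) (frontRightBound n k m)
  have hle' : ∀ i ∈ Finset.univ,
      2 * ∑ x ∈ hp.front (T i) m, hp.frontRightDegree k (T i) m x + m * (n - 1 - 2 * k) ≤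
        2 * ∑ r ∈ Finset.Icc 1 m, frontRightBound n k m r + m * (n - 1 - 2 * k) :=
    fun i _ => by rw [← hsum i]; have := hle i; omega
  rw [hp.two_mul_card_edgeFinset_eq hk hm hT hdisj hcard, ← smul_eq_mul, ← Finset.card_univ,
    ← Finset.sum_const] at hE
  have heq := (Finset.sum_eq_sum_iff_of_le hle').1 (le_antisymm (Finset.sum_le_sum hle') hE) i
    (Finset.mem_univ i)
  refine (Finset.sum_eq_sum_iff_of_le fun x hx => hp.frontRightDegree_le hk (hT i) hm hx).1 ?_
  rw [hsum i]
  omega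

end Partition

/- An element moves to the left only past its predecessors in the initial arrangement, hence here
only inside the `k`-center. -/
theorem lt_pos_of_lt_pos (hadj : ∀ u, hp.pos 0 u < hp.pos 0 x → (hp.centerGraph k).Adj u x) {i : ℕ}
    (hi : i ≤ k ∨ n - k ≤ i) (hst : s ≤ t) (ht : t ≤ steps n) (hlt : i < hp.pos s x) :
    i < hp.pos t x := by
  induction t, hst using Nat.le_induction with
  | base => exact hlt
  | succ t _ ih =>
    have ih := ih (by omega)
    obtain ⟨u, v, h⟩ := hp.exists_passes ht
    rcases eq_or_ne x u with rfl | hxu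
    · rw [h.pos_succ_left]
      omega
    rcases eq_or_ne x v with rfl | hxv
    · have hcenter := (h.centerGraph_adj_iff ht).1 (hadj u (h.pos_zero_lt ht))
      have := h.pos_right
      rw [h.pos_succ_right]
      omega
    · rwa [h.pos_succ_of_ne x hxu hxv]

theorem pos_mem_center_of_adj (hadj : ∀ u, hp.pos 0 u < hp.pos 0 x → (hp.centerGraph k).Adj u x)
    (hs : s ≤ steps n) (hzx : hp.pos 0 z < hp.pos 0 x) (hz : k < hp.pos s z)
    (hz' : hp.pos s z ≤ n - k) : k < hp.pos s x ∧ hp.pos s x ≤ n - k := by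
  obtain ⟨t, ht, h⟩ := hp.exists_passes_of_pos_zero_lt hzx
  have hcenter := (h.centerGraph_adj_iff ht).1 (hadj z hzx)
  have hswap := h.pos_lt_iff ht hs
  have hpos := h.pos_right
  have hpos' := h.pos_succ_right
  rcases le_or_gt s t with hst | hts
  · refine ⟨hz.trans (hswap.2 hst), ?_⟩
    by_contra! hx
    have := hp.lt_pos_of_lt_pos hadj (Or.inr le_rfl) hst ht.le hx
    omega
  · exact ⟨hp.lt_pos_of_lt_pos hadj (Or.inl le_rfl) (s := t + 1) hts hs (by omega), by omega⟩

/- By `leftDegree_add_clampCenter`, between the times `s` and `t` the clamped position of `x` grows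
by the net number of neighbours that have come to the left of `x`; `hadj` and `hmem` say that this
is at least the net number of elements of `A` that have done so. -/
theorem card_filter_add_clampCenter_le (hk : 2 * k < n) (hs : s ≤ steps n) (ht : t ≤ steps n)
    {A : Finset (Fin n)}
    (hadj : ∀ y ∈ A, hp.pos s x < hp.pos s y → hp.pos t y < hp.pos t x →
      (hp.centerGraph k).Adj x y)
    (hmem : ∀ y, (hp.centerGraph k).Adj x y → hp.pos s y < hp.pos s x → hp.pos t x < hp.pos t y →
      y ∈ A) :
    #{y | y ∈ A ∧ hp.pos t y < hp.pos t x} + clampCenter n k (hp.pos s x) ≤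
      #{y | y ∈ A ∧ hp.pos s y < hp.pos s x} + clampCenter n k (hp.pos t x) := by
  suffices hcard : #{y | y ∈ A ∧ hp.pos t y < hp.pos t x} + hp.leftDegree k s x ≤
      #{y | y ∈ A ∧ hp.pos s y < hp.pos s x} + hp.leftDegree k t x by
    have := hp.leftDegree_add_clampCenter hk hs ht (x := x)
    omega
  simp only [leftDegree, Finset.card_filter, ← Finset.sum_add_distrib]
  refine Finset.sum_le_sum fun y _ => ?_
  have hinj : hp.pos s y = hp.pos s x ↔ hp.pos t y = hp.pos t x :=
    (hp.pos_inj s hs).eq_iff.trans (hp.pos_inj t ht).eq_iff.symm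
  have hadj := hadj y
  have hmem := hmem y
  grind

theorem card_filter_mem_front_pos_lt (hs : s ≤ steps n) (hx : hp.pos 0 x ≤ m)
    (hblock : ∀ y, hp.pos 0 y ≤ m ↔ l < hp.pos s y ∧ hp.pos s y ≤ l + m) :
    #{y | y ∈ hp.front 0 m ∧ hp.pos s y < hp.pos s x} = hp.pos s x - l - 1 := by
  have hpos := hp.pos_mem s hs x
  have hx' := (hblock x).1 hx
  rw [Nat.sub_right_comm, ← Nat.card_Ioc, ← hp.card_filter_pos_mem hs fun i hi => ?_]
  · congr 1
    ext y
    simp only [Finset.mem_filter, Finset.mem_univ, true_and, mem_front, hblock, Finset.mem_Ioc]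
    omega
  · rw [Finset.mem_Ioc] at hi
    exact Finset.mem_Icc.2 ⟨by omega, by omega⟩

theorem add_two_mul_le_pos_zero_add_pos (hk : 2 * k < n) (hs : s ≤ steps n) (hm : m ≤ n)
    (hx : hp.pos 0 x ≤ m) (hblock : ∀ y, hp.pos 0 y ≤ m ↔ l < hp.pos s y ∧ hp.pos s y ≤ l + m)
    (hadj : ∀ y, hp.pos 0 x < hp.pos 0 y → hp.pos 0 y ≤ m → (hp.centerGraph k).Adj x y) :
    m + l + 2 * (k + 1) ≤ n + hp.pos 0 x + hp.pos s x := by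
  have hle := hp.card_filter_add_clampCenter_le hk hs le_rfl (x := x) (A := hp.front 0 m)
    (fun y hy _ hyx => hadj y (pos_steps_lt_pos_steps.1 hyx) (mem_front.1 hy))
    (fun y _ _ hxy => mem_front.2 ((pos_steps_lt_pos_steps.1 hxy).le.trans hx))
  rw [hp.card_filter_mem_front_pos_lt hs hx hblock] at hle
  have hlast : #{y | y ∈ hp.front 0 m ∧ hp.pos (steps n) y < hp.pos (steps n) x} =
      m - hp.pos 0 x := by
    simp only [← hp.card_filter_lt_pos (Nat.zero_le _) hm, mem_front, pos_steps_lt_pos_steps,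
      and_comm]
  have hx' := (hblock x).1 hx
  rw [hlast] at hle
  unfold clampCenter at hle
  omega

theorem pos_add_two_mul_lt_pos_zero_add (hk : 2 * k < n) (hs : s ≤ steps n)
    (hx : hp.pos 0 x ≤ m) (hblock : ∀ y, hp.pos 0 y ≤ m ↔ l < hp.pos s y ∧ hp.pos s y ≤ l + m)
    (hadj : ∀ y, hp.pos 0 x < hp.pos 0 y → hp.pos 0 y ≤ m → (hp.centerGraph k).Adj x y) :
    hp.pos s x + 2 * k < n + hp.pos 0 x + l := by
  have hle := hp.card_filter_add_clampCenter_le hk (Nat.zero_le _) hs (x := x) (A := hp.front 0 m)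
    (fun y hy hxy _ => hadj y hxy (mem_front.1 hy))
    (fun y _ hyx _ => mem_front.2 (hyx.le.trans hx))
  rw [hp.card_filter_mem_front_pos_lt hs hx hblock] at hle
  have hfirst : #{y | y ∈ hp.front 0 m ∧ hp.pos 0 y < hp.pos 0 x} ≤ hp.pos 0 x - 1 :=
    (Finset.card_le_card (Finset.monotone_filter_right _ fun _ _ => And.right)).trans_eq
      (card_filter_pos_lt (Nat.zero_le _))
  have hpos := hp.pos_mem 0 (Nat.zero_le _) x
  have hx' := (hblock x).1 hx
  unfold clampCenter at hle
  omega

/-- The half of 3-decomposability that concerns the first `m` elements of the initial arrangement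
(`A`), the next `m` (`B`) and the remaining ones (`C`): every transposition between `A` and `B`
occurs before every transposition between `A ∪ B` and `C`. -/
def FirstBlocksSwapFirst (hp : HalfPeriod n) (m : ℕ) : Prop :=
  ∀ s < steps n, ∀ t < steps n, ∀ x y u v, hp.Passes s x y → hp.Passes t u v →
    hp.pos 0 x ≤ m → m < hp.pos 0 y → hp.pos 0 y ≤ 2 * m → hp.pos 0 u ≤ 2 * m →
    2 * m < hp.pos 0 v → s < t

theorem FirstBlocksSwapFirst.exists_swapped (h : hp.FirstBlocksSwapFirst m) :
    ∃ T ≤ steps n,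
      (∀ x y, hp.pos 0 x ≤ m → m < hp.pos 0 y → hp.pos 0 y ≤ 2 * m → hp.pos T y < hp.pos T x) ∧
      ∀ x y, hp.pos 0 x ≤ 2 * m → 2 * m < hp.pos 0 y → hp.pos T x < hp.pos T y := by
  classical
  -- `T` is the time of the first transposition between `A ∪ B` and `C`.
  have hex : ∃ T, T = steps n ∨
      ∃ u v, hp.Passes T u v ∧ hp.pos 0 u ≤ 2 * m ∧ 2 * m < hp.pos 0 v := ⟨_, Or.inl rfl⟩
  have hT : Nat.find hex ≤ steps n := Nat.find_min' hex (Or.inl rfl)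
  refine ⟨Nat.find hex, hT, fun x y hx hy hy' => ?_, fun x y hx hy => ?_⟩
  · obtain ⟨s, hs, hxy⟩ := exists_passes_of_pos_zero_lt (hx.trans_lt hy)
    have hsT : s < Nat.find hex := by
      rcases hT.eq_or_lt with hT' | hT'
      · rwa [hT']
      obtain ⟨u, v, huv, hu, hv⟩ := (Nat.find_spec hex).resolve_left hT'.ne
      exact h s hs _ hT' x y u v hxy huv hx hy hy' hu hv
    exact ((hp.pos_inj _ hT).ne hxy.ne.symm).lt_of_le
      (not_lt.1 fun hlt => hsT.not_ge ((hxy.pos_lt_iff hs hT).1 hlt))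
  · obtain ⟨s, hs, hxy⟩ := exists_passes_of_pos_zero_lt (hx.trans_lt hy)
    exact (hxy.pos_lt_iff hs hT).2 (Nat.find_min' hex (Or.inr ⟨x, y, hxy, hx, hy⟩))

theorem pos_lt_pos_of_le (hxy : hp.pos 0 x < hp.pos 0 y) (hst : s ≤ t) (ht : t ≤ steps n)
    (hlt : hp.pos t x < hp.pos t y) : hp.pos s x < hp.pos s y := by
  obtain ⟨r, hr, h⟩ := exists_passes_of_pos_zero_lt hxy
  exact (h.pos_lt_iff hr (hst.trans ht)).2 (hst.trans ((h.pos_lt_iff hr ht).1 hlt))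

theorem card_lt_pos (ht : t ≤ steps n) {S : Finset (Fin n)}
    (hS : ∀ y ∈ S, hp.pos t y < hp.pos t x) : #S < hp.pos t x := by
  have hle : #S ≤ hp.pos t x - 1 := by
    rw [← hp.card_filter_pos_lt ht]
    exact Finset.card_le_card fun y hy => Finset.mem_filter.2 ⟨Finset.mem_univ y, hS y hy⟩
  have := hp.pos_mem t ht x
  omega

theorem pos_zero_mem_iff {P Q : Finset ℕ} (ht : t ≤ steps n) (hP : P ⊆ Finset.Icc 1 n)
    (hQ : Q ⊆ Finset.Icc 1 n) (hcard : #Q = #P) (h : ∀ x, hp.pos 0 x ∈ P → hp.pos t x ∈ Q)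
    (x : Fin n) :
    hp.pos 0 x ∈ P ↔ hp.pos t x ∈ Q := by
  have heq := Finset.eq_of_subset_of_card_le
    (Finset.monotone_filter_right Finset.univ fun x _ => h x)
    (by rw [hp.card_filter_pos_mem ht hQ, hp.card_filter_pos_mem (Nat.zero_le _) hP, hcard])
  exact Finset.filter_inj'.1 heq (Finset.mem_univ x)

theorem FirstBlocksSwapFirst.pos_of_middle (h : hp.FirstBlocksSwapFirst m) (hn : 3 * m = n)
    (hs : s ≤ steps n) (hm : 0 < m)
    (hmid : ∀ x, hp.pos 0 x ≤ m ↔ m < hp.pos s x ∧ hp.pos s x ≤ 2 * m) :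
    (∀ y, m < hp.pos 0 y → hp.pos 0 y ≤ 2 * m → hp.pos s y ≤ m) ∧
      ∀ z, 2 * m < hp.pos 0 z → 2 * m < hp.pos s z := by
  obtain ⟨T, hT, hBA, hAC⟩ := h.exists_swapped
  have hrange t (ht : t ≤ steps n) x := hp.pos_mem t ht x
  rcases le_total s T with hsT | hTs
  · have hC : ∀ z, 2 * m < hp.pos 0 z → 2 * m < hp.pos s z := fun z hz => by
      have hlt := hp.card_lt_pos hs (S := hp.front 0 (2 * m)) (x := z) fun x hx =>
        pos_lt_pos_of_le ((mem_front.1 hx).trans_lt hz) hsT hT (hAC x z (mem_front.1 hx) hz)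
      rwa [card_front (Nat.zero_le _) (by omega)] at hlt
    have hC' := hp.pos_zero_mem_iff (P := Finset.Icc (2 * m + 1) n) (Q := Finset.Icc (2 * m + 1) n)
      hs (by grind) (by grind) rfl fun z hz => by
        rw [Finset.mem_Icc] at *
        exact ⟨hC z hz.1, (hrange s hs z).2⟩
    refine ⟨fun y hy hy' => ?_, hC⟩
    have := hC' y
    have := hmid y
    have := hrange s hs y
    grind
  · obtain ⟨x, hx⟩ := hp.exists_pos_eq (Nat.zero_le _) (Finset.mem_Icc.2 ⟨le_rfl, by omega⟩)
    have hB : ∀ y, m < hp.pos 0 y → hp.pos 0 y ≤ 2 * m → hp.pos s y ≤ m := fun y hy hy' => by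
      have hxy : ¬ hp.pos s x < hp.pos s y := fun hlt => (hBA x y (by omega) hy hy').asymm
        (pos_lt_pos_of_le (by omega) hTs hs hlt)
      have := hmid x
      have := hmid y
      omega
    have hB' := hp.pos_zero_mem_iff (P := Finset.Icc (m + 1) (2 * m)) (Q := Finset.Icc 1 m)
      hs (by grind) (by grind) (by simp; omega) fun y hy => by
        rw [Finset.mem_Icc] at *
        exact ⟨(hrange s hs y).1, hB y hy.1 hy.2⟩
    refine ⟨hB, fun z hz => ?_⟩
    have := hB' z
    have := hmid z
    have := hrange s hs z
    grind

theorem pairwise_disjoint_front {T : ℕ} (hn : 3 * m = n) (hT : T ≤ steps n)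
    (hBA : ∀ x y, hp.pos 0 x ≤ m → m < hp.pos 0 y → hp.pos 0 y ≤ 2 * m →
      hp.pos T y < hp.pos T x)
    (hAC : ∀ x y, hp.pos 0 x ≤ 2 * m → 2 * m < hp.pos 0 y → hp.pos T x < hp.pos T y) :
    Pairwise fun i j : Fin 3 =>
      Disjoint (hp.front (![0, T, steps n] i) m) (hp.front (![0, T, steps n] j) m) := by
  have hfirst : ∀ x, hp.pos T x ≤ m → m < hp.pos 0 x ∧ hp.pos 0 x ≤ 2 * m := fun x hx => by
    by_contra hB
    have hlt := hp.card_lt_pos hT (x := x)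
      (S := ({y | hp.pos 0 y ∈ Finset.Icc (m + 1) (2 * m)} : Finset (Fin n))) fun y hy => by
        simp only [Finset.mem_filter, Finset.mem_univ, true_and, Finset.mem_Icc] at hy
        rcases le_or_gt (hp.pos 0 x) m with hxm | hxm
        · exact hBA x y hxm hy.1 hy.2
        · exact hAC y x hy.2 (by omega)
    rw [hp.card_filter_pos_mem (Nat.zero_le _) (by grind), Nat.card_Icc] at hlt
    omega
  have hlast : ∀ x, hp.pos (steps n) x = n + 1 - hp.pos 0 x := hp.reverse
  intro i j hij
  refine Finset.disjoint_left.2 fun x hi hj => ?_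
  rw [mem_front] at hi hj
  have := hfirst x
  have := hlast x
  fin_cases i <;> fin_cases j <;> first
    | exact hij rfl
    | simp only [Fin.zero_eta, Fin.mk_one, Fin.reduceFinMk, Matrix.cons_val] at hi hj
      omega

theorem FirstBlocksSwapFirst.centerGraph_adj (h : hp.FirstBlocksSwapFirst m) (hn : 3 * m = n)
    (hk : 2 * k < n) (hm : m ≤ k + 1)
    (hNLe : 2 * hp.NLe k +
      3 * (2 * ∑ r ∈ Finset.Icc 1 m, frontRightBound n k m r + m * (n - 1 - 2 * k)) ≤ 2 * steps n)
    (hxy : hp.pos 0 x < hp.pos 0 y) (hy : hp.pos 0 y ≤ m)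
    (hbound : m + 2 * (k + 1) ≤ n + 2 * hp.pos 0 x ∨ n + 2 * hp.pos 0 y ≤ m + 2 * (k + 1)) :
    (hp.centerGraph k).Adj x y := by
  obtain ⟨T, hT, hBA, hAC⟩ := h.exists_swapped
  have hT' : ∀ i, ![0, T, steps n] i ≤ steps n := fun i => by fin_cases i <;> simp [hT]
  have hE := hp.steps_le_NLe_add_card_edgeFinset (k := k)
  refine hp.adj_of_frontRightDegree_eq hk (Nat.zero_le _) hm ?_ hxy hy hbound
  refine hp.frontRightDegree_eq_of_le_card_edgeFinset hk hm hT'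
    (hp.pairwise_disjoint_front hn hT hBA hAC) (by simpa using hn) ?_ 0
  rw [Fintype.card_fin]
  omega

theorem Passes.swapsAt (h : hp.Passes t x y) : hp.SwapsAt t x y := by
  refine ⟨h.ne, ?_, ?_⟩
  · rw [Moved, h.pos_succ_left]
    omega
  · rw [Moved, h.pos_succ_right, h.pos_right]
    omega

theorem SwapsAt.symm (h : hp.SwapsAt t x y) : hp.SwapsAt t y x :=
  ⟨h.1.symm, h.2.2, h.2.1⟩

section Thirty

variable {hp : HalfPeriod 30} {x y z : Fin 30}

theorem FirstBlocksSwapFirst.centerGraph_ten_adj (h : hp.FirstBlocksSwapFirst 10)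
    (hN : hp.NLe 10 ≤ 165) (hxy : hp.pos 0 x < hp.pos 0 y) (hy : hp.pos 0 y ≤ 10) :
    (hp.centerGraph 10).Adj x y := by
  have hsum : ∑ r ∈ Finset.Icc 1 10, frontRightBound 30 10 10 r = 45 := by decide
  have hsteps : steps 30 = 435 := rfl
  have hx := hp.pos_mem 0 (Nat.zero_le _) x
  exact h.centerGraph_adj rfl (by omega) (by omega) (by rw [hsum, hsteps]; omega) hxy hy (by omega)

theorem FirstBlocksSwapFirst.centerGraph_thirteen_adj (h : hp.FirstBlocksSwapFirst 10)
    (hN : hp.NLe 13 ≤ 291) (hxy : hp.pos 0 x < hp.pos 0 y) (hy : hp.pos 0 y ≤ 10)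
    (hbound : 4 ≤ hp.pos 0 x ∨ hp.pos 0 y ≤ 4) : (hp.centerGraph 13).Adj x y := by
  have hsum : ∑ r ∈ Finset.Icc 1 10, frontRightBound 30 13 10 r = 33 := by decide
  have hsteps : steps 30 = 435 := rfl
  exact h.centerGraph_adj rfl (by omega) (by omega) (by rw [hsum, hsteps]; omega) hxy hy (by omega)

theorem FirstBlocksSwapFirst.pos_zero_le_ten_iff (h : hp.FirstBlocksSwapFirst 10)
    (hN : hp.NLe 10 ≤ 165) (hs : s ≤ steps 30) (hz₀ : hp.pos 0 z = 1) (hz : hp.pos s z = 14)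
    (x : Fin 30) : hp.pos 0 x ≤ 10 ↔ 10 < hp.pos s x ∧ hp.pos s x ≤ 20 := by
  have hmem : ∀ x, hp.pos 0 x ∈ Finset.Icc 1 10 → hp.pos s x ∈ Finset.Icc 11 20 := fun x hx => by
    rw [Finset.mem_Icc] at hx ⊢
    rcases eq_or_ne x z with rfl | hxz
    · omega
    have hne := (hp.pos_inj 0 (Nat.zero_le _)).ne hxz
    exact hp.pos_mem_center_of_adj (fun u hu => h.centerGraph_ten_adj hN hu hx.2) hs
      (by omega : hp.pos 0 z < hp.pos 0 x) (by omega) (by omega)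
  have hiff := hp.pos_zero_mem_iff hs (by decide) (by decide) (by decide) hmem x
  have hx := hp.pos_mem 0 (Nat.zero_le _) x
  simp only [Finset.mem_Icc] at hiff
  omega

theorem FirstBlocksSwapFirst.pos_zero_mem_Icc_two_four_iff (h : hp.FirstBlocksSwapFirst 10)
    (hN : hp.NLe 13 ≤ 291) (hs : s ≤ steps 30) (hz₀ : hp.pos 0 z = 1) (hz : hp.pos s z = 14)
    (x : Fin 30) : hp.pos 0 x ∈ Finset.Icc 2 4 ↔ hp.pos s x ∈ Finset.Icc 15 17 := by
  refine hp.pos_zero_mem_iff hs (by decide) (by decide) (by decide) (fun x hx => ?_) x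
  rw [Finset.mem_Icc] at hx ⊢
  have hne := (hp.pos_inj s hs).ne (by rintro rfl; omega : x ≠ z)
  have := hp.pos_mem_center_of_adj
    (fun u hu => h.centerGraph_thirteen_adj hN hu (by omega) (by omega)) hs
    (by omega : hp.pos 0 z < hp.pos 0 x) (by omega) (by omega)
  omega

theorem FirstBlocksSwapFirst.pos_bounds (h : hp.FirstBlocksSwapFirst 10)
    (hN₁₀ : hp.NLe 10 ≤ 165) (hN₁₃ : hp.NLe 13 ≤ 291) (hs : s ≤ steps 30) (hz₀ : hp.pos 0 z = 1)
    (hz : hp.pos s z = 14) (hx : 4 ≤ hp.pos 0 x) (hx' : hp.pos 0 x ≤ 10) :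
    18 ≤ hp.pos 0 x + hp.pos s x ∧ hp.pos s x ≤ hp.pos 0 x + 13 := by
  have hmid := h.pos_zero_le_ten_iff hN₁₀ hs hz₀ hz
  have hadj : ∀ y, hp.pos 0 x < hp.pos 0 y → hp.pos 0 y ≤ 10 → (hp.centerGraph 13).Adj x y :=
    fun y hxy hy => h.centerGraph_thirteen_adj hN₁₃ hxy hy (Or.inl hx)
  have := add_two_mul_le_pos_zero_add_pos (by omega) hs (by omega) hx' hmid hadj
  have := pos_add_two_mul_lt_pos_zero_add (by omega) hs hx' hmid hadj
  omega

end Thirty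

end HalfPeriod

section Labeling

open HalfPeriod

variable {hp : HalfPeriod 30} {a b c : Fin 10 → Fin 30} {k t : ℕ} {x : Fin 30}

theorem EntersCenterAt.pos_succ_eq (h : EntersCenterAt hp k x t) (hx : hp.pos 0 x ≤ k) :
    hp.pos (t + 1) x = k + 1 := by
  obtain ⟨ht, hin, -, hfirst⟩ := h
  have hstep : ∀ s < steps 30, hp.pos (s + 1) x ≤ hp.pos s x + 1 := fun s hs => by
    obtain ⟨u, v, h⟩ := hp.exists_passes hs
    have := h.pos_succ_left
    have := h.pos_succ_right
    have := h.pos_right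
    have := h.pos_succ_of_ne x
    grind
  have hbefore : ∀ s ≤ t, hp.pos s x ≤ k := fun s => by
    induction s with
    | zero => exact fun _ => hx
    | succ s ih =>
      intro hs
      have := ih (by omega)
      have := hstep s (by omega)
      have := hfirst s (by omega)
      unfold InCenter at *
      omega
  have := hbefore t le_rfl
  have := hstep t ht
  unfold InCenter at *
  omega

theorem exists_eq_of_pos_zero_le (ha : ∀ i : Fin 10, hp.pos 0 (a i) = 10 - (i : ℕ))
    (hx : hp.pos 0 x ≤ 10) : ∃ i, x = a i := by
  have hpos := hp.pos_mem 0 (Nat.zero_le _) x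
  refine ⟨⟨10 - hp.pos 0 x, by omega⟩, hp.pos_inj 0 (Nat.zero_le _) ?_⟩
  rw [ha]
  dsimp only
  omega

theorem firstBlocksSwapFirst_of_labeling
    (ha : ∀ i : Fin 10, hp.pos 0 (a i) = 10 - (i : ℕ))
    (hb : ∀ i : Fin 10, hp.pos 0 (b i) = 11 + (i : ℕ))
    (hc : ∀ i : Fin 10, hp.pos 0 (c i) = 21 + (i : ℕ))
    (hAB : ∀ s t, s < steps 30 → t < steps 30 → (∃ i j, hp.SwapsAt s (a i) (b j)) →
      (∃ i x, ((∃ j, x = a j) ∨ (∃ j, x = b j)) ∧ hp.SwapsAt t (c i) x) → s < t) :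
    hp.FirstBlocksSwapFirst 10 := by
  have hinj : Function.Injective (hp.pos 0) := hp.pos_inj 0 (Nat.zero_le _)
  have hB : ∀ x, 10 < hp.pos 0 x → hp.pos 0 x ≤ 20 → ∃ i, x = b i := fun x hx hx' =>
    ⟨⟨hp.pos 0 x - 11, by omega⟩, hinj (by rw [hb]; dsimp only; omega)⟩
  have hC : ∀ x, 20 < hp.pos 0 x → ∃ i, x = c i := fun x hx =>
    have := hp.pos_mem 0 (Nat.zero_le _) x
    ⟨⟨hp.pos 0 x - 21, by omega⟩, hinj (by rw [hc]; dsimp only; omega)⟩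
  intro s hs t ht x y u v hxy huv hx hy hy' hu hv
  obtain ⟨i, rfl⟩ := exists_eq_of_pos_zero_le ha hx
  obtain ⟨j, rfl⟩ := hB y hy hy'
  obtain ⟨l, rfl⟩ := hC v hv
  refine hAB s t hs ht ⟨i, j, hxy.swapsAt⟩ ⟨l, u, ?_, huv.swapsAt.symm⟩
  exact (le_or_gt (hp.pos 0 u) 10).imp (exists_eq_of_pos_zero_le ha) (hB u · hu)

theorem arrangement_after_a10_enters_general
    (ha : ∀ i : Fin 10, hp.pos 0 (a i) = 10 - (i : ℕ))
    (hb : ∀ i : Fin 10, hp.pos 0 (b i) = 11 + (i : ℕ))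
    (hc : ∀ i : Fin 10, hp.pos 0 (c i) = 21 + (i : ℕ))
    (hAB : ∀ s t, s < steps 30 → t < steps 30 → (∃ i j, hp.SwapsAt s (a i) (b j)) →
      (∃ i x, ((∃ j, x = a j) ∨ (∃ j, x = b j)) ∧ hp.SwapsAt t (c i) x) → s < t)
    (hN₁₀ : hp.NLe 10 ≤ 165) (hN₁₃ : hp.NLe 13 ≤ 291)
    {s : ℕ} (hs : s ≤ steps 30) (h14 : hp.pos s (a 9) = 14) :
    (∀ j : Fin 10, 1 ≤ hp.pos s (b j) ∧ hp.pos s (b j) ≤ 10) ∧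
    (∀ j : Fin 10, 21 ≤ hp.pos s (c j) ∧ hp.pos s (c j) ≤ 30) ∧
    (∀ p : ℕ, 11 ≤ p → p ≤ 20 → ∃ u : Fin 10, hp.pos s (a u) = p) ∧
    (∀ u : Fin 10,
      (hp.pos s (a u) = 15 ∨ hp.pos s (a u) = 16 ∨ hp.pos s (a u) = 17) ↔
      ((u : ℕ) = 6 ∨ (u : ℕ) = 7 ∨ (u : ℕ) = 8)) ∧
    (∀ u : Fin 10, hp.pos s (a u) = 11 → (u : ℕ) + 1 ≤ 4) ∧
    (∀ u : Fin 10, hp.pos s (a u) = 12 → (u : ℕ) + 1 ≤ 5) ∧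
    (∀ u : Fin 10, hp.pos s (a u) = 13 → (u : ℕ) + 1 ≤ 6) ∧
    (∀ u : Fin 10, hp.pos s (a u) = 18 → (u : ℕ) + 1 ≤ 6) ∧
    (∀ u : Fin 10, hp.pos s (a u) = 19 → (u : ℕ) + 1 ≤ 5) ∧
    (∀ u : Fin 10, hp.pos s (a u) = 20 → (u : ℕ) + 1 ≤ 4) := by
  have hdec := firstBlocksSwapFirst_of_labeling ha hb hc hAB
  have hmid := hdec.pos_zero_le_ten_iff hN₁₀ hs (ha 9) h14
  have hquad := hdec.pos_zero_mem_Icc_two_four_iff hN₁₃ hs (ha 9) h14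
  obtain ⟨hB, hC⟩ := hdec.pos_of_middle rfl hs (by omega) hmid
  have hrange := hp.pos_mem s hs
  have hfront : ∀ u : Fin 10, (u : ℕ) ≤ 6 →
      (u : ℕ) + 8 ≤ hp.pos s (a u) ∧ hp.pos s (a u) + u ≤ 23 := fun u hu => by
    have hau := ha u
    have := hdec.pos_bounds hN₁₀ hN₁₃ hs (ha 9) h14 (x := a u) (by omega) (by omega)
    omega
  have hrear : ∀ u : Fin 10, 6 < (u : ℕ) → 14 ≤ hp.pos s (a u) ∧ hp.pos s (a u) ≤ 17 := by
    intro u hu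
    rcases eq_or_ne u 9 with rfl | hu9
    · omega
    have hau := ha u
    have := (hquad (a u)).1 (Finset.mem_Icc.2 (by omega))
    rw [Finset.mem_Icc] at this
    omega
  refine ⟨fun j => ?_, fun j => ?_, fun p hp₁ hp₂ => ?_, fun u => ?_, fun u hu => ?_,
    fun u hu => ?_, fun u hu => ?_, fun u hu => ?_, fun u hu => ?_, fun u hu => ?_⟩
  · exact ⟨(hrange (b j)).1, hB (b j) (by rw [hb]; omega) (by rw [hb]; omega)⟩
  · exact ⟨hC (c j) (by rw [hc]; omega), (hrange (c j)).2⟩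
  · obtain ⟨x, rfl⟩ := hp.exists_pos_eq hs (Finset.mem_Icc.2 ⟨by omega, hp₂.trans (by omega)⟩)
    obtain ⟨u, rfl⟩ := exists_eq_of_pos_zero_le ha ((hmid x).2 ⟨by omega, hp₂⟩)
    exact ⟨u, rfl⟩
  · have hau := ha u
    have := hquad (a u)
    simp only [Finset.mem_Icc] at this
    omega
  all_goals
    have := hfront u
    have := hrear u
    omega

end Labeling

/-- In the arrangement `π_{a_10}` of `Π` immediately after the swap in
which `a_10` enters the 13-center: positions `1`–`10` are occupied by the elements of `B`,
positions `21`–`30` by the elements of `C`, position `14` by `a_10`, positions `15, 16, 17`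
by `a_7, a_8, a_9` in some order, positions `11, 12, 13` respectively by elements `a_u`
with `u ≤ 4`, `u ≤ 5`, `u ≤ 6`, and positions `18, 19, 20` respectively by elements `a_u`
with `u ≤ 6`, `u ≤ 5`, `u ≤ 4` (subscripts are 1-indexed: `a_u = a ⟨u-1⟩`). -/
theorem arrangement_after_a10_enters (hp : HalfPeriod 30) (a b c : Fin 10 → Fin 30)
    (h3 : IsThreeDecompLabeling30 hp a b c)
    (hN1 : ∀ k : ℕ, 1 ≤ k → k ≤ 10 → hp.NLe k = 3 * Nat.choose (k + 1) 2)
    (hN2 : ∀ k : ℕ, 11 ≤ k → k ≤ 13 →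
      hp.NLe k = 3 * Nat.choose (k + 1) 2 + 3 * Nat.choose (k - 9) 2)
    (t : ℕ) (ht : EntersCenterAt hp 13 (a 9) t) :
    (∀ j : Fin 10, 1 ≤ hp.pos (t + 1) (b j) ∧ hp.pos (t + 1) (b j) ≤ 10) ∧
    (∀ j : Fin 10, 21 ≤ hp.pos (t + 1) (c j) ∧ hp.pos (t + 1) (c j) ≤ 30) ∧
    hp.pos (t + 1) (a 9) = 14 ∧
    (∀ p : ℕ, 11 ≤ p → p ≤ 20 → ∃ u : Fin 10, hp.pos (t + 1) (a u) = p) ∧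
    (∀ u : Fin 10,
      (hp.pos (t + 1) (a u) = 15 ∨ hp.pos (t + 1) (a u) = 16 ∨ hp.pos (t + 1) (a u) = 17) ↔
      ((u : ℕ) = 6 ∨ (u : ℕ) = 7 ∨ (u : ℕ) = 8)) ∧
    (∀ u : Fin 10, hp.pos (t + 1) (a u) = 11 → (u : ℕ) + 1 ≤ 4) ∧
    (∀ u : Fin 10, hp.pos (t + 1) (a u) = 12 → (u : ℕ) + 1 ≤ 5) ∧
    (∀ u : Fin 10, hp.pos (t + 1) (a u) = 13 → (u : ℕ) + 1 ≤ 6) ∧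
    (∀ u : Fin 10, hp.pos (t + 1) (a u) = 18 → (u : ℕ) + 1 ≤ 6) ∧
    (∀ u : Fin 10, hp.pos (t + 1) (a u) = 19 → (u : ℕ) + 1 ≤ 5) ∧
    (∀ u : Fin 10, hp.pos (t + 1) (a u) = 20 → (u : ℕ) + 1 ≤ 4) := by
  obtain ⟨-, ha, hb, hc, hAB, -⟩ := h3
  have h14 : hp.pos (t + 1) (a 9) = 14 := ht.pos_succ_eq (by rw [ha]; decide)
  have hN₁₀ : hp.NLe 10 ≤ 165 := (hN1 10 (by decide) le_rfl).le
  have hN₁₃ : hp.NLe 13 ≤ 291 := (hN2 13 (by decide) le_rfl).le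
  obtain ⟨hB, hC, hA⟩ := arrangement_after_a10_enters_general ha hb hc hAB hN₁₀ hN₁₃ ht.1 h14
  exact ⟨hB, hC, h14, hA⟩
end
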